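/- arXiv:2509.22588 — 2 statements merged into one kernel-verified Lean document; each statement's English description precedes it below -/
import Mathlib

section
/- Let Γ be a piecewise Dini-smooth Jordan curve. For every sufficiently small δ > 0, lim_{n→∞} sup_{θ∈[0,2π)} |∫_{θ+δ}^{θ−δ+2π} e^{int} dv_θ(t)| = 0, where v_θ is the secant-argument function of Γ at θ. -/
open Filter Topology MeasureTheory Set

noncomputable section

/-- The supremum norm of `f` over the set `Γ`. -/
def supNorm (Γ : Set ℂ) (f : ℂ → ℂ) : ℝ := sSup ((fun z => ‖f z‖) '' Γ)

/-- `Γ` is a Jordan curve: the image of a continuous `2π`-periodic map `ℝ → ℂ` that is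
injective modulo the period. -/
def IsJordanCurve (Γ : Set ℂ) : Prop :=
  ∃ f : ℝ → ℂ, Continuous f ∧ Function.Periodic f (2 * Real.pi) ∧
    (∀ s t : ℝ, f s = f t → ∃ n : ℤ, t - s = n * (2 * Real.pi)) ∧
    Γ = Set.range f

/-- The modulus of continuity of `g` on the interval `[a, b]`, evaluated at `t`. -/
def modCont (g : ℝ → ℂ) (a b t : ℝ) : ℝ :=
  sSup {d : ℝ | ∃ s₁ ∈ Set.Icc a b, ∃ s₂ ∈ Set.Icc a b, |s₁ - s₂| ≤ t ∧ d = ‖g s₁ - g s₂‖}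

/-- `γ`, with derivative `γ'`, parametrizes a Dini-smooth Jordan arc on `[a, b]`:
`γ'` is continuous and nonvanishing on `[a, b]` and its modulus of continuity `ω`
satisfies `∫₀¹ ω(t)/t dt < ∞`. -/
structure IsDiniSmoothArc (γ γ' : ℝ → ℂ) (a b : ℝ) : Prop where
  lt : a < b
  inj : Set.InjOn γ (Set.Icc a b)
  deriv : ∀ s ∈ Set.Icc a b, HasDerivWithinAt γ (γ' s) (Set.Icc a b) s
  cont : ContinuousOn γ' (Set.Icc a b)
  nonzero : ∀ s ∈ Set.Icc a b, γ' s ≠ 0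
  dini : MeasureTheory.IntegrableOn (fun t => modCont γ' a b t / t) (Set.Ioc (0 : ℝ) 1)

/-- A piecewise Dini-smooth Jordan curve: a Jordan curve which is the union of finitely many
Dini-smooth arcs. -/
def IsPiecewiseDiniSmoothJordanCurve (Γ : Set ℂ) : Prop :=
  IsJordanCurve Γ ∧
    ∃ (N : ℕ) (γ γ' : Fin N → ℝ → ℂ) (a b : Fin N → ℝ),
      (∀ i, IsDiniSmoothArc (γ i) (γ' i) (a i) (b i)) ∧
      Γ = ⋃ i, γ i '' Set.Icc (a i) (b i)

/-- The unbounded connected component `Ω` of the complement of `Γ` (in the finite plane). -/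
def exteriorDomain (Γ : Set ℂ) : Set ℂ :=
  {z | z ∈ Γᶜ ∧ ¬ Bornology.IsBounded (connectedComponentIn Γᶜ z)}

/-- `φ` is the canonical exterior conformal map of `Γ` onto `{|w| > 1}` with `φ(∞) = ∞` and
`φ(z)/z → c⁻¹` as `z → ∞`; the constant `c` is then the logarithmic capacity of `Γ`. -/
structure IsExteriorMap (Γ : Set ℂ) (φ : ℂ → ℂ) (c : ℝ) : Prop where
  cpos : 0 < c
  diff : DifferentiableOn ℂ φ (exteriorDomain Γ)
  bij : Set.BijOn φ (exteriorDomain Γ) {w : ℂ | 1 < ‖w‖}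
  tendsto : Filter.Tendsto (fun z => φ z / z)
    (Bornology.cobounded ℂ ⊓ Filter.principal (exteriorDomain Γ)) (nhds ((c : ℂ)⁻¹))

/-- `F` is the `n`-th Faber polynomial of `Γ`: the unique polynomial with
`φ(z)^n − F(z) → 0` as `z → ∞` in the exterior domain. -/
def IsFaberPoly (Γ : Set ℂ) (φ : ℂ → ℂ) (n : ℕ) (F : Polynomial ℂ) : Prop :=
  Filter.Tendsto (fun z => φ z ^ n - F.eval z)
    (Bornology.cobounded ℂ ⊓ Filter.principal (exteriorDomain Γ)) (nhds 0)

/-- `ψ` is the inverse of `φ`, extended to a homeomorphism of `{|w| ≥ 1}` onto the closure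
of the exterior domain; on the unit circle it parametrizes `Γ`. -/
structure IsExteriorParam (Γ : Set ℂ) (φ ψ : ℂ → ℂ) : Prop where
  cont : ContinuousOn ψ {w : ℂ | 1 ≤ ‖w‖}
  inj : Set.InjOn ψ {w : ℂ | 1 ≤ ‖w‖}
  inv : ∀ w : ℂ, 1 < ‖w‖ → ψ w ∈ exteriorDomain Γ ∧ φ (ψ w) = w
  boundary : ∀ w : ℂ, ‖w‖ = 1 → ψ w ∈ Γ
  boundary_surj : ∀ z ∈ Γ, ∃ w : ℂ, ‖w‖ = 1 ∧ ψ w = z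

/-- `T` is the `n`-th Chebyshev polynomial of `Γ`: the monic polynomial of degree `n`
minimizing the supremum norm over `Γ`. -/
def IsChebyshevPoly (Γ : Set ℂ) (n : ℕ) (T : Polynomial ℂ) : Prop :=
  T.Monic ∧ T.natDegree = n ∧
    ∀ P : Polynomial ℂ, P.Monic → P.natDegree = n →
      supNorm Γ (fun z => T.eval z) ≤ supNorm Γ (fun z => P.eval z)

/-- `v` is a secant-argument function of `Γ = ψ(unit circle)` at `θ` (relative to `α` with
`α < θ < α + 2π`): a bounded-variation branch of `t ↦ arg (ψ(e^{it}) − ψ(e^{iθ}))` on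
`[α, α + 2π]`, continuous on `[α, θ)` and on `(θ, α + 2π]`, normalized by `v θ = v(θ+)`
and by requiring the jump `v(θ+) − v(θ−)` to lie in `[0, 2π]`. -/
structure IsSecantArg (ψ : ℂ → ℂ) (θ α : ℝ) (v : ℝ → ℝ) : Prop where
  hα : α < θ
  hθ : θ < α + 2 * Real.pi
  bv : BoundedVariationOn v (Set.Icc α (α + 2 * Real.pi))
  contBefore : ContinuousOn v (Set.Ico α θ)
  contAfter : ContinuousOn v (Set.Ioc θ (α + 2 * Real.pi))
  rightCont : ContinuousWithinAt v (Set.Ici θ) θ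
  jump_mem : ∃ L : ℝ, Filter.Tendsto v (nhdsWithin θ (Set.Iio θ)) (nhds L) ∧
    v θ - L ∈ Set.Icc 0 (2 * Real.pi)
  branch : ∀ t ∈ Set.Icc α (α + 2 * Real.pi), t ≠ θ →
    Complex.exp (Complex.I * (v t : ℂ))
      = (ψ (Complex.exp (Complex.I * (t : ℂ))) - ψ (Complex.exp (Complex.I * (θ : ℂ))))
        / ((‖ψ (Complex.exp (Complex.I * (t : ℂ))) - ψ (Complex.exp (Complex.I * (θ : ℂ)))‖ : ℂ))

/-- The exterior angle of `Γ = ψ(unit circle)` at the boundary point `ψ(e^{iθ})` equals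
`lam * π`, expressed through the jump `v(θ+) − v(θ−) = lam * π` of a secant-argument
function at `θ`. -/
def HasExteriorAngleAt (ψ : ℂ → ℂ) (θ lam : ℝ) : Prop :=
  ∃ (α : ℝ) (v : ℝ → ℝ), IsSecantArg ψ θ α v ∧
    Filter.Tendsto v (nhdsWithin θ (Set.Iio θ)) (nhds (v θ - lam * Real.pi))

/-- The set `Θ_Γ = {θ_k + 2πj}` of corner parameters modulo `2π`. -/
def cornerSet {l : ℕ} (θk : Fin l → ℝ) : Set ℝ :=
  {x | ∃ (k : Fin l) (j : ℤ), x = θk k + j * (2 * Real.pi)}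

/-- `(μp, μn)` realizes the Lebesgue–Stieltjes (signed) measure `dv` of `v` on `(α, β]`:
both are finite measures and `μp − μn` has the increments of `v`. -/
structure IsLSPair (v : ℝ → ℝ) (α β : ℝ) (μp μn : MeasureTheory.Measure ℝ) : Prop where
  finp : MeasureTheory.IsFiniteMeasure μp
  finn : MeasureTheory.IsFiniteMeasure μn
  incr : ∀ s t : ℝ, α ≤ s → s ≤ t → t ≤ β →
    (μp (Set.Ioc s t)).toReal - (μn (Set.Ioc s t)).toReal = v t - v s

theorem isOpen_exteriorDomain {Γ : Set ℂ} (hΓ : IsClosed Γ) : IsOpen (exteriorDomain Γ) := by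
  rw [isOpen_iff_mem_nhds]
  rintro z ⟨hz, hb⟩
  have ho : IsOpen (connectedComponentIn Γᶜ z) := hΓ.isOpen_compl.connectedComponentIn
  filter_upwards [ho.mem_nhds (mem_connectedComponentIn hz)] with y hy
  refine ⟨connectedComponentIn_subset _ _ hy, ?_⟩
  rwa [← connectedComponentIn_eq hy]

theorem countable_setOf_deriv_eq_zero_of_injOn {U : Set ℂ} (hU : IsOpen U) {f : ℂ → ℂ}
    (hf : DifferentiableOn ℂ f U) (hinj : InjOn f U) :
    {z | z ∈ U ∧ deriv f z = 0}.Countable := by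
  have hd : DiscreteTopology {z | z ∈ U ∧ deriv f z = 0} := by
    rw [discreteTopology_subtype_iff]
    rintro z ⟨hzU, hz⟩
    have han : AnalyticAt ℂ (deriv f) z := ((hf.deriv hU).analyticOnNhd hU) z hzU
    rcases han.eventually_eq_zero_or_eventually_ne_zero with h | h
    · exfalso
      obtain ⟨r, hr, hball⟩ := Metric.eventually_nhds_iff_ball.1 (h.and (hU.mem_nhds hzU))
      obtain ⟨w, hw, hwz⟩ : ∃ w ∈ Metric.ball z r, w ≠ z := by
        refine ⟨z + (r / 2 : ℝ), ?_, ?_⟩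
        · simp [abs_of_pos hr, hr]
        · simp [hr.ne']
      apply hwz
      have hsub : Metric.ball z r ⊆ U := fun y hy => (hball y hy).2
      refine hinj (hsub hw) hzU ?_
      exact Metric.isOpen_ball.is_const_of_deriv_eq_zero
        (convex_ball z r).isPreconnected (hf.mono hsub) (fun y hy => (hball y hy).1) hw
        (Metric.mem_ball_self hr)
    · rw [← disjoint_iff, Filter.disjoint_principal_right]
      filter_upwards [h] with y hy hy'
      exact hy hy'.2
  exact Set.countable_coe_iff.1 countable_of_Lindelof_of_discrete

theorem isCompact_of_isExteriorParam {Γ : Set ℂ} {φ ψ : ℂ → ℂ} (hψ : IsExteriorParam Γ φ ψ) :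
    IsCompact Γ := by
  have : Γ = ψ '' Metric.sphere 0 1 := by
    ext z
    constructor
    · intro hz
      obtain ⟨w, hw, rfl⟩ := hψ.boundary_surj z hz
      exact ⟨w, by simpa using hw, rfl⟩
    · rintro ⟨w, hw, rfl⟩
      exact hψ.boundary w (by simpa using hw)
  rw [this]
  refine (isCompact_sphere 0 1).image_of_continuousOn (hψ.cont.mono fun w hw => ?_)
  simp only [mem_sphere_iff_norm, sub_zero] at hw
  exact hw.ge

theorem exteriorParam_differentiableAt {Γ : Set ℂ} {φ ψ : ℂ → ℂ} {c : ℝ}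
    (hφ : IsExteriorMap Γ φ c) (hψ : IsExteriorParam Γ φ ψ) {w : ℂ} (hw : 1 < ‖w‖)
    (hd : deriv φ (ψ w) ≠ 0) : DifferentiableAt ℂ ψ w := by
  have hO := isOpen_exteriorDomain (isCompact_of_isExteriorParam hψ).isClosed
  have hnhds : {w : ℂ | 1 < ‖w‖} ∈ 𝓝 w := (isOpen_lt continuous_const continuous_norm).mem_nhds hw
  have hc : ContinuousAt ψ w :=
    (hψ.cont w hw.le).continuousAt (mem_of_superset hnhds fun x (hx : 1 < ‖x‖) => hx.le)
  have hdiff : HasDerivAt φ (deriv φ (ψ w)) (ψ w) :=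
    (hφ.diff.differentiableAt (hO.mem_nhds (hψ.inv w hw).1)).hasDerivAt
  refine (HasDerivAt.of_local_left_inverse hc hdiff hd ?_).differentiableAt
  filter_upwards [hnhds] with y hy using (hψ.inv y hy).2

theorem exists_norm_exteriorParam_le {Γ : Set ℂ} {φ ψ : ℂ → ℂ} {c : ℝ}
    (hφ : IsExteriorMap Γ φ c) (hψ : IsExteriorParam Γ φ ψ) :
    ∃ C : ℝ, 0 < C ∧ ∀ w : ℂ, 1 < ‖w‖ → ‖ψ w‖ ≤ C * ‖w‖ := by
  have hc := hφ.cpos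
  have hev : ∀ᶠ z in Bornology.cobounded ℂ ⊓ 𝓟 (exteriorDomain Γ), (2 * c)⁻¹ < ‖φ z / z‖ := by
    refine hφ.tendsto.norm.eventually_const_lt ?_
    rw [norm_inv, Complex.norm_real, Real.norm_of_nonneg hc.le]
    exact inv_strictAnti₀ hc (by linarith)
  rw [eventually_inf_principal, ← comap_norm_atTop, eventually_comap] at hev
  obtain ⟨R, hR⟩ := eventually_atTop.1 hev
  refine ⟨max (max R 1) (2 * c), by positivity, fun w hw => ?_⟩
  rcases le_total ‖ψ w‖ (max R 1) with h | h
  · calc ‖ψ w‖ ≤ max R 1 := h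
      _ ≤ max (max R 1) (2 * c) * 1 := by rw [mul_one]; exact le_max_left _ _
      _ ≤ _ := by gcongr
  · have h0 : 0 < ‖ψ w‖ := lt_of_lt_of_le (by positivity) h
    have h1 := hR ‖ψ w‖ ((le_max_left _ _).trans h) (ψ w) rfl (hψ.inv w hw).1
    rw [(hψ.inv w hw).2, norm_div, lt_div_iff₀ h0] at h1
    calc ‖ψ w‖ = 2 * c * ((2 * c)⁻¹ * ‖ψ w‖) := by field_simp
      _ ≤ 2 * c * ‖w‖ := by gcongr
      _ ≤ _ := by gcongr; exact le_max_right _ _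

theorem integral_exp_mul_exteriorParam_eq_zero {Γ : Set ℂ} {φ ψ : ℂ → ℂ} {c : ℝ}
    (hφ : IsExteriorMap Γ φ c) (hψ : IsExteriorParam Γ φ ψ) (n : ℕ) (hn : 3 ≤ n) :
    ∫ t in (0 : ℝ)..2 * Real.pi, Complex.exp (Complex.I * (-n : ℂ) * t) *
      ψ (Complex.exp (Complex.I * t)) = 0 := by
  obtain ⟨j, rfl⟩ : ∃ j, n = j + 1 := ⟨n - 1, by omega⟩
  obtain ⟨C, hC, hbound⟩ := exists_norm_exteriorParam_le hφ hψ
  have hO := isOpen_exteriorDomain (isCompact_of_isExteriorParam hψ).isClosed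
  set Z := {z | z ∈ exteriorDomain Γ ∧ deriv φ z = 0}
  have hZ : Z.Countable := countable_setOf_deriv_eq_zero_of_injOn hO hφ.diff hφ.bij.injOn
  have hS : (insert 0 ((fun z => (φ z)⁻¹) '' Z)).Countable := (hZ.image _).insert 0
  have hinv : ∀ u : ℂ, ‖u‖ ≤ 1 → u ≠ 0 → 1 ≤ ‖u⁻¹‖ := fun u hu h0 => by
    rw [norm_inv]; exact (one_le_inv₀ (norm_pos_iff.2 h0)).2 hu
  have hinv' : ∀ u : ℂ, ‖u‖ < 1 → u ≠ 0 → 1 < ‖u⁻¹‖ := fun u hu h0 => by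
    rw [norm_inv]; exact (one_lt_inv₀ (norm_pos_iff.2 h0)).2 hu
  have key := Complex.circleIntegral_eq_zero_of_differentiable_on_off_countable
    (c := 0) (R := 1) zero_le_one (f := fun u => u ^ j * ψ u⁻¹) hS ?_ ?_
  · rw [circleIntegral] at key
    have hper : Function.Periodic (fun t : ℝ => Complex.exp (Complex.I * (-(j + 1 : ℕ) : ℂ) * t) *
        ψ (Complex.exp (Complex.I * t))) (2 * Real.pi) := by
      intro t
      have h1 : Complex.exp (Complex.I * ((t + 2 * Real.pi : ℝ) : ℂ))
          = Complex.exp (Complex.I * t) := by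
        rw [← Complex.exp_periodic (Complex.I * t)]; congr 1; push_cast; ring
      have h2 : Complex.exp (Complex.I * (-(j + 1 : ℕ) : ℂ) * ((t + 2 * Real.pi : ℝ) : ℂ))
          = Complex.exp (Complex.I * (-(j + 1 : ℕ) : ℂ) * t) := by
        rw [← Complex.exp_periodic.int_mul (-(j + 1 : ℕ) : ℤ) (Complex.I * (-(j + 1 : ℕ) : ℂ) * t)]
        congr 1; push_cast; ring
      simp only [h1, h2]
    have h1 : (∫ t in (0 : ℝ)..2 * Real.pi,
        Complex.exp (Complex.I * (-(j + 1 : ℕ) : ℂ) * (-t : ℝ)) *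
        ψ (Complex.exp (Complex.I * (-t : ℝ)))) = 0 := by
      rw [← mul_right_inj' Complex.I_ne_zero, mul_zero, ← key,
        ← intervalIntegral.integral_const_mul]
      refine intervalIntegral.integral_congr fun t _ => ?_
      simp only [deriv_circleMap, circleMap_zero, smul_eq_mul, Complex.ofReal_one, one_mul,
        ← Complex.exp_neg, ← Complex.exp_nat_mul]
      rw [show Complex.I * (-(j + 1 : ℕ) : ℂ) * (-t : ℝ) = t * Complex.I + j * (t * Complex.I) by
        push_cast; ring, Complex.exp_add,
        show Complex.I * ((-t : ℝ) : ℂ) = -(t * Complex.I) by push_cast; ring]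
      ring
    rw [intervalIntegral.integral_comp_neg (fun t : ℝ =>
      Complex.exp (Complex.I * (-(j + 1 : ℕ) : ℂ) * t) * ψ (Complex.exp (Complex.I * t)))] at h1
    have h2 := hper.intervalIntegral_add_eq (-(2 * Real.pi)) 0
    rw [zero_add, neg_add_cancel] at h2
    rw [← h2, ← h1, neg_zero]
  · intro u hu
    rw [mem_closedBall_zero_iff] at hu
    rcases eq_or_ne u 0 with rfl | h0
    · refine ContinuousAt.continuousWithinAt ?_
      have hj : j ≠ 0 := by omega
      rw [ContinuousAt, zero_pow hj, zero_mul]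
      refine squeeze_zero_norm' (a := fun u : ℂ => C * ‖u‖) ?_ ?_
      · filter_upwards [Metric.ball_mem_nhds (0 : ℂ) one_pos] with u hu
        rw [mem_ball_zero_iff] at hu
        rcases eq_or_ne u 0 with rfl | h0
        · simp [hj]
        · have hp := norm_pos_iff.2 h0
          rw [norm_mul, norm_pow]
          calc ‖u‖ ^ j * ‖ψ u⁻¹‖ ≤ ‖u‖ ^ 2 * (C * ‖u⁻¹‖) := by
                gcongr ?_ * ?_
                · exact pow_le_pow_of_le_one hp.le hu.le (by omega)
                · exact hbound _ (hinv' u hu h0)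
            _ = C * ‖u‖ := by rw [norm_inv]; field_simp
      · have : Continuous fun u : ℂ => C * ‖u‖ := by fun_prop
        simpa using this.tendsto 0
    · have hm : {x : ℂ | x ≠ 0} ∈ 𝓝 u := isOpen_ne.mem_nhds h0
      rw [← continuousWithinAt_inter hm]
      refine (continuousWithinAt_id.pow j).mul ?_
      refine (hψ.cont _ (hinv u hu h0)).comp
        (continuousAt_inv₀ h0).continuousWithinAt fun x hx => ?_
      exact hinv x (by simpa using hx.1) hx.2
  · rintro u ⟨hu, hus⟩
    rw [mem_ball_zero_iff] at hu
    simp only [Set.mem_insert_iff, not_or] at hus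
    have hw := hinv' u hu hus.1
    refine (differentiableAt_id.pow j).mul ?_
    refine DifferentiableAt.comp u (exteriorParam_differentiableAt hφ hψ hw fun h => hus.2 ?_)
      (differentiableAt_inv hus.1)
    exact ⟨ψ u⁻¹, ⟨(hψ.inv _ hw).1, h⟩, by simp [(hψ.inv _ hw).2]⟩

theorem edist_le_hausdorffMeasure_of_isPreconnected {S : Set ℂ} (hS : IsPreconnected S) {x y : ℂ}
    (hx : x ∈ S) (hy : y ∈ S) : edist x y ≤ Measure.hausdorffMeasure 1 S := by
  have hl : LipschitzWith 1 (fun z : ℂ => dist z x) := LipschitzWith.dist_left x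
  have h1 := hl.hausdorffMeasure_image_le zero_le_one S
  rw [MeasureTheory.hausdorffMeasure_real, ENNReal.coe_one, ENNReal.one_rpow, one_mul] at h1
  refine le_trans ?_ h1
  have hp : IsPreconnected ((fun z : ℂ => dist z x) '' S) :=
    hS.image _ hl.continuous.continuousOn
  have hsub : Icc 0 (dist y x) ⊆ (fun z : ℂ => dist z x) '' S :=
    hp.ordConnected.out ⟨x, hx, dist_self x⟩ ⟨y, hy, rfl⟩
  refine le_trans ?_ (measure_mono hsub)
  rw [Real.volume_Icc, sub_zero, edist_comm, edist_dist]

theorem boundedVariationOn_of_hausdorffMeasure_ne_top {g : ℝ → ℂ} {a b : ℝ} (hg : Continuous g)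
    (hinj : InjOn g (Ioc a b)) (hfin : Measure.hausdorffMeasure 1 (g '' Icc a b) ≠ ⊤) :
    BoundedVariationOn g (Icc a b) := by
  refine ne_top_of_le_ne_top hfin (iSup_le ?_)
  rintro ⟨n, u, hu, hus⟩
  have hsub : ∀ i, Ioc (u i) (u (i + 1)) ⊆ Ioc a b := fun i =>
    Ioc_subset_Ioc (hus i).1 (hus (i + 1)).2
  have hstep : ∀ i, edist (g (u (i + 1))) (g (u i))
      ≤ Measure.hausdorffMeasure 1 (g '' Ioc (u i) (u (i + 1))) := by
    intro i
    have hle := hu (Nat.le_succ i)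
    refine (edist_le_hausdorffMeasure_of_isPreconnected (isPreconnected_Icc.image g hg.continuousOn)
      (mem_image_of_mem g (right_mem_Icc.2 hle)) (mem_image_of_mem g (left_mem_Icc.2 hle))).trans ?_
    rw [← Ioc_insert_left hle, image_insert_eq]
    have : NullSingletonClass (Measure.hausdorffMeasure 1 : Measure ℂ) :=
      Measure.nullSingletonClass_hausdorff ℂ one_pos
    rw [measure_congr (insert_ae_eq_self _ _)]
  have hmeas : ∀ i, MeasurableSet (g '' Ioc (u i) (u (i + 1))) := fun i =>
    measurableSet_Ioc.image_of_continuousOn_injOn hg.continuousOn (hinj.mono (hsub i))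
  calc ∑ i ∈ Finset.range n, edist (g (u (i + 1))) (g (u i))
      ≤ ∑ i ∈ Finset.range n, Measure.hausdorffMeasure 1 (g '' Ioc (u i) (u (i + 1))) :=
        Finset.sum_le_sum fun i _ => hstep i
    _ = Measure.hausdorffMeasure 1 (⋃ i ∈ Finset.range n, g '' Ioc (u i) (u (i + 1))) := by
        refine (measure_biUnion_finset (fun i _ j _ hij => ?_) fun i _ => hmeas i).symm
        have hd := Set.disjoint_left.1 (hu.pairwise_disjoint_on_Ioc_succ hij)
        refine Set.disjoint_left.2 ?_
        rintro _ ⟨s, hs, rfl⟩ ⟨t, ht, hst⟩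
        exact hd hs (hinj (hsub j ht) (hsub i hs) hst ▸ ht)
    _ ≤ Measure.hausdorffMeasure 1 (g '' Icc a b) := by
        refine measure_mono (iUnion₂_subset fun i _ => image_mono ?_)
        exact (hsub i).trans Ioc_subset_Icc_self

theorem IsDiniSmoothArc.hausdorffMeasure_image_ne_top {γ γ' : ℝ → ℂ} {a b : ℝ}
    (h : IsDiniSmoothArc γ γ' a b) : Measure.hausdorffMeasure 1 (γ '' Icc a b) ≠ ⊤ := by
  obtain ⟨C, hC⟩ := isCompact_Icc.exists_bound_of_continuousOn h.cont
  have hl : LipschitzOnWith C.toNNReal γ (Icc a b) :=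
    (convex_Icc a b).lipschitzOnWith_of_nnnorm_hasDerivWithin_le h.deriv fun x hx => by
      rw [← NNReal.coe_le_coe, coe_nnnorm]
      exact (hC x hx).trans (Real.le_coe_toNNReal C)
  refine ne_top_of_le_ne_top ?_ (hl.hausdorffMeasure_image_le zero_le_one)
  rw [MeasureTheory.hausdorffMeasure_real, Real.volume_Icc]
  simp [ENNReal.mul_eq_top]

theorem IsPiecewiseDiniSmoothJordanCurve.hausdorffMeasure_ne_top {Γ : Set ℂ}
    (h : IsPiecewiseDiniSmoothJordanCurve Γ) : Measure.hausdorffMeasure 1 Γ ≠ ⊤ := by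
  obtain ⟨_, N, γ, γ', a, b, harc, rfl⟩ := h
  refine ne_top_of_le_ne_top ?_ (measure_iUnion_fintype_le _ _)
  exact ENNReal.sum_ne_top.2 fun i _ => (harc i).hausdorffMeasure_image_ne_top

/-- The boundary parametrization `t ↦ ψ(e^{it})`. -/
def boundaryParam (ψ : ℂ → ℂ) (t : ℝ) : ℂ := ψ (Complex.exp (Complex.I * t))

theorem exp_I_mul_add_two_pi (t : ℝ) :
    Complex.exp (Complex.I * ((t + 2 * Real.pi : ℝ) : ℂ)) = Complex.exp (Complex.I * t) := by
  rw [← Complex.exp_periodic (Complex.I * t)]; congr 1; push_cast; ring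

theorem norm_exp_I_mul (t : ℝ) : ‖Complex.exp (Complex.I * (t : ℂ))‖ = 1 := by
  rw [mul_comm]; exact Complex.norm_exp_ofReal_mul_I t

theorem periodic_boundaryParam (ψ : ℂ → ℂ) :
    Function.Periodic (boundaryParam ψ) (2 * Real.pi) := fun t => by
  simp only [boundaryParam, exp_I_mul_add_two_pi]

theorem IsExteriorParam.continuous_boundaryParam {Γ : Set ℂ} {φ ψ : ℂ → ℂ}
    (h : IsExteriorParam Γ φ ψ) : Continuous (boundaryParam ψ) :=
  h.cont.comp_continuous (by fun_prop) fun t => (norm_exp_I_mul t).ge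

theorem IsExteriorParam.boundaryParam_eq_iff {Γ : Set ℂ} {φ ψ : ℂ → ℂ}
    (h : IsExteriorParam Γ φ ψ) {s t : ℝ} :
    boundaryParam ψ s = boundaryParam ψ t ↔ ∃ n : ℤ, s = t + n * (2 * Real.pi) := by
  have hw : ∀ t : ℝ, Complex.exp (Complex.I * t) ∈ {w : ℂ | 1 ≤ ‖w‖} := fun t =>
    (norm_exp_I_mul t).ge
  rw [boundaryParam, boundaryParam, h.inj.eq_iff (hw s) (hw t), Complex.exp_eq_exp_iff_exists_int]
  refine exists_congr fun n => ?_
  rw [show Complex.I * (t : ℂ) + n * (2 * Real.pi * Complex.I)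
    = Complex.I * ((t + n * (2 * Real.pi) : ℝ) : ℂ) by push_cast; ring,
    mul_right_inj' Complex.I_ne_zero, Complex.ofReal_inj]

theorem IsExteriorParam.injOn_boundaryParam {Γ : Set ℂ} {φ ψ : ℂ → ℂ}
    (h : IsExteriorParam Γ φ ψ) (a : ℝ) :
    InjOn (boundaryParam ψ) (Ioc a (a + 2 * Real.pi)) := by
  intro s hs t ht hst
  obtain ⟨n, hn⟩ := h.boundaryParam_eq_iff.1 hst
  have hpi := Real.two_pi_pos
  have h1 : (n : ℝ) < 1 := by
    by_contra! hc
    nlinarith [hs.1, hs.2, ht.1, ht.2]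
  have h2 : (-1 : ℝ) < n := by
    by_contra! hc
    nlinarith [hs.1, hs.2, ht.1, ht.2]
  have h3 : n = 0 := by
    have : n < 1 := by exact_mod_cast h1
    have : -1 < n := by exact_mod_cast h2
    omega
  simpa [h3] using hn

theorem IsExteriorParam.boundedVariationOn_boundaryParam {Γ : Set ℂ} {φ ψ : ℂ → ℂ}
    (hΓ : IsPiecewiseDiniSmoothJordanCurve Γ) (h : IsExteriorParam Γ φ ψ) :
    BoundedVariationOn (boundaryParam ψ) (Icc 0 (4 * Real.pi)) := by
  have hpi := Real.two_pi_pos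
  have key : ∀ a, BoundedVariationOn (boundaryParam ψ) (Icc a (a + 2 * Real.pi)) := fun a => by
    refine boundedVariationOn_of_hausdorffMeasure_ne_top h.continuous_boundaryParam
      (h.injOn_boundaryParam a) (ne_top_of_le_ne_top hΓ.hausdorffMeasure_ne_top (measure_mono ?_))
    rintro _ ⟨t, -, rfl⟩
    exact h.boundary _ (norm_exp_I_mul t)
  have h1 := eVariationOn.Icc_add_Icc (boundaryParam ψ) (s := univ) (a := 0) (b := 2 * Real.pi)
    (c := 4 * Real.pi) (by linarith) (by linarith) (mem_univ _)
  simp only [univ_inter] at h1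
  rw [BoundedVariationOn, ← h1]
  refine ENNReal.add_ne_top.2 ⟨?_, ?_⟩
  · have := key 0
    rwa [zero_add] at this
  · have := key (2 * Real.pi)
    rwa [show 2 * Real.pi + 2 * Real.pi = 4 * Real.pi by ring] at this

theorem MeasureTheory.SignedMeasure.withDensityᵥ_rnDeriv_of_totalVariation_le
    {α : Type*} [MeasurableSpace α]
    (s : SignedMeasure α) (m : Measure α) [IsFiniteMeasure m] (h : s.totalVariation ≤ m) :
    m.withDensityᵥ (s.rnDeriv m) = s := by
  refine (s.absolutelyContinuous_iff_withDensityᵥ_rnDeriv_eq m).1 ?_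
  refine VectorMeasure.AbsolutelyContinuous.mk fun i hi h0 => ?_
  rw [Measure.toENNRealVectorMeasure_apply_measurable hi] at h0
  exact s.null_of_totalVariation_zero (le_antisymm ((h i).trans h0.le) bot_le)

theorem exists_integral_Ioc_eq_sub {g : ℝ → ℂ} (hg : Continuous g)
    (hbv : BoundedVariationOn g univ) :
    ∃ (m : Measure ℝ) (h : ℝ → ℂ), IsFiniteMeasure m ∧ Measurable h ∧ Integrable h m ∧
      (∀ s t, s ≤ t → ∫ x in Ioc s t, h x ∂m = g t - g s) ∧ ∀ t, ∫ x in {t}, h x ∂m = 0 := by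
  have hre : BoundedVariationOn (fun t => (g t).re) univ :=
    (Complex.reCLM.lipschitz).comp_boundedVariationOn hbv
  have him : BoundedVariationOn (fun t => (g t).im) univ :=
    (Complex.imCLM.lipschitz).comp_boundedVariationOn hbv
  have hcre : Continuous fun t => (g t).re := Complex.continuous_re.comp hg
  have hcim : Continuous fun t => (g t).im := Complex.continuous_im.comp hg
  let s₁ : SignedMeasure ℝ := hre.vectorMeasure
  let s₂ : SignedMeasure ℝ := him.vectorMeasure
  let m : Measure ℝ := s₁.totalVariation + s₂.totalVariation
  have hm : IsFiniteMeasure m := by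
    have : IsFiniteMeasure s₁.totalVariation := by
      unfold SignedMeasure.totalVariation; infer_instance
    have : IsFiniteMeasure s₂.totalVariation := by
      unfold SignedMeasure.totalVariation; infer_instance
    infer_instance
  have h₁ := s₁.withDensityᵥ_rnDeriv_of_totalVariation_le m (Measure.le_add_right le_rfl)
  have h₂ := s₂.withDensityᵥ_rnDeriv_of_totalVariation_le m (Measure.le_add_left le_rfl)
  have i₁ := s₁.integrable_rnDeriv m
  have i₂ := s₂.integrable_rnDeriv m
  have key : ∀ S, MeasurableSet S → ∫ x in S, ((s₁.rnDeriv m x : ℂ)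
      + (s₂.rnDeriv m x : ℂ) * Complex.I) ∂m = (s₁ S : ℂ) + (s₂ S : ℂ) * Complex.I := by
    intro S hS
    have j₁ : IntegrableOn (fun x => (s₁.rnDeriv m x : ℂ)) S m := i₁.ofReal.integrableOn
    have j₂ : IntegrableOn (fun x => (s₂.rnDeriv m x : ℂ) * Complex.I) S m :=
      (i₂.ofReal.mul_const _).integrableOn
    rw [integral_add j₁ j₂, integral_mul_const, integral_complex_ofReal, integral_complex_ofReal,
      ← withDensityᵥ_apply i₁ hS, ← withDensityᵥ_apply i₂ hS, h₁, h₂]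
  refine ⟨m, fun x => (s₁.rnDeriv m x : ℂ) + (s₂.rnDeriv m x : ℂ) * Complex.I, hm, ?_, ?_, ?_, ?_⟩
  · exact (Complex.measurable_ofReal.comp (s₁.measurable_rnDeriv m)).add
      ((Complex.measurable_ofReal.comp (s₂.measurable_rnDeriv m)).mul_const _)
  · exact i₁.ofReal.add (i₂.ofReal.mul_const _)
  · intro s t hst
    rw [key _ measurableSet_Ioc, hre.vectorMeasure_Ioc hst, him.vectorMeasure_Ioc hst,
      hcre.continuousWithinAt.rightLim_eq, hcre.continuousWithinAt.rightLim_eq,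
      hcim.continuousWithinAt.rightLim_eq, hcim.continuousWithinAt.rightLim_eq]
    apply Complex.ext <;> simp
  · intro t
    rw [key _ (measurableSet_singleton t), hre.vectorMeasure_singleton, him.vectorMeasure_singleton,
      hcre.continuousWithinAt.rightLim_eq, hcre.continuousWithinAt.leftLim_eq,
      hcim.continuousWithinAt.rightLim_eq, hcim.continuousWithinAt.leftLim_eq]
    simp

theorem exists_unimodular_density {g : ℝ → ℂ} (hg : Continuous g) {a b : ℝ} (hab : a ≤ b)
    (hbv : BoundedVariationOn g (Icc a b)) :
    ∃ (m : Measure ℝ) (h : ℝ → ℂ), IsFiniteMeasure m ∧ NullSingletonClass m ∧ Measurable h ∧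
      (∀ x, ‖h x‖ = 1) ∧
      ∀ s t, a ≤ s → s ≤ t → t ≤ b → ∫ x in Ioc s t, h x ∂m = g t - g s := by
  have hG : Continuous fun x => g (projIcc a b hab x) :=
    hg.comp (continuous_subtype_val.comp continuous_projIcc)
  have hGbv : BoundedVariationOn (fun x => g (projIcc a b hab x)) univ :=
    ne_top_of_le_ne_top hbv (eVariationOn.comp_le_of_monotoneOn g
      (fun x => (projIcc a b hab x : ℝ))
      (fun x _ y _ hxy => monotone_projIcc hab hxy) fun x _ => (projIcc a b hab x).2)
  obtain ⟨m, h, hm, hmeas, hint, hIoc, hsing⟩ := exists_integral_Ioc_eq_sub hG hGbv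
  have hdens : Measurable fun x => ‖h x‖ₑ := hmeas.enorm
  have hmeas' : Measurable fun x => if h x = 0 then (1 : ℂ) else h x / ‖h x‖ :=
    Measurable.ite (hmeas (measurableSet_singleton 0)) measurable_const (by fun_prop)
  have hsmul : ∀ x, ‖h x‖ₑ.toReal • (if h x = 0 then (1 : ℂ) else h x / ‖h x‖) = h x := by
    intro x
    split_ifs with h0
    · simp [h0]
    · have : (‖h x‖ : ℂ) ≠ 0 := by simpa using h0
      rw [toReal_enorm, Complex.real_smul]
      field_simp
  refine ⟨m.withDensity fun x => ‖h x‖ₑ, fun x => if h x = 0 then 1 else h x / ‖h x‖,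
    ?_, ⟨?_⟩, hmeas', ?_, ?_⟩
  · exact isFiniteMeasure_withDensity hint.2.ne
  · intro t
    rw [withDensity_apply _ (measurableSet_singleton t)]
    have h1 := hsing t
    rw [integral_singleton, smul_eq_zero] at h1
    rw [lintegral_singleton]
    rcases h1 with h1 | h1
    · rw [(measureReal_eq_zero_iff).1 h1, mul_zero]
    · rw [h1, enorm_zero, zero_mul]
  · intro x
    simp only
    split_ifs with h0
    · simp
    · have : ‖h x‖ ≠ 0 := by simpa using h0
      simp [this]
  · intro s t has hst htb
    rw [setIntegral_withDensity_eq_setIntegral_toReal_smul hdens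
      (Filter.Eventually.of_forall fun x => enorm_lt_top) _ measurableSet_Ioc]
    simp only [hsmul]
    rw [hIoc s t hst, projIcc_of_mem hab ⟨has.trans hst, htb⟩,
      projIcc_of_mem hab ⟨has, hst.trans htb⟩]

theorem eq_zero_of_additive_of_isLittleO {E : Type*} [NormedAddCommGroup E] {R : ℝ → ℝ → E}
    {Φ : ℝ → ℝ → ℝ} {A B : ℝ} (hAB : A ≤ B)
    (hR : ∀ s t u, A ≤ s → s ≤ t → t ≤ u → u ≤ B → R s u = R s t + R t u)
    (hΦ : ∀ s t u, A ≤ s → s ≤ t → t ≤ u → u ≤ B → Φ s t + Φ t u ≤ Φ s u)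
    (hsmall : ∀ ε > 0, ∃ η > 0, ∀ s t, A ≤ s → s ≤ t → t ≤ B → t - s < η →
      ‖R s t‖ ≤ ε * Φ s t) :
    R A B = 0 := by
  have key : ∀ ε > 0, ‖R A B‖ ≤ ε * Φ A B := by
    intro ε hε
    obtain ⟨η, hη, H⟩ := hsmall ε hε
    obtain ⟨N, hN⟩ := exists_nat_gt ((B - A) / η)
    have hN0 : (0 : ℝ) < N := lt_of_le_of_lt (div_nonneg (sub_nonneg.2 hAB) hη.le) hN
    set d := (B - A) / N with hd
    have hd0 : 0 ≤ d := div_nonneg (sub_nonneg.2 hAB) hN0.le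
    have hdη : d < η := by
      rw [div_lt_iff₀ hη] at hN
      rw [hd, div_lt_iff₀ hN0]
      linarith
    have hNd : N * d = B - A := by rw [hd]; field_simp
    have step : ∀ k : ℕ, k ≤ N → ‖R A (A + k * d)‖ ≤ ε * Φ A (A + k * d) := by
      intro k
      induction k with
      | zero => intro _; simpa using H A A le_rfl le_rfl hAB (by simpa using hη)
      | succ k ih =>
        intro hk
        have hkN : ((k : ℝ) + 1) ≤ N := by exact_mod_cast hk
        have h0 : 0 ≤ (k : ℝ) * d := by positivity
        have hle : A + ((k + 1 : ℕ) : ℝ) * d ≤ B := by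
          push_cast
          nlinarith
        have hstep : A + (k : ℝ) * d ≤ A + ((k + 1 : ℕ) : ℝ) * d := by push_cast; linarith
        rw [hR A (A + k * d) _ le_rfl (by linarith) hstep hle]
        have h1 := H (A + k * d) (A + ((k + 1 : ℕ) : ℝ) * d) (by linarith) hstep hle
          (by push_cast; linarith)
        have h2 := hΦ A (A + k * d) _ le_rfl (by linarith) hstep hle
        calc _ ≤ ε * Φ A (A + k * d) + ε * Φ (A + k * d) (A + ((k + 1 : ℕ) : ℝ) * d) :=
              (norm_add_le _ _).trans (add_le_add (ih (by omega)) h1)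
          _ ≤ _ := by rw [← mul_add]; exact mul_le_mul_of_nonneg_left h2 hε.le
    have := step N le_rfl
    rwa [hNd, add_sub_cancel] at this
  have hlim : Tendsto (fun ε : ℝ => ε * Φ A B) (𝓝[>] 0) (𝓝 0) := by
    have : Tendsto (fun ε : ℝ => ε * Φ A B) (𝓝 0) (𝓝 (0 * Φ A B)) :=
      (continuous_id.mul continuous_const).tendsto 0
    rw [zero_mul] at this
    exact this.mono_left nhdsWithin_le_nhds
  have := ge_of_tendsto hlim (eventually_mem_nhdsWithin.mono fun ε hε => key ε hε)
  exact norm_le_zero_iff.1 this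

theorem setIntegral_Ioc_add {E : Type*} [NormedAddCommGroup E] [NormedSpace ℝ E]
    {μ : Measure ℝ} {f : ℝ → E} {A B s t u : ℝ} (hf : IntegrableOn f (Ioc A B) μ)
    (hs : A ≤ s) (hst : s ≤ t) (htu : t ≤ u) (hu : u ≤ B) :
    ∫ x in Ioc s u, f x ∂μ = ∫ x in Ioc s t, f x ∂μ + ∫ x in Ioc t u, f x ∂μ := by
  rw [← Ioc_union_Ioc_eq_Ioc hst htu]
  exact setIntegral_union (Ioc_disjoint_Ioc_of_le le_rfl) measurableSet_Ioc
    (hf.mono_set (Ioc_subset_Ioc hs (htu.trans hu)))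
    (hf.mono_set (Ioc_subset_Ioc (hs.trans hst) hu))

theorem ContinuousOn.integrableOn_Ioc_mul {μ : Measure ℝ} {f h : ℝ → ℂ} {A B : ℝ}
    (hf : ContinuousOn f (Icc A B)) (hh : IntegrableOn h (Ioc A B) μ) :
    IntegrableOn (fun x => f x * h x) (Ioc A B) μ := by
  obtain ⟨C, hC⟩ := isCompact_Icc.exists_bound_of_continuousOn hf
  refine Integrable.bdd_mul (c := C) hh
    ((hf.mono Ioc_subset_Icc_self).aestronglyMeasurable measurableSet_Ioc) ?_
  exact (ae_restrict_iff' measurableSet_Ioc).2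
    (Eventually.of_forall fun x hx => hC x (Ioc_subset_Icc_self hx))

theorem ContinuousOn.norm_setIntegral_Ioc_sub_le {μ : Measure ℝ} {f h : ℝ → ℂ} {A B : ℝ}
    (hf : ContinuousOn f (Icc A B)) (hh : IntegrableOn h (Ioc A B) μ) :
    ∀ ε > 0, ∃ η > 0, ∀ s t, A ≤ s → s ≤ t → t ≤ B → t - s < η →
      ‖∫ x in Ioc s t, f x * h x ∂μ - f s * ∫ x in Ioc s t, h x ∂μ‖
        ≤ ε * ∫ x in Ioc s t, ‖h x‖ ∂μ := by
  intro ε hε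
  have huc := isCompact_Icc.uniformContinuousOn_of_continuous hf
  rw [Metric.uniformContinuousOn_iff_le] at huc
  obtain ⟨η, hη, H⟩ := huc ε hε
  refine ⟨η, hη, fun s t hs hst ht hlt => ?_⟩
  have hsub : Ioc s t ⊆ Ioc A B := Ioc_subset_Ioc hs ht
  have i1 := (hf.integrableOn_Ioc_mul hh).mono_set hsub
  have i2 := hh.mono_set hsub
  rw [← integral_const_mul, ← integral_sub i1 (i2.const_mul _), ← integral_const_mul]
  refine norm_integral_le_of_norm_le (i2.norm.const_mul ε) ?_
  refine (ae_restrict_iff' measurableSet_Ioc).2 (Eventually.of_forall fun x hx => ?_)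
  rw [← sub_mul, norm_mul]
  refine mul_le_mul_of_nonneg_right ?_ (norm_nonneg _)
  rw [← dist_eq_norm]
  refine H x (Ioc_subset_Icc_self (hsub hx)) s ⟨hs, hst.trans ht⟩ ?_
  rw [Real.dist_eq, abs_of_nonneg (by linarith [hx.1])]
  linarith [hx.2]

theorem setIntegral_Ioc_mul_eq_sub {m : Measure ℝ} {g h E E' : ℝ → ℂ} {A B : ℝ}
    (hAB : A ≤ B) (hg : Continuous g) (hh : IntegrableOn h (Ioc A B) m)
    (hgh : ∀ s t, A ≤ s → s ≤ t → t ≤ B → ∫ x in Ioc s t, h x ∂m = g t - g s)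
    (hE : ∀ x, HasDerivAt E (E' x) x) (hE' : Continuous E') :
    ∫ x in Ioc A B, E x * h x ∂m = E B * g B - E A * g A - ∫ x in A..B, E' x * g x := by
  have hEc : Continuous E := continuous_iff_continuousAt.2 fun x => (hE x).continuousAt
  have hint := hEc.continuousOn.integrableOn_Ioc_mul hh
  have hgl : IntegrableOn E' (Ioc A B) volume :=
    (hE'.continuousOn.integrableOn_compact isCompact_Icc).mono_set Ioc_subset_Icc_self
  have hgE : IntegrableOn (fun x => g x * E' x) (Ioc A B) volume :=
    hg.continuousOn.integrableOn_Ioc_mul hgl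
  have hmain : (∫ x in Ioc A B, E x * h x ∂m) - (E B * g B - E A * g A)
      + ∫ x in Ioc A B, g x * E' x = 0 := by
    refine eq_zero_of_additive_of_isLittleO
      (R := fun s t => (∫ x in Ioc s t, E x * h x ∂m) - (E t * g t - E s * g s)
        + ∫ x in Ioc s t, g x * E' x)
      (Φ := fun s t => (∫ x in Ioc s t, ‖h x‖ ∂m) + ∫ x in Ioc s t, ‖E' x‖) hAB ?_ ?_ ?_
    · intro s t u hs hst htu hu
      rw [setIntegral_Ioc_add hint hs hst htu hu, setIntegral_Ioc_add hgE hs hst htu hu]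
      ring
    · intro s t u hs hst htu hu
      rw [setIntegral_Ioc_add hh.norm hs hst htu hu, setIntegral_Ioc_add hgl.norm hs hst htu hu]
      linarith
    · intro ε hε
      obtain ⟨η₁, hη₁, H₁⟩ := hEc.continuousOn.norm_setIntegral_Ioc_sub_le hh ε hε
      have hcE := isCompact_Icc.uniformContinuousOn_of_continuous (hg.continuousOn (s := Icc A B))
      rw [Metric.uniformContinuousOn_iff_le] at hcE
      obtain ⟨η₃, hη₃, H₃⟩ := hcE (ε / 2) (by positivity)
      obtain ⟨η₂, hη₂, H₂⟩ := hg.continuousOn.norm_setIntegral_Ioc_sub_le hgl (ε / 2) (by positivity)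
      refine ⟨min η₁ (min η₂ η₃), by positivity, fun s t hs hst ht hlt => ?_⟩
      have h1 := H₁ s t hs hst ht (hlt.trans_le (min_le_left _ _))
      have h2 := H₂ s t hs hst ht
        (hlt.trans_le ((min_le_right _ _).trans (min_le_left _ _)))
      have h3 := H₃ t ⟨hs.trans hst, ht⟩ s ⟨hs, hst.trans ht⟩ (by
        rw [Real.dist_eq, abs_of_nonneg (by linarith)]
        exact (hlt.trans_le ((min_le_right _ _).trans (min_le_right _ _))).le)
      rw [dist_eq_norm] at h3
      have hftc : ∫ x in Ioc s t, E' x = E t - E s := by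
        rw [← intervalIntegral.integral_of_le hst]
        exact intervalIntegral.integral_eq_sub_of_hasDerivAt (fun x _ => hE x)
          (hE'.intervalIntegrable _ _)
      have h4 : ‖E t - E s‖ ≤ ∫ x in Ioc s t, ‖E' x‖ := by
        rw [← hftc]; exact norm_integral_le_integral_norm _
      rw [hgh s t hs hst ht] at h1
      rw [hftc] at h2
      have e : (∫ x in Ioc s t, E x * h x ∂m) - (E t * g t - E s * g s)
          + ∫ x in Ioc s t, g x * E' x
          = ((∫ x in Ioc s t, E x * h x ∂m) - E s * (g t - g s))
            + ((∫ x in Ioc s t, g x * E' x) - g s * (E t - E s))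
            - (g t - g s) * (E t - E s) := by ring
      rw [e]
      have h5 : ‖(g t - g s) * (E t - E s)‖ ≤ ε / 2 * ∫ x in Ioc s t, ‖E' x‖ := by
        rw [norm_mul]
        exact mul_le_mul h3 h4 (norm_nonneg _) (by positivity)
      refine (norm_sub_le _ _).trans ?_
      refine (add_le_add (norm_add_le _ _) le_rfl).trans ?_
      linarith
  rw [intervalIntegral.integral_of_le hAB]
  simp only [mul_comm (E' _)]
  linear_combination hmain

theorem exists_trigPoly_setIntegral_le {m : Measure ℝ} [IsFiniteMeasure m] {A : ℝ} {f : ℝ → ℂ}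
    (hfm : Measurable f) (hf : IntegrableOn f (Ioc A (A + 2 * Real.pi)) m) {ε : ℝ} (hε : 0 < ε) :
    ∃ P ∈ Submodule.span ℂ (range fun k : ℤ => fun x : ℝ => Complex.exp (Complex.I * k * x)),
      Continuous P ∧ ∫ x in Ioc A (A + 2 * Real.pi), ‖f x - P x‖ ∂m ≤ ε := by
  have : Fact (0 < 2 * Real.pi) := ⟨Real.two_pi_pos⟩
  set S := Ioc A (A + 2 * Real.pi)
  have hcoe : Measurable ((↑) : ℝ → AddCircle (2 * Real.pi)) :=
    (AddCircle.continuous_mk' (2 * Real.pi)).measurable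
  set μ := (m.restrict S).map ((↑) : ℝ → AddCircle (2 * Real.pi)) with hμ
  let F : AddCircle (2 * Real.pi) → ℂ := fun y => f (AddCircle.equivIoc (2 * Real.pi) A y)
  have hFm : Measurable F :=
    hfm.comp (measurable_subtype_coe.comp
      (AddCircle.measurableEquivIoc (2 * Real.pi) A).measurable)
  have hFf : ∀ x ∈ S, F x = f x := by
    intro x hx
    simp only [F]
    rw [AddCircle.equivIoc_coe_eq hx]
  have hFi : Integrable F μ := by
    rw [hμ, integrable_map_measure hFm.aestronglyMeasurable hcoe.aemeasurable]
    exact hf.congr_fun (fun x hx => (hFf x hx).symm) measurableSet_Ioc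
  have hδ : 0 < ε / 2 / (m.real univ + 1) := by positivity
  obtain ⟨G, hG, hGi⟩ := hFi.exists_boundedContinuous_integral_sub_le (half_pos hε)
  have hmem : G.toContinuousMap ∈ closure (Submodule.span ℂ (range (fourier (T := 2 * Real.pi))) :
      Set C(AddCircle (2 * Real.pi), ℂ)) := by
    rw [← Submodule.topologicalClosure_coe, span_fourier_closure_eq_top]
    trivial
  obtain ⟨Q, hQ, hdist⟩ := Metric.mem_closure_iff.1 hmem _ hδ
  refine ⟨fun x => Q (x : AddCircle (2 * Real.pi)), ?_,
    Q.continuous.comp (AddCircle.continuous_mk' _), ?_⟩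
  · refine Submodule.span_induction (p := fun Q _ => (fun x : ℝ => Q (x : AddCircle (2 * Real.pi)))
      ∈ Submodule.span ℂ (range fun k : ℤ => fun x : ℝ => Complex.exp (Complex.I * k * x)))
      ?_ ?_ ?_ ?_ hQ
    · rintro _ ⟨k, rfl⟩
      refine Submodule.subset_span ⟨k, ?_⟩
      funext x
      rw [fourier_coe_apply]
      have : (Real.pi : ℂ) ≠ 0 := by exact_mod_cast Real.pi_ne_zero
      push_cast
      field_simp
    · exact Submodule.zero_mem _
    · exact fun _ _ _ _ h₁ h₂ => Submodule.add_mem _ h₁ h₂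
    · exact fun a _ _ h => Submodule.smul_mem _ a h
  · have h1 : ∫ x in S, ‖f x - G (x : AddCircle (2 * Real.pi))‖ ∂m ≤ ε / 2 := by
      have hFG : Measurable fun y => ‖F y - G y‖ := (hFm.sub G.continuous.measurable).norm
      rw [hμ, integral_map hcoe.aemeasurable hFG.aestronglyMeasurable] at hG
      refine le_of_eq_of_le (setIntegral_congr_fun measurableSet_Ioc fun x hx => ?_) hG
      rw [hFf x hx]
    have hc : Continuous fun x : ℝ => (x : AddCircle (2 * Real.pi)) := AddCircle.continuous_mk' _
    have hGc : Continuous fun x : ℝ => G (x : AddCircle (2 * Real.pi)) := G.continuous.comp hc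
    have hQc : Continuous fun x : ℝ => Q (x : AddCircle (2 * Real.pi)) := Q.continuous.comp hc
    have hbd : ∀ x : ℝ, ‖G (x : AddCircle (2 * Real.pi)) - Q x‖
        ≤ ε / 2 / (m.real univ + 1) := fun x => by
      rw [← dist_eq_norm]
      exact (ContinuousMap.dist_apply_le_dist (f := G.toContinuousMap) (g := Q) _).trans hdist.le
    have i1 : IntegrableOn (fun x => f x - G (x : AddCircle (2 * Real.pi))) S m := by
      refine hf.sub ?_
      rw [hμ, integrable_map_measure G.continuous.measurable.aestronglyMeasurable
        hcoe.aemeasurable] at hGi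
      exact hGi
    calc ∫ x in S, ‖f x - Q (x : AddCircle (2 * Real.pi))‖ ∂m
        ≤ ∫ x in S, (‖f x - G (x : AddCircle (2 * Real.pi))‖ + ε / 2 / (m.real univ + 1)) ∂m := by
          refine integral_mono_of_nonneg (Eventually.of_forall fun _ => norm_nonneg _)
            (i1.norm.add (integrable_const _)) (Eventually.of_forall fun x => ?_)
          refine (norm_sub_le_norm_sub_add_norm_sub _ (G (x : AddCircle (2 * Real.pi))) _).trans ?_
          exact add_le_add le_rfl (hbd x)
      _ = (∫ x in S, ‖f x - G (x : AddCircle (2 * Real.pi))‖ ∂m)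
          + m.real S * (ε / 2 / (m.real univ + 1)) := by
          rw [integral_add i1.norm (integrable_const _), setIntegral_const, smul_eq_mul]
      _ ≤ ε / 2 + ε / 2 := by
          refine add_le_add h1 ?_
          have h2 : m.real S ≤ m.real univ + 1 :=
            (measureReal_mono (subset_univ _)).trans (by linarith)
          rw [mul_div_assoc', div_le_iff₀ (by positivity), mul_comm]
          exact mul_le_mul_of_nonneg_left h2 (by positivity)
      _ = ε := add_halves ε

theorem norm_exp_I_mul_mul (k : ℤ) (x : ℝ) : ‖Complex.exp (Complex.I * k * x)‖ = 1 := by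
  rw [show Complex.I * (k : ℂ) * (x : ℂ) = ((k * x : ℝ) : ℂ) * Complex.I by push_cast; ring]
  exact Complex.norm_exp_ofReal_mul_I _

theorem tendsto_setIntegral_exp_neg_mul {m : Measure ℝ} [IsFiniteMeasure m] {A : ℝ} {h : ℝ → ℂ}
    (hm : Measurable h) (hh : ∀ x, ‖h x‖ = 1) {N : ℕ}
    (hz : ∀ n : ℕ, N ≤ n → ∫ x in Ioc A (A + 2 * Real.pi),
      Complex.exp (Complex.I * (-n : ℤ) * x) * h x ∂m = 0)
    {f : ℝ → ℂ} (hfm : Measurable f) (hf : IntegrableOn f (Ioc A (A + 2 * Real.pi)) m) :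
    Tendsto (fun n : ℕ => ∫ x in Ioc A (A + 2 * Real.pi),
      Complex.exp (Complex.I * (-n : ℤ) * x) * (f x * h x) ∂m) atTop (𝓝 0) := by
  set S := Ioc A (A + 2 * Real.pi)
  have hexpm : ∀ k : ℤ, Measurable fun x : ℝ => Complex.exp (Complex.I * k * x) := fun k => by
    fun_prop
  have hbdd : ∀ (n : ℕ) {F : ℝ → ℂ}, IntegrableOn F S m → IntegrableOn (fun x : ℝ =>
      Complex.exp (Complex.I * (-n : ℤ) * x) * (F x * h x)) S m := by
    intro n F hF
    refine Integrable.bdd_mul (c := 1) ?_ (hexpm _).aestronglyMeasurable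
      (Eventually.of_forall fun x => (norm_exp_I_mul_mul _ x).le)
    exact Integrable.mul_bdd (c := 1) hF hm.aestronglyMeasurable
      (Eventually.of_forall fun x => (hh x).le)
  have hpoly : ∀ P ∈ Submodule.span ℂ
      (range fun k : ℤ => fun x : ℝ => Complex.exp (Complex.I * k * x)),
      IntegrableOn P S m ∧ ∀ᶠ n : ℕ in atTop, ∫ x in S,
        Complex.exp (Complex.I * (-n : ℤ) * x) * (P x * h x) ∂m = 0 := by
    intro P hP
    induction hP using Submodule.span_induction with
    | mem P hP =>
      obtain ⟨k, rfl⟩ := hP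
      refine ⟨Integrable.of_bound (hexpm k).aestronglyMeasurable 1
        (Eventually.of_forall fun x => (norm_exp_I_mul_mul _ x).le), ?_⟩
      filter_upwards [eventually_ge_atTop (N + k.toNat)] with n hn
      rw [← hz (n - k).toNat (by omega)]
      refine integral_congr_ae (Eventually.of_forall fun x => ?_)
      simp only
      rw [← mul_assoc, ← Complex.exp_add, Int.toNat_of_nonneg (by omega)]
      congr 2
      push_cast
      ring
    | zero => exact ⟨integrable_zero _ _ _, by simp⟩
    | add P Q _ _ hP hQ =>
      refine ⟨hP.1.add hQ.1, ?_⟩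
      filter_upwards [hP.2, hQ.2] with n h1 h2
      simp only [Pi.add_apply, add_mul, mul_add]
      rw [integral_add (hbdd n hP.1) (hbdd n hQ.1), h1, h2, add_zero]
    | smul a P _ hP =>
      refine ⟨hP.1.smul a, ?_⟩
      filter_upwards [hP.2] with n h1
      rw [← mul_zero a, ← h1, ← integral_const_mul]
      refine integral_congr_ae (Eventually.of_forall fun x => ?_)
      simp only [Pi.smul_apply, smul_eq_mul]
      ring
  rw [Metric.tendsto_nhds]
  intro ε hε
  obtain ⟨P, hP, _, hle⟩ := exists_trigPoly_setIntegral_le hfm hf (half_pos hε)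
  obtain ⟨hPi, hP0⟩ := hpoly P hP
  filter_upwards [hP0] with n hn
  rw [dist_zero_right]
  refine lt_of_le_of_lt ?_ (half_lt_self hε)
  rw [← sub_zero (integral _ _), ← hn, ← integral_sub (hbdd n hf) (hbdd n hPi)]
  refine le_trans (norm_integral_le_of_norm_le (hf.sub hPi).norm
    (Eventually.of_forall fun x => ?_)) hle
  rw [← mul_sub, ← sub_mul, norm_mul, norm_mul, norm_exp_I_mul_mul, hh]
  simp

theorem IsExteriorParam.setIntegral_exp_neg_mul_eq_zero {Γ : Set ℂ} {φ ψ : ℂ → ℂ} {c : ℝ}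
    (hφ : IsExteriorMap Γ φ c) (hψ : IsExteriorParam Γ φ ψ) {m : Measure ℝ} {h : ℝ → ℂ} {A : ℝ}
    (hh : IntegrableOn h (Ioc A (A + 2 * Real.pi)) m)
    (hgh : ∀ s t, A ≤ s → s ≤ t → t ≤ A + 2 * Real.pi →
      ∫ x in Ioc s t, h x ∂m = boundaryParam ψ t - boundaryParam ψ s)
    (n : ℕ) (hn : 3 ≤ n) :
    ∫ x in Ioc A (A + 2 * Real.pi), Complex.exp (Complex.I * (-n : ℤ) * x) * h x ∂m = 0 := by
  have hE : ∀ x : ℝ, HasDerivAt (fun x : ℝ => Complex.exp (Complex.I * (-n : ℤ) * x))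
      (Complex.exp (Complex.I * (-n : ℤ) * x) * (Complex.I * (-n : ℤ))) x := fun x => by
    have h1 : HasDerivAt (fun x : ℝ => Complex.I * (-n : ℤ) * (x : ℂ))
        (Complex.I * (-n : ℤ) * 1) x := (Complex.ofRealCLM.hasDerivAt).const_mul _
    rw [mul_one] at h1
    exact h1.cexp
  have hper : Function.Periodic (fun x : ℝ => Complex.exp (Complex.I * (-n : ℤ) * x))
      (2 * Real.pi) := fun x => by
    simp only
    rw [show Complex.I * ((-n : ℤ) : ℂ) * ((x + 2 * Real.pi : ℝ) : ℂ)
      = Complex.I * ((-n : ℤ) : ℂ) * x + ((-n : ℤ) : ℂ) * (2 * Real.pi * Complex.I) by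
        push_cast; ring, Complex.exp_add, Complex.exp_int_mul_two_pi_mul_I, mul_one]
  have hg := periodic_boundaryParam ψ
  have hperA := hper A
  simp only at hperA
  rw [setIntegral_Ioc_mul_eq_sub (by linarith [Real.two_pi_pos]) hψ.continuous_boundaryParam hh hgh
    hE (by fun_prop), hperA, hg A, sub_self, zero_sub, neg_eq_zero]
  have hper' : Function.Periodic (fun x : ℝ => Complex.exp (Complex.I * (-n : ℤ) * x)
      * (Complex.I * (-n : ℤ)) * boundaryParam ψ x) (2 * Real.pi) := fun x => by
    have := hper x
    simp only at this ⊢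
    rw [this, hg x]
  rw [hper'.intervalIntegral_add_eq A 0, zero_add]
  have := integral_exp_mul_exteriorParam_eq_zero hφ hψ n hn
  calc _ = ∫ x in (0:ℝ)..2 * Real.pi, (Complex.I * (-n : ℤ))
        * (Complex.exp (Complex.I * (-n : ℂ) * x) * ψ (Complex.exp (Complex.I * x))) := by
        refine intervalIntegral.integral_congr fun x _ => ?_
        simp only [boundaryParam]
        push_cast
        ring
    _ = 0 := by rw [intervalIntegral.integral_const_mul, this, mul_zero]

theorem tendsto_setIntegral_exp_mul_ofReal {m : Measure ℝ} [IsFiniteMeasure m] {A : ℝ} {h : ℝ → ℂ}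
    (hm : Measurable h) (hh : ∀ x, ‖h x‖ = 1) {N : ℕ}
    (hz : ∀ n : ℕ, N ≤ n → ∫ x in Ioc A (A + 2 * Real.pi),
      Complex.exp (Complex.I * (-n : ℤ) * x) * h x ∂m = 0)
    {U : ℝ → ℝ} (hUm : Measurable U) (hU : IntegrableOn U (Ioc A (A + 2 * Real.pi)) m) :
    Tendsto (fun n : ℕ => ∫ x in Ioc A (A + 2 * Real.pi),
      Complex.exp (Complex.I * n * x) * (U x : ℂ) ∂m) atTop (𝓝 0) := by
  have hcm : Measurable fun x => (starRingEnd ℂ) (h x) := Complex.continuous_conj.measurable.comp hm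
  have hi : IntegrableOn (fun x => (U x : ℂ) * (starRingEnd ℂ) (h x))
      (Ioc A (A + 2 * Real.pi)) m :=
    Integrable.mul_bdd (c := 1) hU.ofReal hcm.aestronglyMeasurable
      (Eventually.of_forall fun x => by rw [RCLike.norm_conj, hh])
  have key := tendsto_setIntegral_exp_neg_mul hm hh hz
    (((Complex.measurable_ofReal.comp hUm).mul hcm)) hi
  have key' := (Complex.continuous_conj.tendsto 0).comp key
  rw [map_zero] at key'
  refine key'.congr fun n => ?_
  simp only [Function.comp_apply]
  rw [← integral_conj]
  refine integral_congr_ae (Eventually.of_forall fun x => ?_)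
  have h1 : (starRingEnd ℂ) (h x) * h x = 1 := by
    rw [Complex.conj_mul', hh]; simp
  simp only [Pi.mul_apply, Function.comp_apply]
  rw [mul_assoc (U x : ℂ), h1, mul_one, map_mul, Complex.conj_ofReal, ← Complex.exp_conj]
  simp

theorem IsExteriorParam.tendsto_setIntegral_exp_mul_ofReal {Γ : Set ℂ} {φ ψ : ℂ → ℂ} {c : ℝ}
    (hφ : IsExteriorMap Γ φ c) (hψ : IsExteriorParam Γ φ ψ) {m : Measure ℝ} [IsFiniteMeasure m]
    {h : ℝ → ℂ} (hm : Measurable h) (hh : ∀ x, ‖h x‖ = 1)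
    (hgh : ∀ s t, 0 ≤ s → s ≤ t → t ≤ 4 * Real.pi →
      ∫ x in Ioc s t, h x ∂m = boundaryParam ψ t - boundaryParam ψ s)
    {U : ℝ → ℝ} (hUm : Measurable U) (hU : IntegrableOn U (Ioc 0 (4 * Real.pi)) m) :
    Tendsto (fun n : ℕ => ∫ x in Ioc 0 (4 * Real.pi),
      Complex.exp (Complex.I * n * x) * (U x : ℂ) ∂m) atTop (𝓝 0) := by
  have hpi := Real.pi_pos
  have hi : Integrable h m :=
    Integrable.of_bound hm.aestronglyMeasurable 1 (Eventually.of_forall fun x => (hh x).le)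
  have hpart : ∀ A, 0 ≤ A → A + 2 * Real.pi ≤ 4 * Real.pi →
      Tendsto (fun n : ℕ => ∫ x in Ioc A (A + 2 * Real.pi),
        Complex.exp (Complex.I * n * x) * (U x : ℂ) ∂m) atTop (𝓝 0) := fun A h0 h1 =>
    _root_.tendsto_setIntegral_exp_mul_ofReal hm hh
      (hψ.setIntegral_exp_neg_mul_eq_zero hφ hi.integrableOn
        fun s t hs hst ht => hgh s t (h0.trans hs) hst (ht.trans h1)) hUm
      (hU.mono_set (Ioc_subset_Ioc h0 h1))
  have h1 := (hpart 0 le_rfl (by linarith)).add (hpart (2 * Real.pi) (by linarith) (by linarith))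
  rw [add_zero] at h1
  refine h1.congr fun n => ?_
  have hint : IntegrableOn (fun x : ℝ => Complex.exp (Complex.I * n * x) * (U x : ℂ))
      (Ioc 0 (4 * Real.pi)) m :=
    (Continuous.continuousOn (by fun_prop)).integrableOn_Ioc_mul hU.ofReal
  rw [zero_add, show 2 * Real.pi + 2 * Real.pi = 4 * Real.pi by ring]
  exact (setIntegral_Ioc_add hint le_rfl (by linarith) (by linarith) le_rfl).symm

theorem setIntegral_Ioc_inv_mul_eq_sub {m : Measure ℝ} {h k L : ℝ → ℂ} {A B : ℝ} (hAB : A ≤ B)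
    (hh : IntegrableOn h (Ioc A B) m)
    (hk : ∀ s t, A ≤ s → s ≤ t → t ≤ B → ∫ x in Ioc s t, h x ∂m = k t - k s)
    (hL : ContinuousOn L (Icc A B)) (hexp : ∀ t ∈ Icc A B, Complex.exp (L t) = k t) :
    ∫ x in Ioc A B, (k x)⁻¹ * h x ∂m = L B - L A := by
  have hinv : ContinuousOn (fun x => (k x)⁻¹) (Icc A B) := by
    refine (Complex.continuous_exp.comp_continuousOn hL.neg).congr fun x hx => ?_
    simp only [Function.comp_apply]
    rw [Pi.neg_apply, Complex.exp_neg, hexp x hx]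
  have hint := hinv.integrableOn_Ioc_mul hh
  obtain ⟨C, hC⟩ := isCompact_Icc.exists_bound_of_continuousOn hinv
  have hC0 : 0 ≤ C := (norm_nonneg _).trans (hC A ⟨le_rfl, hAB⟩)
  have hmain : (∫ x in Ioc A B, (k x)⁻¹ * h x ∂m) - (L B - L A) = 0 := by
    refine eq_zero_of_additive_of_isLittleO
      (R := fun s t => (∫ x in Ioc s t, (k x)⁻¹ * h x ∂m) - (L t - L s))
      (Φ := fun s t => ∫ x in Ioc s t, ‖h x‖ ∂m) hAB ?_ ?_ ?_
    · intro s t u hs hst htu hu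
      rw [setIntegral_Ioc_add hint hs hst htu hu]
      ring
    · intro s t u hs hst htu hu
      exact (setIntegral_Ioc_add hh.norm hs hst htu hu).ge
    · intro ε hε
      obtain ⟨η₁, hη₁, H₁⟩ := hinv.norm_setIntegral_Ioc_sub_le hh (ε / 2) (by positivity)
      have hLu := isCompact_Icc.uniformContinuousOn_of_continuous hL
      rw [Metric.uniformContinuousOn_iff_le] at hLu
      obtain ⟨η₂, hη₂, H₂⟩ := hLu (min (1 / 2) (ε / (4 * (C + 1)))) (by positivity)
      refine ⟨min η₁ η₂, by positivity, fun s t hs hst ht hlt => ?_⟩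
      have hsm : s ∈ Icc A B := ⟨hs, hst.trans ht⟩
      have htm : t ∈ Icc A B := ⟨hs.trans hst, ht⟩
      have h1 := H₁ s t hs hst ht (hlt.trans_le (min_le_left _ _))
      rw [hk s t hs hst ht] at h1
      have h2 := H₂ t htm s hsm (by
        rw [Real.dist_eq, abs_of_nonneg (by linarith)]
        exact (hlt.trans_le (min_le_right _ _)).le)
      rw [dist_eq_norm] at h2
      have h3 : ‖k t - k s‖ ≤ ∫ x in Ioc s t, ‖h x‖ ∂m := by
        rw [← hk s t hs hst ht]; exact norm_integral_le_integral_norm _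
      set z := L t - L s with hz
      have hz1 : ‖z‖ ≤ 1 / 2 := h2.trans (min_le_left _ _)
      have hz2 : ‖z‖ ≤ ε / (4 * (C + 1)) := h2.trans (min_le_right _ _)
      have hks : k s ≠ 0 := by rw [← hexp s hsm]; exact Complex.exp_ne_zero _
      have hez : Complex.exp z - 1 = (k s)⁻¹ * (k t - k s) := by
        rw [hz, Complex.exp_sub, hexp t htm, hexp s hsm]
        field_simp
      have h4 : ‖Complex.exp z - 1 - z‖ ≤ ‖z‖ ^ 2 :=
        Complex.norm_exp_sub_one_sub_id_le (hz1.trans (by norm_num))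
      have h5 : ‖z‖ ≤ 2 * ‖Complex.exp z - 1‖ := by
        have := norm_sub_norm_le z (Complex.exp z - 1)
        rw [norm_sub_rev z] at this
        nlinarith [norm_nonneg z]
      have h6 : ‖Complex.exp z - 1‖ ≤ C * ∫ x in Ioc s t, ‖h x‖ ∂m := by
        rw [hez, norm_mul]
        exact mul_le_mul (hC s hsm) h3 (norm_nonneg _) hC0
      set I := ∫ x in Ioc s t, ‖h x‖ ∂m
      have hI0 : 0 ≤ I := (norm_nonneg _).trans h3
      have h7 : ‖Complex.exp z - 1 - z‖ ≤ ε / 2 * I := by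
        calc ‖Complex.exp z - 1 - z‖ ≤ ‖z‖ * ‖z‖ := by rw [← sq]; exact h4
          _ ≤ ε / (4 * (C + 1)) * (2 * ((C + 1) * I)) := by
            refine mul_le_mul hz2 (h5.trans ?_) (norm_nonneg _) (by positivity)
            nlinarith
          _ = ε / 2 * I := by field_simp; ring
      have e : (∫ x in Ioc s t, (k x)⁻¹ * h x ∂m) - z
          = ((∫ x in Ioc s t, (k x)⁻¹ * h x ∂m) - (k s)⁻¹ * (k t - k s))
            + (Complex.exp z - 1 - z) := by rw [← hez]; ring
      rw [e]
      refine (norm_add_le _ _).trans ?_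
      linarith
  exact sub_eq_zero.1 hmain

theorem setIntegral_Ioc_sub_setIntegral_Ioc_eq {m μ ν : Measure ℝ} [IsFiniteMeasure μ]
    [IsFiniteMeasure ν] {U : ℝ → ℝ} {E : ℝ → ℂ} {A B : ℝ} (hAB : A ≤ B)
    (hU : IntegrableOn U (Ioc A B) m)
    (hincr : ∀ s t, A ≤ s → s ≤ t → t ≤ B →
      μ.real (Ioc s t) - ν.real (Ioc s t) = ∫ x in Ioc s t, U x ∂m)
    (hE : ContinuousOn E (Icc A B)) :
    (∫ x in Ioc A B, E x ∂μ) - ∫ x in Ioc A B, E x ∂ν = ∫ x in Ioc A B, E x * (U x : ℂ) ∂m := by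
  have o₁ : IntegrableOn (fun _ => (1 : ℂ)) (Ioc A B) μ := integrableOn_const (by finiteness)
  have o₂ : IntegrableOn (fun _ => (1 : ℂ)) (Ioc A B) ν := integrableOn_const (by finiteness)
  have o₃ : IntegrableOn (fun x => (U x : ℂ)) (Ioc A B) m := hU.ofReal
  have i₁ := hE.integrableOn_Ioc_mul o₁
  have i₂ := hE.integrableOn_Ioc_mul o₂
  have i₃ := hE.integrableOn_Ioc_mul o₃
  have hmain : (∫ x in Ioc A B, E x * 1 ∂μ) - (∫ x in Ioc A B, E x * 1 ∂ν)
      - ∫ x in Ioc A B, E x * (U x : ℂ) ∂m = 0 := by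
    refine eq_zero_of_additive_of_isLittleO
      (R := fun s t => (∫ x in Ioc s t, E x * 1 ∂μ) - (∫ x in Ioc s t, E x * 1 ∂ν)
        - ∫ x in Ioc s t, E x * (U x : ℂ) ∂m)
      (Φ := fun s t => (∫ x in Ioc s t, ‖(1 : ℂ)‖ ∂μ) + (∫ x in Ioc s t, ‖(1 : ℂ)‖ ∂ν)
        + ∫ x in Ioc s t, ‖(U x : ℂ)‖ ∂m) hAB ?_ ?_ ?_
    · intro s t u hs hst htu hu
      rw [setIntegral_Ioc_add i₁ hs hst htu hu, setIntegral_Ioc_add i₂ hs hst htu hu,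
        setIntegral_Ioc_add i₃ hs hst htu hu]
      ring
    · intro s t u hs hst htu hu
      rw [setIntegral_Ioc_add o₁.norm hs hst htu hu, setIntegral_Ioc_add o₂.norm hs hst htu hu,
        setIntegral_Ioc_add o₃.norm hs hst htu hu]
      linarith
    · intro ε hε
      obtain ⟨η₁, hη₁, H₁⟩ := hE.norm_setIntegral_Ioc_sub_le o₁ ε hε
      obtain ⟨η₂, hη₂, H₂⟩ := hE.norm_setIntegral_Ioc_sub_le o₂ ε hε
      obtain ⟨η₃, hη₃, H₃⟩ := hE.norm_setIntegral_Ioc_sub_le o₃ ε hε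
      refine ⟨min η₁ (min η₂ η₃), by positivity, fun s t hs hst ht hlt => ?_⟩
      have h1 := H₁ s t hs hst ht (hlt.trans_le (min_le_left _ _))
      have h2 := H₂ s t hs hst ht (hlt.trans_le ((min_le_right _ _).trans (min_le_left _ _)))
      have h3 := H₃ s t hs hst ht (hlt.trans_le ((min_le_right _ _).trans (min_le_right _ _)))
      have hinc : (∫ x in Ioc s t, (1 : ℂ) ∂μ) - (∫ x in Ioc s t, (1 : ℂ) ∂ν)
          = ∫ x in Ioc s t, (U x : ℂ) ∂m := by
        rw [integral_complex_ofReal, ← hincr s t hs hst ht]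
        simp
      have e : (∫ x in Ioc s t, E x * 1 ∂μ) - (∫ x in Ioc s t, E x * 1 ∂ν)
          - ∫ x in Ioc s t, E x * (U x : ℂ) ∂m
          = ((∫ x in Ioc s t, E x * 1 ∂μ) - E s * ∫ x in Ioc s t, (1 : ℂ) ∂μ)
            - ((∫ x in Ioc s t, E x * 1 ∂ν) - E s * ∫ x in Ioc s t, (1 : ℂ) ∂ν)
            - ((∫ x in Ioc s t, E x * (U x : ℂ) ∂m) - E s * ∫ x in Ioc s t, (U x : ℂ) ∂m) := by
        linear_combination E s * hinc
      rw [e]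
      refine (norm_sub_le _ _).trans ((add_le_add (norm_sub_le _ _) le_rfl).trans ?_)
      linarith
  simpa [sub_eq_zero] using hmain

theorem IsExteriorParam.boundaryParam_sub_ne_zero {Γ : Set ℂ} {φ ψ : ℂ → ℂ}
    (hψ : IsExteriorParam Γ φ ψ) {θ δ t : ℝ} (hδ : 0 < δ) (ht : t ∈ Icc (θ + δ) (θ - δ + 2 * Real.pi)) :
    boundaryParam ψ t - boundaryParam ψ θ ≠ 0 := by
  intro h
  have := hψ.injOn_boundaryParam (θ - δ) ⟨by linarith [ht.1], ht.2⟩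
    ⟨by linarith, by linarith [ht.1, ht.2]⟩ (sub_eq_zero.1 h)
  linarith [ht.1]

theorem IsExteriorParam.continuousOn_inv_boundaryParam_sub {Γ : Set ℂ} {φ ψ : ℂ → ℂ}
    (hψ : IsExteriorParam Γ φ ψ) {θ δ : ℝ} (hδ : 0 < δ) :
    ContinuousOn (fun t => (boundaryParam ψ t - boundaryParam ψ θ)⁻¹)
      (Icc (θ + δ) (θ - δ + 2 * Real.pi)) :=
  ContinuousOn.inv₀ (hψ.continuous_boundaryParam.sub continuous_const).continuousOn
    fun _ ht => hψ.boundaryParam_sub_ne_zero hδ ht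

theorem IsSecantArg.setIntegral_sub_setIntegral_eq {Γ : Set ℂ} {φ ψ : ℂ → ℂ}
    (hψ : IsExteriorParam Γ φ ψ) {θ δ : ℝ} {v : ℝ → ℝ} {μ ν : Measure ℝ}
    (hδ : 0 < δ) (hδπ : δ < Real.pi) (hv : IsSecantArg ψ θ (θ - δ) v)
    (hμν : IsLSPair v (θ - δ) (θ - δ + 2 * Real.pi) μ ν) {m : Measure ℝ} {h : ℝ → ℂ}
    (hh : Integrable h m)
    (hgh : ∀ s t, θ + δ ≤ s → s ≤ t → t ≤ θ - δ + 2 * Real.pi →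
      ∫ x in Ioc s t, h x ∂m = boundaryParam ψ t - boundaryParam ψ s)
    {E : ℝ → ℂ} (hE : Continuous E) :
    (∫ x in Ioc (θ + δ) (θ - δ + 2 * Real.pi), E x ∂μ)
        - ∫ x in Ioc (θ + δ) (θ - δ + 2 * Real.pi), E x ∂ν
      = ∫ x in Ioc (θ + δ) (θ - δ + 2 * Real.pi),
        E x * ((((boundaryParam ψ x - boundaryParam ψ θ)⁻¹ * h x).im : ℝ) : ℂ) ∂m := by
  have := hμν.finp
  have := hμν.finn
  set k : ℝ → ℂ := fun x => boundaryParam ψ x - boundaryParam ψ θ with hk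
  have hkc : Continuous k := hψ.continuous_boundaryParam.sub continuous_const
  have hk0 : ∀ t ∈ Icc (θ + δ) (θ - δ + 2 * Real.pi), k t ≠ 0 := fun t ht =>
    hψ.boundaryParam_sub_ne_zero hδ ht
  have hint : IntegrableOn (fun x => (k x)⁻¹ * h x) (Ioc (θ + δ) (θ - δ + 2 * Real.pi)) m :=
    (hψ.continuousOn_inv_boundaryParam_sub hδ).integrableOn_Ioc_mul hh.integrableOn
  set L : ℝ → ℂ := fun x => (Real.log ‖k x‖ : ℂ) + Complex.I * (v x : ℂ) with hL
  have hLc : ContinuousOn L (Icc (θ + δ) (θ - δ + 2 * Real.pi)) := by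
    refine ContinuousOn.add ?_ ?_
    · exact Complex.continuous_ofReal.comp_continuousOn
        (hkc.norm.continuousOn.log fun t ht => norm_ne_zero_iff.2 (hk0 t ht))
    · refine continuousOn_const.mul (Complex.continuous_ofReal.comp_continuousOn
        (hv.contAfter.mono fun t ht => ⟨by linarith [ht.1], ht.2⟩))
  have hLexp : ∀ t ∈ Icc (θ + δ) (θ - δ + 2 * Real.pi), Complex.exp (L t) = k t := by
    intro t ht
    have hn : (‖k t‖ : ℂ) ≠ 0 := by simpa using hk0 t ht
    have hb := hv.branch t ⟨by linarith [ht.1], ht.2⟩ (by linarith [ht.1])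
    rw [hL]
    simp only
    rw [Complex.exp_add, hb, ← Complex.ofReal_exp, Real.exp_log (norm_pos_iff.2 (hk0 t ht))]
    exact mul_div_cancel₀ _ hn
  refine setIntegral_Ioc_sub_setIntegral_Ioc_eq (by linarith) hint.im ?_ hE.continuousOn
  intro s t hs hst ht
  have hsub : Icc s t ⊆ Icc (θ + δ) (θ - δ + 2 * Real.pi) := Icc_subset_Icc hs ht
  have h1 := setIntegral_Ioc_inv_mul_eq_sub hst hh.integrableOn (k := k) (L := L) (m := m)
    (fun s' t' hs' hst' ht' => by
      rw [hgh s' t' (hs.trans hs') hst' (ht'.trans ht), hk]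
      ring) (hLc.mono hsub) fun x hx => hLexp x (hsub hx)
  have h2 := hμν.incr s t (by linarith) hst ht
  rw [measureReal_def, measureReal_def, h2]
  have h3 := integral_im (hint.mono_set (Ioc_subset_Ioc hs ht))
  rw [h1] at h3
  refine Eq.trans ?_ h3.symm
  simp [hL]

/-- The density, with respect to `m`, of the Lebesgue–Stieltjes measure of the secant argument at
`θ`, restricted to the parameters at distance at least `δ` from `θ` modulo `2π`. -/
def secantDensity (g h : ℝ → ℂ) (δ θ : ℝ) : ℝ → ℝ :=
  (Ioc (θ + δ) (θ - δ + 2 * Real.pi)).indicator fun x => ((g x - g θ)⁻¹ * h x).im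

theorem measurable_secantDensity {g h : ℝ → ℂ} (hg : Continuous g) (hh : Measurable h) (δ θ : ℝ) :
    Measurable (secantDensity g h δ θ) :=
  (Complex.measurable_im.comp (((hg.measurable.sub_const _).inv).mul hh)).indicator
    measurableSet_Ioc

theorem IsExteriorParam.exists_abs_secantDensity_le {Γ : Set ℂ} {φ ψ : ℂ → ℂ}
    (hψ : IsExteriorParam Γ φ ψ) {h : ℝ → ℂ} (hh : ∀ x, ‖h x‖ = 1) {δ : ℝ} (hδ : 0 < δ) :
    ∃ C, ∀ θ ∈ Icc 0 (2 * Real.pi), ∀ x, |secantDensity (boundaryParam ψ) h δ θ x| ≤ C := by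
  have hgc := hψ.continuous_boundaryParam
  have hK : IsCompact (Icc (0 : ℝ) (2 * Real.pi) ×ˢ Icc δ (2 * Real.pi - δ)) :=
    isCompact_Icc.prod isCompact_Icc
  have hc : ContinuousOn (fun p : ℝ × ℝ =>
      (boundaryParam ψ (p.1 + p.2) - boundaryParam ψ p.1)⁻¹)
      (Icc (0 : ℝ) (2 * Real.pi) ×ˢ Icc δ (2 * Real.pi - δ)) := by
    refine ContinuousOn.inv₀ (Continuous.continuousOn (by fun_prop)) ?_
    rintro ⟨θ, u⟩ ⟨_, hu⟩
    exact hψ.boundaryParam_sub_ne_zero hδ ⟨by linarith [hu.1], by linarith [hu.2]⟩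
  obtain ⟨C, hC⟩ := hK.exists_bound_of_continuousOn hc
  refine ⟨max C 0, fun θ hθ x => ?_⟩
  unfold secantDensity
  by_cases hx : x ∈ Ioc (θ + δ) (θ - δ + 2 * Real.pi)
  · rw [indicator_of_mem hx]
    refine (Complex.abs_im_le_norm _).trans ?_
    rw [norm_mul, hh, mul_one]
    have := hC (θ, x - θ) ⟨hθ, by linarith [hx.1], by linarith [hx.2]⟩
    simp only [add_sub_cancel] at this
    exact this.trans (le_max_left _ _)
  · rw [indicator_of_notMem hx, abs_zero]
    exact le_max_right _ _

theorem IsExteriorParam.tendsto_secantDensity {Γ : Set ℂ} {φ ψ : ℂ → ℂ}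
    (hψ : IsExteriorParam Γ φ ψ) {h : ℝ → ℂ} {δ θ₀ x : ℝ} (hδ : 0 < δ)
    (h1 : x ≠ θ₀ + δ) (h2 : x ≠ θ₀ - δ + 2 * Real.pi) :
    Tendsto (fun θ => secantDensity (boundaryParam ψ) h δ θ x) (𝓝 θ₀)
      (𝓝 (secantDensity (boundaryParam ψ) h δ θ₀ x)) := by
  have hgc := hψ.continuous_boundaryParam
  unfold secantDensity
  have cA : Continuous fun θ : ℝ => θ + δ := by fun_prop
  have cB : Continuous fun θ : ℝ => θ - δ + 2 * Real.pi := by fun_prop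
  by_cases hx : x ∈ Ioc (θ₀ + δ) (θ₀ - δ + 2 * Real.pi)
  · rw [indicator_of_mem hx]
    have hne := hψ.boundaryParam_sub_ne_zero hδ (Ioc_subset_Icc_self hx)
    have hlim : Tendsto (fun θ => ((boundaryParam ψ x - boundaryParam ψ θ)⁻¹ * h x).im) (𝓝 θ₀)
        (𝓝 ((boundaryParam ψ x - boundaryParam ψ θ₀)⁻¹ * h x).im) := by
      have : ContinuousAt (fun θ => (boundaryParam ψ x - boundaryParam ψ θ)⁻¹) θ₀ :=
        ContinuousAt.inv₀ (by fun_prop) hne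
      exact (Complex.continuous_im.tendsto _).comp (this.tendsto.mul_const _)
    refine hlim.congr' ?_
    filter_upwards [(cA.tendsto θ₀).eventually (gt_mem_nhds hx.1),
      (cB.tendsto θ₀).eventually (lt_mem_nhds (lt_of_le_of_ne hx.2 h2))] with θ ha hb
    rw [indicator_of_mem (show x ∈ Ioc _ _ from ⟨ha, hb.le⟩)]
  · rw [indicator_of_notMem hx]
    refine tendsto_const_nhds.congr' ?_
    rw [mem_Ioc, not_and_or, not_lt, not_le] at hx
    rcases hx with hx | hx
    · filter_upwards [(cA.tendsto θ₀).eventually (lt_mem_nhds (lt_of_le_of_ne hx h1))] with θ ha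
      rw [indicator_of_notMem (fun hm => lt_asymm ha hm.1)]
    · filter_upwards [(cB.tendsto θ₀).eventually (gt_mem_nhds hx)] with θ hb
      rw [indicator_of_notMem (fun hm => not_le.2 hb hm.2)]

theorem IsExteriorParam.eventually_forall_norm_setIntegral_secantDensity_le {Γ : Set ℂ}
    {φ ψ : ℂ → ℂ} {c : ℝ} (hφ : IsExteriorMap Γ φ c) (hψ : IsExteriorParam Γ φ ψ) {m : Measure ℝ}
    [IsFiniteMeasure m] [NullSingletonClass m]
    {h : ℝ → ℂ} (hm : Measurable h) (hh : ∀ x, ‖h x‖ = 1)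
    (hgh : ∀ s t, 0 ≤ s → s ≤ t → t ≤ 4 * Real.pi →
      ∫ x in Ioc s t, h x ∂m = boundaryParam ψ t - boundaryParam ψ s)
    {δ : ℝ} (hδ : 0 < δ) {ε : ℝ} (hε : 0 < ε) :
    ∀ᶠ n : ℕ in atTop, ∀ θ ∈ Icc 0 (2 * Real.pi), ‖∫ x in Ioc 0 (4 * Real.pi),
      Complex.exp (Complex.I * n * x) * (secantDensity (boundaryParam ψ) h δ θ x : ℂ) ∂m‖ ≤ ε := by
  obtain ⟨C, hC⟩ := hψ.exists_abs_secantDensity_le hh hδ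
  have hgc := hψ.continuous_boundaryParam
  have hWm := measurable_secantDensity hgc hm δ
  have hWi : ∀ θ ∈ Icc 0 (2 * Real.pi),
      IntegrableOn (secantDensity (boundaryParam ψ) h δ θ) (Ioc 0 (4 * Real.pi)) m := fun θ hθ =>
    Integrable.of_bound (hWm θ).aestronglyMeasurable C (Eventually.of_forall (hC θ hθ))
  have hEi : ∀ n : ℕ, ∀ θ ∈ Icc 0 (2 * Real.pi), IntegrableOn (fun x : ℝ =>
      Complex.exp (Complex.I * n * x) * (secantDensity (boundaryParam ψ) h δ θ x : ℂ))
      (Ioc 0 (4 * Real.pi)) m := fun n θ hθ =>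
    (Continuous.continuousOn (by fun_prop)).integrableOn_Ioc_mul (hWi θ hθ).ofReal
  refine (isCompact_Icc (a := (0 : ℝ)) (b := 2 * Real.pi)).induction_on
    (p := fun S => ∀ᶠ n : ℕ in atTop, ∀ θ ∈ S, ‖∫ x in Ioc 0 (4 * Real.pi),
      Complex.exp (Complex.I * n * x) * (secantDensity (boundaryParam ψ) h δ θ x : ℂ) ∂m‖ ≤ ε)
    ?_ ?_ ?_ ?_
  · simp
  · exact fun S T hST hT => hT.mono fun n hn θ hθ => hn θ (hST hθ)
  · intro S T hS hT
    filter_upwards [hS, hT] with n h1 h2 θ hθ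
    exact hθ.elim (h1 θ) (h2 θ)
  · intro θ₀ hθ₀
    have hlim : Tendsto (fun θ => ∫ x in Ioc 0 (4 * Real.pi),
        |secantDensity (boundaryParam ψ) h δ θ x - secantDensity (boundaryParam ψ) h δ θ₀ x| ∂m)
        (𝓝[Icc 0 (2 * Real.pi)] θ₀) (𝓝 (∫ x in Ioc 0 (4 * Real.pi), (0 : ℝ) ∂m)) := by
      refine tendsto_integral_filter_of_dominated_convergence (fun _ => C + C) ?_ ?_
        (integrable_const _) ?_
      · exact Eventually.of_forall fun θ =>
          ((hWm θ).sub (hWm θ₀)).abs.aestronglyMeasurable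
      · filter_upwards [self_mem_nhdsWithin] with θ hθ
        refine Eventually.of_forall fun x => ?_
        rw [Real.norm_eq_abs, abs_abs]
        exact (abs_sub _ _).trans (add_le_add (hC θ hθ x) (hC θ₀ hθ₀ x))
      · refine ae_restrict_of_ae ?_
        filter_upwards [compl_mem_ae_iff.2 (measure_singleton (θ₀ + δ)),
          compl_mem_ae_iff.2 (measure_singleton (θ₀ - δ + 2 * Real.pi))] with x h1 h2
        have := ((hψ.tendsto_secantDensity (h := h) hδ h1 h2).sub_const
          (secantDensity (boundaryParam ψ) h δ θ₀ x)).abs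
        rw [sub_self, abs_zero] at this
        exact this.mono_left nhdsWithin_le_nhds
    rw [integral_zero] at hlim
    refine ⟨_, hlim.eventually (gt_mem_nhds (half_pos hε)) |>.and self_mem_nhdsWithin, ?_⟩
    have h0 := hψ.tendsto_setIntegral_exp_mul_ofReal hφ hm hh hgh (hWm θ₀) (hWi θ₀ hθ₀)
    have h0' := (tendsto_zero_iff_norm_tendsto_zero.1 h0).eventually (gt_mem_nhds (half_pos hε))
    filter_upwards [h0'] with n hn θ hθ
    obtain ⟨hθ1, hθ2⟩ := hθ
    have hdiff : ‖(∫ x in Ioc 0 (4 * Real.pi), Complex.exp (Complex.I * n * x)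
          * (secantDensity (boundaryParam ψ) h δ θ x : ℂ) ∂m)
        - ∫ x in Ioc 0 (4 * Real.pi), Complex.exp (Complex.I * n * x)
          * (secantDensity (boundaryParam ψ) h δ θ₀ x : ℂ) ∂m‖ ≤ ∫ x in Ioc 0 (4 * Real.pi),
        |secantDensity (boundaryParam ψ) h δ θ x - secantDensity (boundaryParam ψ) h δ θ₀ x| ∂m := by
      rw [← integral_sub (hEi n θ hθ2) (hEi n θ₀ hθ₀)]
      refine norm_integral_le_of_norm_le ((hWi θ hθ2).sub (hWi θ₀ hθ₀)).abs
        (Eventually.of_forall fun x => ?_)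
      have := norm_exp_I_mul_mul (n : ℤ) x
      rw [Int.cast_natCast] at this
      rw [← mul_sub, norm_mul, this, one_mul, ← Complex.ofReal_sub, Complex.norm_real,
        Real.norm_eq_abs]
    have := norm_sub_norm_le (∫ x in Ioc 0 (4 * Real.pi), Complex.exp (Complex.I * n * x)
          * (secantDensity (boundaryParam ψ) h δ θ x : ℂ) ∂m)
        (∫ x in Ioc 0 (4 * Real.pi), Complex.exp (Complex.I * n * x)
          * (secantDensity (boundaryParam ψ) h δ θ₀ x : ℂ) ∂m)
    linarith

/-- Let `Γ` be a piecewise Dini-smooth Jordan curve. For every sufficiently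
small `δ > 0`, `lim_{n→∞} sup_{θ∈[0,2π)} |∫_{θ+δ}^{θ−δ+2π} e^{int} dv_θ(t)| = 0`, where for
each `θ`, `v_θ` is a secant-argument function of `Γ` on `[θ−δ, θ−δ+2π]` whose
Lebesgue–Stieltjes measure is realized by the pair of finite measures `(μp θ, μn θ)`. -/
theorem secant_integral_tail_uniformly_vanishes
    (Γ : Set ℂ) (φ ψ : ℂ → ℂ) (c : ℝ)
    (hΓ : IsPiecewiseDiniSmoothJordanCurve Γ)
    (hφ : IsExteriorMap Γ φ c)
    (hψ : IsExteriorParam Γ φ ψ) :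
    ∃ δ₀ : ℝ, 0 < δ₀ ∧ ∀ δ : ℝ, 0 < δ → δ < δ₀ →
      ∀ (v : ℝ → ℝ → ℝ) (μp μn : ℝ → MeasureTheory.Measure ℝ),
        (∀ θ : ℝ, IsSecantArg ψ θ (θ - δ) (v θ) ∧
          IsLSPair (v θ) (θ - δ) (θ - δ + 2 * Real.pi) (μp θ) (μn θ)) →
        Filter.Tendsto
          (fun n : ℕ =>
            ⨆ θ : Set.Ico (0 : ℝ) (2 * Real.pi),
              ‖(∫ t in Set.Ioc ((θ : ℝ) + δ) ((θ : ℝ) - δ + 2 * Real.pi),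
                    Complex.exp (Complex.I * (n : ℂ) * (t : ℂ)) ∂(μp (θ : ℝ)))
                - ∫ t in Set.Ioc ((θ : ℝ) + δ) ((θ : ℝ) - δ + 2 * Real.pi),
                    Complex.exp (Complex.I * (n : ℂ) * (t : ℂ)) ∂(μn (θ : ℝ))‖)
          Filter.atTop (nhds 0) := by
  refine ⟨Real.pi, Real.pi_pos, fun δ hδ hδπ v μp μn H => ?_⟩
  have hpi := Real.pi_pos
  obtain ⟨m, h, hmf, hmn, hm, hh, hgh⟩ := exists_unimodular_density hψ.continuous_boundaryParam
    (by linarith : (0 : ℝ) ≤ 4 * Real.pi) (hψ.boundedVariationOn_boundaryParam hΓ)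
  have hi : Integrable h m :=
    Integrable.of_bound hm.aestronglyMeasurable 1 (Eventually.of_forall fun x => (hh x).le)
  have hD : ∀ θ ∈ Ico (0 : ℝ) (2 * Real.pi), ∀ n : ℕ,
      (∫ t in Ioc (θ + δ) (θ - δ + 2 * Real.pi), Complex.exp (Complex.I * (n : ℂ) * (t : ℂ)) ∂(μp θ))
        - ∫ t in Ioc (θ + δ) (θ - δ + 2 * Real.pi),
          Complex.exp (Complex.I * (n : ℂ) * (t : ℂ)) ∂(μn θ)
      = ∫ x in Ioc 0 (4 * Real.pi), Complex.exp (Complex.I * n * x)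
          * (secantDensity (boundaryParam ψ) h δ θ x : ℂ) ∂m := by
    intro θ hθ n
    rw [(H θ).1.setIntegral_sub_setIntegral_eq hψ hδ hδπ (H θ).2 hi
      (fun s t hs hst ht => hgh s t (by linarith [hθ.1]) hst (by linarith [hθ.2])) (by fun_prop)]
    have hsub : Ioc (θ + δ) (θ - δ + 2 * Real.pi) ⊆ Ioc 0 (4 * Real.pi) :=
      Ioc_subset_Ioc (by linarith [hθ.1]) (by linarith [hθ.2])
    rw [← inter_eq_self_of_subset_right hsub, ← setIntegral_indicator measurableSet_Ioc]
    refine integral_congr_ae (Eventually.of_forall fun x => ?_)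
    unfold secantDensity
    by_cases hx : x ∈ Ioc (θ + δ) (θ - δ + 2 * Real.pi)
    · simp only [indicator_of_mem hx]
    · simp only [indicator_of_notMem hx, Complex.ofReal_zero, mul_zero]
  rw [Metric.tendsto_nhds]
  intro ε hε
  filter_upwards [hψ.eventually_forall_norm_setIntegral_secantDensity_le hφ hm hh hgh hδ
    (half_pos hε)] with n hn
  rw [dist_zero_right, Real.norm_eq_abs,
    abs_of_nonneg (Real.iSup_nonneg fun _ => norm_nonneg _)]
  refine lt_of_le_of_lt (Real.iSup_le (fun θ => ?_) (half_pos hε).le) (half_lt_self hε)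
  rw [hD θ θ.2 n]
  exact hn θ ⟨θ.2.1, θ.2.2.le⟩

end
end

section
/- Let Γ be a piecewise Dini-smooth Jordan curve with corners z_k = ψ(e^{iθ_k}), k = 1,…,l, and let Θ_Γ := {θ_k + 2πj : 1≤k≤l, j ∈ ℤ}. For every ε > 0 there exists δ > 0 (small enough that each interval (θ−δ, θ+δ) contains at most one point of Θ_Γ) such that for every θ: if (θ−δ, θ+δ) ∩ Θ_Γ = ∅ then (1/π) ∫_{θ−δ}^{θ+δ} |dv_θ(t)| ≤ 1 + ε, while if (θ−δ, θ+δ) ∩ Θ_Γ ≠ ∅ then (1/π) ∫_{θ−δ}^{θ+δ} |dv_θ(t)| ≤ 2 + ε. -/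
open Filter Topology MeasureTheory Set

noncomputable section

theorem eVariationOn_Ioo_le_of_abs_deriv_le {u u' B : ℝ → ℝ} {c d : ℝ}
    (hu : ∀ s ∈ Ioo c d, HasDerivAt u (u' s) s) (hB : Integrable B) (hB0 : ∀ s, 0 ≤ B s)
    (hb : ∀ s ∈ Ioo c d, |u' s| ≤ B s) :
    eVariationOn u (Ioo c d) ≤ ENNReal.ofReal (∫ s, B s) := by
  have key : ∀ s ∈ Ioo c d, ∀ t ∈ Ioo c d, s ≤ t → |u t - u s| ≤ ∫ x in s..t, B x := by
    intro s hs t ht hst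
    have hsub : ∀ x ∈ Icc s t, x ∈ Ioo c d := fun x hx =>
      ⟨hs.1.trans_le hx.1, hx.2.trans_lt ht.2⟩
    have hcont : ContinuousOn u (Icc s t) := fun x hx =>
      (hu x (hsub x hx)).continuousAt.continuousWithinAt
    have h1 := intervalIntegral.sub_le_integral_of_hasDeriv_right_of_le hst hcont
      (fun x hx => (hu x (hsub x (Ioo_subset_Icc_self hx))).hasDerivWithinAt)
      hB.integrableOn
      (fun x hx => (le_abs_self _).trans (hb x (hsub x (Ioo_subset_Icc_self hx))))
    have h2 := intervalIntegral.sub_le_integral_of_hasDeriv_right_of_le (g := fun x => -u x) hst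
      hcont.neg
      (fun x hx => (hu x (hsub x (Ioo_subset_Icc_self hx))).neg.hasDerivWithinAt)
      hB.integrableOn
      (fun x hx => (neg_le_abs _).trans (hb x (hsub x (Ioo_subset_Icc_self hx))))
    rw [abs_le]
    constructor <;> linarith
  refine iSup_le ?_
  rintro ⟨n, p, hp, hmem⟩
  have hii : ∀ x y : ℝ, IntervalIntegrable B volume x y := fun x y => hB.intervalIntegrable
  calc ∑ i ∈ Finset.range n, edist (u (p (i + 1))) (u (p i))
      ≤ ∑ i ∈ Finset.range n, ENNReal.ofReal (∫ x in (p i)..(p (i + 1)), B x) := by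
        refine Finset.sum_le_sum fun i _ => ?_
        rw [edist_dist, Real.dist_eq]
        exact ENNReal.ofReal_le_ofReal (key _ (hmem i) _ (hmem (i + 1)) (hp (Nat.le_succ i)))
    _ = ENNReal.ofReal (∑ i ∈ Finset.range n, ∫ x in (p i)..(p (i + 1)), B x) := by
        rw [ENNReal.ofReal_sum_of_nonneg]
        intro i _
        exact intervalIntegral.integral_nonneg (hp (Nat.le_succ i)) fun x _ => hB0 x
    _ ≤ ENNReal.ofReal (∫ s, B s) := by
        refine ENNReal.ofReal_le_ofReal ?_
        rw [intervalIntegral.sum_integral_adjacent_intervals fun k _ => hii _ _,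
          intervalIntegral.integral_of_le (hp (Nat.zero_le n))]
        exact setIntegral_le_integral hB (Eventually.of_forall hB0)

theorem eVariationOn_Icc_le_of_tendsto {u : ℝ → ℝ} {x y L E : ℝ} (hxy : x < y) (hE : 0 ≤ E)
    (hu : ContinuousWithinAt u (Ici x) x) (hL : Tendsto u (𝓝[<] y) (𝓝 L))
    (hV : eVariationOn u (Ioo x y) ≤ ENNReal.ofReal E) :
    eVariationOn u (Icc x y) ≤ ENNReal.ofReal (E + |u y - L|) := by
  have hnb : (𝓝[<] y).NeBot := nhdsLT_neBot_of_exists_lt ⟨x, hxy⟩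
  have e1 : Icc x y ∩ Iio y = Ico x y := by ext; simp; grind
  have e2 : Icc x y ∩ Iic y = Icc x y := by ext; simp
  have e3 : Iio y ∩ Ioi x = Ioo x y := by ext; simp; grind
  have e4 : Iio y ∩ Ici x = Ico x y := by ext; simp; grind
  have hn : 𝓝[Icc x y ∩ Iio y] y = 𝓝[<] y := by rw [e1, nhdsWithin_Ico_eq_nhdsLT hxy]
  have h1 := eVariationOn.eVariationOn_on_inter_Iic_eq_Iio_add_edist (f := u) (s := Icc x y)
    (a := y) (l := L) (by rw [hn]; exact hnb) ⟨hxy.le, le_rfl⟩ (by rw [hn]; exact hL)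
  have hn' : 𝓝[Iio y ∩ Ioi x] x = 𝓝[>] x := by rw [e3, nhdsWithin_Ioo_eq_nhdsGT hxy]
  have h2 := eVariationOn.eVariationOn_inter_Ioi_eq_inter_Ici_of_continuousWithinAt (f := u)
    (s := Iio y) (a := x) (by rw [hn']; exact nhdsGT_neBot_of_exists_gt ⟨y, hxy⟩)
    (hu.mono inter_subset_right)
  rw [e1, e2] at h1
  rw [e3, e4] at h2
  rw [h1, ← h2, ENNReal.ofReal_add hE (abs_nonneg _), edist_dist, Real.dist_eq]
  gcongr

theorem hasDerivAt_of_exp_eq_div_norm {u : ℝ → ℝ} {g : ℝ → ℂ} {g' : ℂ} {s : ℝ}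
    (hu : ContinuousAt u s) (hg : HasDerivAt g g' s) (h0 : g s ≠ 0)
    (h : ∀ᶠ t in 𝓝 s, Complex.exp (Complex.I * (u t : ℂ)) = g t / (‖g t‖ : ℂ)) :
    HasDerivAt u (g' / g s).im s := by
  have hs := h.self_of_nhds
  have hd : HasDerivAt (fun t => Complex.log (g t / g s)) (g' / g s) s := by
    have := (hg.div_const (g s)).clog_real (by rw [div_self h0]; simp)
    simpa [div_self h0] using this
  have hd2 : HasDerivAt (fun t => u s + (Complex.log (g t / g s)).im) (g' / g s).im s :=
    (Complex.imCLM.hasFDerivAt.comp_hasDerivAt s hd).const_add (u s)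
  refine hd2.congr_of_eventuallyEq ?_
  have hball : ∀ᶠ t in 𝓝 s, |u t - u s| < Real.pi := by
    have := Metric.tendsto_nhds.1 hu Real.pi Real.pi_pos
    simpa [Real.dist_eq] using this
  have hne : ∀ᶠ t in 𝓝 s, g t ≠ 0 := hg.continuousAt.eventually_ne h0
  filter_upwards [h, hball, hne] with t ht hb hn
  have hnt : (‖g t‖ : ℂ) ≠ 0 := by simpa using hn
  have hns : (‖g s‖ : ℂ) ≠ 0 := by simpa using h0
  have hq : g t / g s = ((‖g t‖ / ‖g s‖ : ℝ) : ℂ) *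
      (Complex.cos ((u t - u s : ℝ) : ℂ) + Complex.sin ((u t - u s : ℝ) : ℂ) * Complex.I) := by
    rw [← Complex.exp_mul_I]
    have : ((u t - u s : ℝ) : ℂ) * Complex.I = Complex.I * u t - Complex.I * u s := by
      push_cast; ring
    rw [this, Complex.exp_sub, ht, hs]
    push_cast
    field_simp
  rw [Complex.log_im, hq, Complex.arg_mul_cos_add_sin_mul_I (by positivity)]
  · ring
  · rw [abs_lt] at hb
    exact ⟨hb.1, hb.2.le⟩

theorem abs_im_div_le {z z₀ e g : ℂ} {κ w u : ℝ} (he : ‖e‖ = 1) (hκ : κ < 1 / 3) (hw : 0 ≤ w)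
    (hz : z ≠ 0) (hge : ‖g - e‖ ≤ κ) (h1 : ‖z - z₀ - u * e‖ ≤ κ * |u|)
    (h2 : ‖z - z₀ - u * g‖ ≤ w * |u|) (h3 : 0 ≤ u * (z₀ * (starRingEnd ℂ) e).re) :
    |(g / z).im| ≤ (1 + κ) / (1 - 3 * κ) * (‖z₀‖ / (‖z₀‖ ^ 2 + u ^ 2) + w / |u|) := by
  have hκ0 : 0 ≤ κ := (norm_nonneg _).trans hge
  have hg : ‖g‖ ≤ 1 + κ := by
    have := norm_add_le (g - e) e
    rw [sub_add_cancel, he] at this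
    linarith
  have hD := norm_nonneg z₀
  set D := ‖z₀‖ with hDdef
  have hu0 := abs_nonneg u
  have hnum : |(g * (starRingEnd ℂ) z).im| ≤ (1 + κ) * (D + w * |u|) := by
    have : (g * (starRingEnd ℂ) z).im =
        (g * (starRingEnd ℂ) (z₀ + (z - z₀ - u * g))).im := by
      simp only [Complex.mul_im, Complex.conj_im, Complex.conj_re, Complex.add_re, Complex.add_im,
        Complex.sub_re, Complex.sub_im, Complex.mul_re, Complex.ofReal_re, Complex.ofReal_im]
      ring
    rw [this]
    refine (Complex.abs_im_le_norm _).trans ?_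
    rw [norm_mul, Complex.norm_conj]
    have := norm_add_le z₀ (z - z₀ - u * g)
    gcongr
    linarith
  have hden : (1 - 3 * κ) * (D ^ 2 + u ^ 2) ≤ ‖z‖ ^ 2 := by
    set R := z - z₀ - u * e with hR
    have hzz : z = z₀ + (u * e + R) := by rw [hR]; ring
    have e1 : ‖z‖ ^ 2 = D ^ 2 + ‖u * e + R‖ ^ 2 + 2 * (u * (z₀ * (starRingEnd ℂ) e).re) +
        2 * (z₀ * (starRingEnd ℂ) R).re := by
      rw [hDdef, hzz]
      simp only [← Complex.normSq_eq_norm_sq, Complex.normSq_apply, Complex.mul_im, Complex.conj_im,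
        Complex.conj_re, Complex.add_re, Complex.add_im,
        Complex.mul_re, Complex.ofReal_re, Complex.ofReal_im]
      ring
    have e2 : -(D * (κ * |u|)) ≤ (z₀ * (starRingEnd ℂ) R).re := by
      have a1 := (abs_le.1 (Complex.abs_re_le_norm (z₀ * (starRingEnd ℂ) R))).1
      rw [norm_mul, Complex.norm_conj] at a1
      have : D * ‖R‖ ≤ D * (κ * |u|) := by gcongr
      linarith
    have e3 : (1 - κ) * |u| ≤ ‖u * e + R‖ := by
      have := norm_sub_le (u * e + R) R
      rw [add_sub_cancel_right, norm_mul, he, Complex.norm_real, Real.norm_eq_abs] at this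
      linarith
    have e4 : ((1 - κ) * |u|) ^ 2 ≤ ‖u * e + R‖ ^ 2 := by
      apply pow_le_pow_left₀ _ e3
      apply mul_nonneg _ hu0
      linarith
    have hu2 : |u| ^ 2 = u ^ 2 := sq_abs u
    have e5 : 2 * (D * |u|) ≤ D ^ 2 + u ^ 2 := by nlinarith [sq_nonneg (D - |u|)]
    have e6 : ((1 - κ) * |u|) ^ 2 = (1 - 2 * κ + κ ^ 2) * u ^ 2 := by rw [← hu2]; ring
    rw [e6] at e4
    have e7 := mul_le_mul_of_nonneg_left e5 hκ0
    have e8 := sq_nonneg (κ * u)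
    have e9 := mul_nonneg hκ0 (sq_nonneg D)
    linarith
  have hz2 : 0 < ‖z‖ ^ 2 := by positivity
  have him : (g / z).im = (g * (starRingEnd ℂ) z).im / ‖z‖ ^ 2 := by
    rw [Complex.div_im, ← Complex.normSq_eq_norm_sq]
    simp only [Complex.mul_im, Complex.conj_im, Complex.conj_re]
    ring
  have hA : 0 < D ^ 2 + u ^ 2 := by
    by_contra hcon
    have hD0 : D = 0 := by nlinarith [sq_nonneg D, sq_nonneg u]
    have hu' : u = 0 := by nlinarith [sq_nonneg D, sq_nonneg u]
    have hz0 : z₀ = 0 := by simpa [hDdef] using hD0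
    rw [hu', hz0] at h1
    simp at h1
    exact hz h1
  have hk3 : 0 < 1 - 3 * κ := by linarith
  rw [him, abs_div, abs_of_pos hz2]
  calc |(g * (starRingEnd ℂ) z).im| / ‖z‖ ^ 2
      ≤ ((1 + κ) * (D + w * |u|)) / ((1 - 3 * κ) * (D ^ 2 + u ^ 2)) := by
        gcongr
    _ = (1 + κ) / (1 - 3 * κ) * (D / (D ^ 2 + u ^ 2) + w * |u| / (D ^ 2 + u ^ 2)) := by
        field_simp
    _ ≤ _ := by
        have : w * |u| / (D ^ 2 + u ^ 2) ≤ w / |u| := by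
          rcases hu0.eq_or_lt with h | h
          · rw [← h]; simp
          · rw [div_le_div_iff₀ hA h]
            have hu2 : |u| ^ 2 = u ^ 2 := sq_abs u
            nlinarith [mul_nonneg hw (sq_nonneg D)]
        gcongr

theorem integrable_and_integral_comp_abs {W : ℝ → ℝ} {X : ℝ}
    (hW : IntegrableOn (fun t => W t / t) (Ioc 0 X)) :
    Integrable (fun x => (Ioc 0 X).indicator (fun t => W t / t) |x|) ∧
      ∫ x, (Ioc 0 X).indicator (fun t => W t / t) |x| = 2 * ∫ t in Ioc 0 X, W t / t := by
  set f := (Ioc 0 X).indicator (fun t => W t / t) with hf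
  have hfi : Integrable f := (integrable_indicator_iff measurableSet_Ioc).2 hW
  have hz : ∀ x ≤ 0, f x = 0 := fun x hx => by
    rw [hf]; exact indicator_of_notMem (fun h => absurd h.1 hx.not_gt) _
  have heq : (fun x => f |x|) = fun x => f x + f (-x) := by
    funext x
    rcases le_total 0 x with h | h
    · rw [abs_of_nonneg h, hz (-x) (by linarith), add_zero]
    · rw [abs_of_nonpos h, hz x h, zero_add]
  rw [heq]
  refine ⟨hfi.add hfi.comp_neg, ?_⟩
  rw [integral_add hfi hfi.comp_neg, integral_neg_eq_self f, ← two_mul, hf,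
    integral_indicator measurableSet_Ioc]

theorem integrable_and_integral_poisson {D : ℝ} (hD : 0 ≤ D) :
    Integrable (fun x : ℝ => D / (D ^ 2 + x ^ 2)) ∧
      ∫ x : ℝ, D / (D ^ 2 + x ^ 2) = if D = 0 then 0 else Real.pi := by
  rcases hD.eq_or_lt with rfl | h
  · simp
  · have heq : (fun x : ℝ => D / (D ^ 2 + x ^ 2)) = fun x => D⁻¹ * (1 + (x / D) ^ 2)⁻¹ := by
      funext x
      field_simp
    rw [heq]
    refine ⟨(integrable_inv_one_add_sq.comp_div h.ne').const_mul _, ?_⟩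
    rw [integral_const_mul, Measure.integral_comp_div (fun y : ℝ => (1 + y ^ 2)⁻¹) D,
      integral_univ_inv_one_add_sq, abs_of_pos h, if_neg h.ne', smul_eq_mul]
    field_simp

theorem exists_forall_nonneg_mul_sub {f : ℝ → ℝ} {c d : ℝ} (hcd : c ≤ d)
    (hf : ContinuousOn f (Icc c d)) :
    ∃ s₀ ∈ Icc c d, ∀ s ∈ Icc c d, 0 ≤ (s - s₀) * f s₀ := by
  by_cases h1 : 0 ≤ f c
  · exact ⟨c, left_mem_Icc.2 hcd, fun s hs => mul_nonneg (sub_nonneg.2 hs.1) h1⟩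
  by_cases h2 : f d ≤ 0
  · exact ⟨d, right_mem_Icc.2 hcd, fun s hs => mul_nonneg_of_nonpos_of_nonpos
      (sub_nonpos.2 hs.2) h2⟩
  obtain ⟨s, hs, h0⟩ := intermediate_value_Icc hcd hf
    (show (0 : ℝ) ∈ Icc (f c) (f d) from ⟨(not_le.1 h1).le, (not_le.1 h2).le⟩)
  exact ⟨s, hs, fun t _ => by rw [h0, mul_zero]⟩

/-- A regular parametrization `G (σ s) = γ s` over `[c, d] ∋ 0` by an increasing change of
variable `σ`, where `γ` has a derivative with Dini modulus of continuity at most `W` and unit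
velocity `e` at `0`. -/
structure DiniChart (G : ℝ → ℂ) (e : ℂ) (γ γ' : ℝ → ℂ) (σ W : ℝ → ℝ) (c d : ℝ) : Prop where
  lt : c < d
  mem : (0 : ℝ) ∈ Icc c d
  cont : ContinuousOn σ (Icc c d)
  mono : StrictMonoOn σ (Icc c d)
  eq : ∀ s ∈ Icc c d, G (σ s) = γ s
  deriv : ∀ s ∈ Icc c d, HasDerivWithinAt γ (γ' s) (Icc c d) s
  modulus : ∀ s ∈ Icc c d, ∀ t ∈ Icc c d, ‖γ' s - γ' t‖ ≤ W |s - t|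
  monoW : MonotoneOn W (Ici 0)
  dini : ∃ X > 0, IntegrableOn (fun t => W t / t) (Ioc 0 X)
  norm_eq : ‖e‖ = 1
  zero : γ' 0 = e
  contZero : ContinuousWithinAt γ' (Icc c d) 0

/-- The argument of `G - p`, for `p ∈ P`, has variation at most `E` on every open subinterval
of `[x, y]` on which `G` avoids `p`. The bound is phrased for closed intervals, with the jump at
the right end point accounted for. -/
def ArgVarLE (G : ℝ → ℂ) (P : Set ℂ) (x y E : ℝ) : Prop :=
  ∀ p ∈ P, ∀ x' y' : ℝ, x ≤ x' → x' < y' → y' ≤ y → ∀ (u : ℝ → ℝ) (L : ℝ),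
    ContinuousOn u (Ico x' y') → Tendsto u (𝓝[<] y') (𝓝 L) →
    (∀ t ∈ Ioo x' y', G t ≠ p ∧
      Complex.exp (Complex.I * (u t : ℂ)) = (G t - p) / (‖G t - p‖ : ℂ)) →
    eVariationOn u (Icc x' y') ≤ ENNReal.ofReal (E + |u y' - L|)

theorem ArgVarLE.mono {G : ℝ → ℂ} {P Q : Set ℂ} {x y x₁ y₁ E F : ℝ} (h : ArgVarLE G P x y E)
    (hPQ : Q ⊆ P) (hx : x ≤ x₁) (hy : y₁ ≤ y) (hE : E ≤ F) : ArgVarLE G Q x₁ y₁ F := by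
  intro p hp x' y' h1 h2 h3 u L hu hL hb
  refine (h p (hPQ hp) x' y' (hx.trans h1) h2 (h3.trans hy) u L hu hL hb).trans ?_
  gcongr

theorem StrictMonoOn.image_Ioo_of_continuousOn {σ : ℝ → ℝ} {c d : ℝ} (hσ : StrictMonoOn σ (Icc c d))
    (hc : ContinuousOn σ (Icc c d)) (hcd : c ≤ d) : σ '' Ioo c d = Ioo (σ c) (σ d) := by
  have hc' : c ∈ Icc c d := left_mem_Icc.2 hcd
  have hd' : d ∈ Icc c d := right_mem_Icc.2 hcd
  apply Subset.antisymm
  · rintro _ ⟨s, hs, rfl⟩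
    have hs' := Ioo_subset_Icc_self hs
    exact ⟨hσ hc' hs' hs.1, hσ hs' hd' hs.2⟩
  · intro t ht
    obtain ⟨s, hs, rfl⟩ := intermediate_value_Icc hcd hc (Ioo_subset_Icc_self ht)
    exact ⟨s, ⟨(hσ.lt_iff_lt hc' hs).1 ht.1, (hσ.lt_iff_lt hs hd').1 ht.2⟩, rfl⟩

namespace DiniChart

variable {G : ℝ → ℂ} {e : ℂ} {γ γ' : ℝ → ℂ} {σ W : ℝ → ℝ} {c d κ X : ℝ}

theorem nonneg (h : DiniChart G e γ γ' σ W c d) {t : ℝ} (ht : 0 ≤ t) : 0 ≤ W t := by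
  have h0 := h.modulus 0 h.mem 0 h.mem
  simp only [sub_self, norm_zero, abs_zero] at h0
  exact h0.trans (h.monoW (mem_Ici.2 le_rfl) ht ht)

theorem restrict (h : DiniChart G e γ γ' σ W c d) {c₁ d₁ : ℝ} (hc : c ≤ c₁) (hd : d₁ ≤ d)
    (hlt : c₁ < d₁) (hm : (0 : ℝ) ∈ Icc c₁ d₁) : DiniChart G e γ γ' σ W c₁ d₁ := by
  have hsub : Icc c₁ d₁ ⊆ Icc c d := Icc_subset_Icc hc hd
  exact
  { lt := hlt
    mem := hm
    cont := h.cont.mono hsub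
    mono := h.mono.mono hsub
    eq := fun s hs => h.eq s (hsub hs)
    deriv := fun s hs => (h.deriv s (hsub hs)).mono hsub
    modulus := fun s hs t ht => h.modulus s (hsub hs) t (hsub ht)
    monoW := h.monoW
    dini := h.dini
    norm_eq := h.norm_eq
    zero := h.zero
    contZero := h.contZero.mono hsub }

theorem translate (h : DiniChart G e γ γ' σ W c d) {T : ℝ} (hT : Function.Periodic G T) :
    DiniChart G e γ γ' (fun s => σ s + T) W c d :=
  { h with
    cont := h.cont.add continuousOn_const
    mono := fun s hs t ht hst => by
      have := h.mono hs ht hst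
      simpa using this
    eq := fun s hs => by rw [hT, h.eq s hs] }

theorem norm_sub_sub_le (h : DiniChart G e γ γ' σ W c d) {s t : ℝ} (hs : s ∈ Icc c d)
    (ht : t ∈ Icc c d) : ‖γ s - γ t - (s - t : ℝ) * γ' s‖ ≤ W |s - t| * |s - t| := by
  have hsub : uIcc t s ⊆ Icc c d := uIcc_subset_Icc ht hs
  have := Convex.norm_image_sub_le_of_norm_hasDerivWithin_le (f := fun x : ℝ => γ x - x * γ' s)
    (f' := fun x => γ' x - γ' s) (s := uIcc t s) (x := t) (y := s) (C := W |s - t|) ?_ ?_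
    (convex_uIcc t s) left_mem_uIcc right_mem_uIcc
  · rw [Real.norm_eq_abs] at this
    have he : γ s - γ t - (s - t : ℝ) * γ' s = (γ s - s * γ' s) - (γ t - t * γ' s) := by
      push_cast
      ring
    rwa [he]
  · intro x hx
    refine ((h.deriv x (hsub hx)).mono hsub).sub ?_
    have := (Complex.ofRealCLM.hasDerivAt (x := x)).mul_const (γ' s)
    simpa using this.hasDerivWithinAt
  · intro x hx
    refine (h.modulus x (hsub hx) s hs).trans
      (h.monoW (mem_Ici.2 (abs_nonneg _)) (mem_Ici.2 (abs_nonneg _)) ?_)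
    rw [uIcc_comm] at hx
    rw [abs_sub_comm s t]
    exact abs_sub_left_of_mem_uIcc hx

theorem norm_sub_sub_le' (h : DiniChart G e γ γ' σ W c d) (hκ : ∀ s ∈ Icc c d, ‖γ' s - e‖ ≤ κ)
    {s t : ℝ} (hs : s ∈ Icc c d) (ht : t ∈ Icc c d) :
    ‖γ s - γ t - (s - t : ℝ) * e‖ ≤ κ * |s - t| := by
  have := Convex.norm_image_sub_le_of_norm_hasDerivWithin_le (f := fun x : ℝ => γ x - x * e)
    (f' := fun x => γ' x - e) (s := Icc c d) (x := t) (y := s) (C := κ) ?_ hκ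
    (convex_Icc c d) ht hs
  · rw [Real.norm_eq_abs] at this
    have he : γ s - γ t - (s - t : ℝ) * e = (γ s - s * e) - (γ t - t * e) := by
      push_cast
      ring
    rwa [he]
  · intro x hx
    refine (h.deriv x hx).sub ?_
    have := (Complex.ofRealCLM.hasDerivAt (x := x)).mul_const e
    simpa using this.hasDerivWithinAt

theorem eVariationOn_le (h : DiniChart G e γ γ' σ W c d) (hκ : ∀ s ∈ Icc c d, ‖γ' s - e‖ ≤ κ)
    (hκ3 : κ < 1 / 3) (hX : d - c ≤ X) (hI : IntegrableOn (fun t => W t / t) (Ioc 0 X))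
    {s₀ : ℝ} (hs₀ : s₀ ∈ Icc c d) {p : ℂ}
    (hp : ∀ s ∈ Icc c d, 0 ≤ (s - s₀) * ((γ s₀ - p) * (starRingEnd ℂ) e).re)
    {a b : ℝ} (hab : a < b) (ha : c ≤ a) (hb : b ≤ d) {u : ℝ → ℝ} {L : ℝ}
    (hu : ContinuousOn u (Ico (σ a) (σ b))) (hL : Tendsto u (𝓝[<] (σ b)) (𝓝 L))
    (hbr : ∀ t ∈ Ioo (σ a) (σ b), G t ≠ p ∧
      Complex.exp (Complex.I * (u t : ℂ)) = (G t - p) / (‖G t - p‖ : ℂ)) :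
    eVariationOn u (Icc (σ a) (σ b)) ≤ ENNReal.ofReal ((1 + κ) / (1 - 3 * κ) *
      ((if ‖γ s₀ - p‖ = 0 then 0 else Real.pi) + 2 * ∫ t in Ioc 0 X, W t / t) + |u (σ b) - L|) := by
  have hsub : Icc a b ⊆ Icc c d := Icc_subset_Icc ha hb
  have haI : a ∈ Icc c d := hsub (left_mem_Icc.2 hab.le)
  have hbI : b ∈ Icc c d := hsub (right_mem_Icc.2 hab.le)
  have hσ : σ a < σ b := h.mono haI hbI hab
  have hκ0 : 0 ≤ κ := (norm_nonneg _).trans (hκ 0 h.mem)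
  have hK : 0 ≤ (1 + κ) / (1 - 3 * κ) := div_nonneg (by linarith) (by linarith)
  set K := (1 + κ) / (1 - 3 * κ) with hKdef
  have hpi := Real.pi_pos
  have hInn : 0 ≤ ∫ t in Ioc 0 X, W t / t := setIntegral_nonneg measurableSet_Ioc fun t ht =>
    div_nonneg (h.nonneg ht.1.le) ht.1.le
  obtain ⟨i1, j1⟩ := integrable_and_integral_comp_abs hI
  obtain ⟨i2, j2⟩ := integrable_and_integral_poisson (norm_nonneg (γ s₀ - p))
  set f := (Ioc 0 X).indicator (fun t => W t / t) with hf
  set D := ‖γ s₀ - p‖ with hD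
  have hf0 : ∀ x, 0 ≤ f x := fun x => indicator_nonneg (fun t ht =>
    div_nonneg (h.nonneg ht.1.le) ht.1.le) x
  refine eVariationOn_Icc_le_of_tendsto hσ ?_ ?_ hL ?_
  · apply mul_nonneg hK
    split_ifs <;> linarith
  · have := hu (σ a) ⟨le_rfl, hσ⟩
    rwa [ContinuousWithinAt, nhdsWithin_Ico_eq_nhdsGE hσ] at this
  have himg := (h.mono.mono hsub).image_Ioo_of_continuousOn (h.cont.mono hsub) hab.le
  rw [← himg, ← eVariationOn.comp_eq_of_monotoneOn u σ
    ((h.mono.mono (Ioo_subset_Icc_self.trans hsub)).monotoneOn)]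
  have hB : Integrable (fun s => K * (D / (D ^ 2 + (s - s₀) ^ 2) + f |s - s₀|)) :=
    ((i2.comp_sub_right s₀).add (i1.comp_sub_right s₀)).const_mul K
  have hval : ∫ s, K * (D / (D ^ 2 + (s - s₀) ^ 2) + f |s - s₀|) =
      K * ((if D = 0 then 0 else Real.pi) + 2 * ∫ t in Ioc 0 X, W t / t) := by
    rw [integral_const_mul, integral_add (i2.comp_sub_right s₀) (i1.comp_sub_right s₀),
      integral_sub_right_eq_self (fun x : ℝ => D / (D ^ 2 + x ^ 2)) s₀,
      integral_sub_right_eq_self (fun x => f |x|) s₀, j1, j2]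
  rw [← hval]
  have hσI : ∀ s ∈ Ioo a b, σ s ∈ Ioo (σ a) (σ b) := fun s hs => himg ▸ mem_image_of_mem σ hs
  refine eVariationOn_Ioo_le_of_abs_deriv_le (u' := fun s => (γ' s / (γ s - p)).im) ?_ hB
    (fun s => by have := hf0 |s - s₀|; positivity) ?_
  · intro s hs
    have hsI : s ∈ Icc c d := hsub (Ioo_subset_Icc_self hs)
    have hnh : Icc c d ∈ 𝓝 s := mem_of_superset (Ioo_mem_nhds hs.1 hs.2)
      (Ioo_subset_Icc_self.trans hsub)
    have hd : HasDerivAt (fun s => γ s - p) (γ' s) s :=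
      ((h.deriv s hsI).hasDerivAt hnh).sub_const p
    refine hasDerivAt_of_exp_eq_div_norm ?_ hd ?_ ?_
    · have h1 := hσI s hs
      exact ContinuousAt.comp (hu.continuousAt (Ico_mem_nhds h1.1 h1.2)) (h.cont.continuousAt hnh)
    · have := (hbr _ (hσI s hs)).1
      rw [h.eq s hsI] at this
      exact sub_ne_zero.2 this
    · filter_upwards [Ioo_mem_nhds hs.1 hs.2] with t ht
      have := (hbr _ (hσI t ht)).2
      rwa [h.eq t (hsub (Ioo_subset_Icc_self ht))] at this
  · intro s hs
    have hsI : s ∈ Icc c d := hsub (Ioo_subset_Icc_self hs)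
    have hne : γ s - p ≠ 0 := by
      have := (hbr _ (hσI s hs)).1
      rw [h.eq s hsI] at this
      exact sub_ne_zero.2 this
    refine (abs_im_div_le (z := γ s - p) (z₀ := γ s₀ - p) (e := e) (g := γ' s) (κ := κ)
      (w := W |s - s₀|) (u := s - s₀) h.norm_eq hκ3 (h.nonneg (abs_nonneg _)) hne (hκ s hsI)
      ?_ ?_ (hp s hsI)).trans ?_
    · rw [sub_sub_sub_cancel_right]
      exact h.norm_sub_sub_le' hκ hsI hs₀
    · rw [sub_sub_sub_cancel_right]
      exact h.norm_sub_sub_le hsI hs₀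
    · have hle : W |s - s₀| / |s - s₀| ≤ f |s - s₀| := by
        rcases (abs_nonneg (s - s₀)).eq_or_lt with h0 | h0
        · rw [← h0, div_zero]
          exact hf0 _
        · have : |s - s₀| ≤ X := by
            rw [abs_le]
            constructor <;> linarith [hsI.1, hsI.2, hs₀.1, hs₀.2]
          rw [hf, indicator_of_mem (show |s - s₀| ∈ Ioc 0 X from ⟨h0, this⟩)]
      gcongr

theorem argVarLE (h : DiniChart G e γ γ' σ W c d) (hκ : ∀ s ∈ Icc c d, ‖γ' s - e‖ ≤ κ)
    (hκ3 : κ < 1 / 3) (hX : d - c ≤ X) (hI : IntegrableOn (fun t => W t / t) (Ioc 0 X)) :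
    ArgVarLE G univ (σ c) (σ d)
        ((1 + κ) / (1 - 3 * κ) * (Real.pi + 2 * ∫ t in Ioc 0 X, W t / t)) ∧
      ArgVarLE G (G '' Icc (σ c) (σ d)) (σ c) (σ d)
        ((1 + κ) / (1 - 3 * κ) * (2 * ∫ t in Ioc 0 X, W t / t)) := by
  have hγ : ContinuousOn γ (Icc c d) := fun s hs => (h.deriv s hs).continuousWithinAt
  have hκ0 : 0 ≤ κ := (norm_nonneg _).trans (hκ 0 h.mem)
  have hK : 0 ≤ (1 + κ) / (1 - 3 * κ) := div_nonneg (by linarith) (by linarith)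
  have hsurj : ∀ t ∈ Icc (σ c) (σ d), ∃ s ∈ Icc c d, σ s = t := fun t ht =>
    intermediate_value_Icc h.lt.le h.cont ht
  constructor
  · intro p _ x' y' hx hxy hy u L hu hL hbr
    obtain ⟨a, ha, rfl⟩ := hsurj x' ⟨hx, (hxy.trans_le hy).le⟩
    obtain ⟨b, hb, rfl⟩ := hsurj y' ⟨hx.trans hxy.le, hy⟩
    obtain ⟨s₀, hs₀, hp⟩ := exists_forall_nonneg_mul_sub
      (f := fun s => ((γ s - p) * (starRingEnd ℂ) e).re) h.lt.le
      (Complex.continuous_re.comp_continuousOn ((hγ.sub continuousOn_const).mul continuousOn_const))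
    refine (h.eVariationOn_le hκ hκ3 hX hI hs₀ hp ((h.mono.lt_iff_lt ha hb).1 hxy) ha.1 hb.2
      hu hL hbr).trans ?_
    have hpi := Real.pi_pos
    gcongr
    split_ifs <;> linarith
  · rintro _ ⟨θ, hθ, rfl⟩ x' y' hx hxy hy u L hu hL hbr
    obtain ⟨a, ha, rfl⟩ := hsurj x' ⟨hx, (hxy.trans_le hy).le⟩
    obtain ⟨b, hb, rfl⟩ := hsurj y' ⟨hx.trans hxy.le, hy⟩
    obtain ⟨s₀, hs₀, rfl⟩ := hsurj θ hθ
    have hz : γ s₀ - G (σ s₀) = 0 := by rw [h.eq s₀ hs₀, sub_self]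
    have := h.eVariationOn_le hκ hκ3 hX hI hs₀ (p := G (σ s₀)) (fun s _ => by simp [hz])
      ((h.mono.lt_iff_lt ha hb).1 hxy) ha.1 hb.2 hu hL hbr
    simpa [hz] using this

/-- Short charts have small argument variation. -/
theorem exists_argVarLE (h : DiniChart G e γ γ' σ W c d) {T ε : ℝ} (hT : Function.Periodic G T)
    (hε : 0 < ε) : ∃ η > 0, ∀ c₁ d₁ : ℝ, c ≤ c₁ → d₁ ≤ d → c₁ < d₁ → (0 : ℝ) ∈ Icc c₁ d₁ →
      -η ≤ c₁ → d₁ ≤ η → ∀ j : ℤ,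
      ArgVarLE G univ (σ c₁ + j * T) (σ d₁ + j * T) (Real.pi + ε) ∧
      ArgVarLE G (G '' Icc (σ c₁ + j * T) (σ d₁ + j * T)) (σ c₁ + j * T) (σ d₁ + j * T) ε := by
  obtain ⟨X, hX, hI⟩ := h.dini
  have hlim : Tendsto (fun x : ℝ => ∫ t in Ioc 0 x, W t / t) (𝓝[>] 0) (𝓝 0) := by
    have hii : IntervalIntegrable (fun t => W t / t) volume 0 X :=
      (intervalIntegrable_iff_integrableOn_Ioc_of_le hX.le).2 hI
    have hc := intervalIntegral.continuousOn_primitive_interval'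
      (a := 0) hii left_mem_uIcc 0 left_mem_uIcc
    rw [uIcc_of_le hX.le, ContinuousWithinAt, intervalIntegral.integral_same] at hc
    have hc' := hc.mono_left (nhdsWithin_mono 0 (Ioc_subset_Icc_self))
    rw [nhdsWithin_Ioc_eq_nhdsGT hX] at hc'
    refine hc'.congr' ?_
    filter_upwards [self_mem_nhdsWithin] with x hx
    exact intervalIntegral.integral_of_le (le_of_lt hx)
  have hκlim : Tendsto (fun κ : ℝ => (1 + κ) / (1 - 3 * κ)) (𝓝[>] 0) (𝓝 1) := by
    have : ContinuousAt (fun κ : ℝ => (1 + κ) / (1 - 3 * κ)) 0 := by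
      apply ContinuousAt.div <;> first | fun_prop | norm_num
    have h2 := this.tendsto.mono_left (nhdsWithin_le_nhds (s := Ioi (0 : ℝ)))
    simpa using h2
  have hE1 : ∀ᶠ x : ℝ in 𝓝[>] 0, (1 + x) / (1 - 3 * x) *
      (Real.pi + 2 * ∫ t in Ioc 0 x, W t / t) < Real.pi + ε := by
    have := hκlim.mul ((hlim.const_mul 2).const_add Real.pi)
    exact this.eventually_lt_const (by simpa using hε)
  have hE2 : ∀ᶠ x : ℝ in 𝓝[>] 0, (1 + x) / (1 - 3 * x) * (2 * ∫ t in Ioc 0 x, W t / t) < ε := by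
    have := hκlim.mul (hlim.const_mul 2)
    exact this.eventually_lt_const (by simpa using hε)
  have hE3 : ∀ᶠ x : ℝ in 𝓝[>] 0, x < min X (1 / 3) :=
    (eventually_lt_nhds (lt_min hX (by norm_num))).filter_mono nhdsWithin_le_nhds
  obtain ⟨κ, h1, h2, h3, hκ⟩ := (hE1.and (hE2.and (hE3.and self_mem_nhdsWithin))).exists
  have hκ : 0 < κ := hκ
  obtain ⟨η, hη, hball⟩ := Metric.continuousWithinAt_iff.1 h.contZero κ hκ
  refine ⟨min (η / 2) (κ / 2), by positivity, fun c₁ d₁ hc hd hlt hm hc₁ hd₁ j => ?_⟩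
  have hη' : min (η / 2) (κ / 2) < η := (min_le_left _ _).trans_lt (by linarith)
  have hκ' := min_le_right (η / 2) (κ / 2)
  have h' := (h.restrict hc hd hlt hm).translate (hT.int_mul j)
  have hk : ∀ s ∈ Icc c₁ d₁, ‖γ' s - e‖ ≤ κ := by
    intro s hs
    have := @hball s ⟨hc.trans hs.1, hs.2.trans hd⟩ (by
      rw [Real.dist_eq, sub_zero, abs_lt]
      constructor <;> linarith [hs.1, hs.2])
    rw [h.zero, dist_eq_norm] at this
    exact this.le
  obtain ⟨r1, r2⟩ := h'.argVarLE hk (h3.trans_le (min_le_right _ _)) (X := κ) (by linarith)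
    (hI.mono_set (Ioc_subset_Ioc_right (h3.le.trans (min_le_left _ _))))
  exact ⟨r1.mono subset_rfl le_rfl le_rfl h1.le, r2.mono subset_rfl le_rfl le_rfl h2.le⟩

end DiniChart

namespace DiniChart

variable {G : ℝ → ℂ} {e : ℂ} {γ γ' : ℝ → ℂ} {σ W : ℝ → ℝ} {c d : ℝ}

theorem reflect (h : DiniChart (fun t => G (-t)) e γ γ' σ W c d) :
    DiniChart G (-e) (fun s => γ (-s)) (fun s => -γ' (-s)) (fun s => -σ (-s)) W (-d) (-c) := by
  have hneg : ∀ s ∈ Icc (-d) (-c), -s ∈ Icc c d := fun s hs =>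
    ⟨by linarith [hs.2], by linarith [hs.1]⟩
  have hmaps : MapsTo (fun s : ℝ => -s) (Icc (-d) (-c)) (Icc c d) := hneg
  exact
  { lt := neg_lt_neg h.lt
    mem := ⟨by linarith [h.mem.2], by linarith [h.mem.1]⟩
    cont := (h.cont.comp continuousOn_neg hmaps).neg
    mono := fun s hs t ht hst => neg_lt_neg (h.mono (hneg t ht) (hneg s hs) (neg_lt_neg hst))
    eq := fun s hs => h.eq (-s) (hneg s hs)
    deriv := fun s hs => by
      have h1 : HasDerivWithinAt (fun s : ℝ => -s) (-1) (Icc (-d) (-c)) s :=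
        (hasDerivAt_neg s).hasDerivWithinAt
      have := (h.deriv (-s) (hneg s hs)).scomp s h1 hmaps
      simpa [Function.comp_def] using this
    modulus := fun s hs t ht => by
      have := h.modulus (-s) (hneg s hs) (-t) (hneg t ht)
      rw [neg_sub_neg, abs_sub_comm] at this
      rwa [neg_sub_neg, norm_sub_rev]
    monoW := h.monoW
    dini := h.dini
    norm_eq := by rw [norm_neg, h.norm_eq]
    zero := by rw [neg_zero, h.zero]
    contZero := by
      have hz := h.contZero
      rw [← neg_zero] at hz
      exact (ContinuousWithinAt.comp hz continuousWithinAt_id.neg hmaps).neg }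

theorem join {γ₁ γ₁' : ℝ → ℂ} {σ₁ W₁ : ℝ → ℝ} {γ₂ γ₂' : ℝ → ℂ} {σ₂ W₂ : ℝ → ℝ}
    (h₁ : DiniChart G e γ₁ γ₁' σ₁ W₁ c 0) (h₂ : DiniChart G e γ₂ γ₂' σ₂ W₂ 0 d)
    (h0 : σ₁ 0 = σ₂ 0) :
    DiniChart G e (fun s => if s ≤ 0 then γ₁ s else γ₂ s) (fun s => if s ≤ 0 then γ₁' s else γ₂' s)
      (fun s => if s ≤ 0 then σ₁ s else σ₂ s) (fun t => W₁ t + W₂ t) c d := by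
  have hc := h₁.lt
  have hd := h₂.lt
  have m1 : (0 : ℝ) ∈ Icc c 0 := h₁.mem
  have m2 : (0 : ℝ) ∈ Icc 0 d := h₂.mem
  have hγ0 : γ₁ 0 = γ₂ 0 := by rw [← h₁.eq 0 m1, ← h₂.eq 0 m2, h0]
  have hγ'0 : γ₁' 0 = γ₂' 0 := by rw [h₁.zero, h₂.zero]
  have key : ∀ {α : Type} (f g : ℝ → α), f 0 = g 0 →
      EqOn (fun s => if s ≤ 0 then f s else g s) f (Icc c 0) ∧
      EqOn (fun s => if s ≤ 0 then f s else g s) g (Icc 0 d) := by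
    intro α f g hfg
    refine ⟨fun s hs => if_pos hs.2, fun s hs => ?_⟩
    rcases hs.1.eq_or_lt with h | h
    · subst h
      simpa using hfg
    · exact if_neg (not_le.2 h)
  obtain ⟨s1, s2⟩ := key σ₁ σ₂ h0
  obtain ⟨g1, g2⟩ := key γ₁ γ₂ hγ0
  obtain ⟨d1, d2⟩ := key γ₁' γ₂' hγ'0
  have hun : Icc c d = Icc c 0 ∪ Icc 0 d := (Icc_union_Icc_eq_Icc hc.le hd.le).symm
  have hbound : ∀ s ∈ Icc c 0, ∀ t ∈ Icc 0 d, ‖γ₁' s - γ₂' t‖ ≤ W₁ |s - t| + W₂ |s - t| := by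
    intro s hs t ht
    have e1 := h₁.modulus s hs 0 m1
    have e2 := h₂.modulus 0 m2 t ht
    rw [h₁.zero, sub_zero] at e1
    rw [h₂.zero, zero_sub, abs_neg] at e2
    have hst : |s - t| = -s + t := by
      rw [abs_of_nonpos (by linarith [hs.2, ht.1])]
      ring
    have f1 : W₁ |s| ≤ W₁ |s - t| := h₁.monoW (mem_Ici.2 (abs_nonneg _)) (mem_Ici.2 (abs_nonneg _))
      (by rw [hst, abs_of_nonpos hs.2]; linarith [ht.1])
    have f2 : W₂ |t| ≤ W₂ |s - t| := h₂.monoW (mem_Ici.2 (abs_nonneg _)) (mem_Ici.2 (abs_nonneg _))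
      (by rw [hst, abs_of_nonneg ht.1]; linarith [hs.2])
    have := norm_add_le (γ₁' s - e) (e - γ₂' t)
    rw [sub_add_sub_cancel] at this
    linarith
  exact
  { lt := hc.trans hd
    mem := ⟨hc.le, hd.le⟩
    cont := by
      rw [hun]
      exact (h₁.cont.congr s1).union_of_isClosed (h₂.cont.congr s2) isClosed_Icc isClosed_Icc
    mono := by
      rw [hun]
      refine StrictMonoOn.union ?_ ?_ (c := 0) ⟨m1, fun x hx => hx.2⟩ ⟨m2, fun x hx => hx.1⟩
      · exact h₁.mono.congr s1.symm
      · exact h₂.mono.congr s2.symm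
    eq := by
      intro s hs
      rw [hun] at hs
      rcases hs with hs | hs
      · have e1 := s1 hs
        have e2 := g1 hs
        simp only at e1 e2 ⊢
        rw [e1, e2, h₁.eq s hs]
      · have e1 := s2 hs
        have e2 := g2 hs
        simp only at e1 e2 ⊢
        rw [e1, e2, h₂.eq s hs]
    deriv := by
      intro s hs
      rw [hun] at hs ⊢
      refine HasDerivWithinAt.union ?_ ?_
      · by_cases h : s ∈ Icc c 0
        · have := (h₁.deriv s h).congr_of_mem (fun x hx => g1 hx) h
          rwa [← d1 h] at this
        · rw [hasDerivWithinAt_iff_hasFDerivWithinAt]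
          exact HasFDerivWithinAt.of_notMem_closure (by rwa [isClosed_Icc.closure_eq])
      · by_cases h : s ∈ Icc 0 d
        · have := (h₂.deriv s h).congr_of_mem (fun x hx => g2 hx) h
          rwa [← d2 h] at this
        · rw [hasDerivWithinAt_iff_hasFDerivWithinAt]
          exact HasFDerivWithinAt.of_notMem_closure (by rwa [isClosed_Icc.closure_eq])
    modulus := by
      intro s hs t ht
      have n1 := h₁.nonneg (abs_nonneg (s - t))
      have n2 := h₂.nonneg (abs_nonneg (s - t))
      rw [hun] at hs ht
      rcases hs with hs | hs <;> rcases ht with ht | ht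
      · have e1 := d1 hs
        have e2 := d1 ht
        simp only at e1 e2 ⊢
        rw [e1, e2]
        linarith [h₁.modulus s hs t ht]
      · have e1 := d1 hs
        have e2 := d2 ht
        simp only at e1 e2 ⊢
        rw [e1, e2]
        exact hbound s hs t ht
      · have e1 := d2 hs
        have e2 := d1 ht
        simp only at e1 e2 ⊢
        rw [e1, e2, norm_sub_rev, abs_sub_comm]
        exact hbound t ht s hs
      · have e1 := d2 hs
        have e2 := d2 ht
        simp only at e1 e2 ⊢
        rw [e1, e2]
        linarith [h₂.modulus s hs t ht]
    monoW := h₁.monoW.add h₂.monoW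
    dini := by
      obtain ⟨X₁, hX₁, i1⟩ := h₁.dini
      obtain ⟨X₂, hX₂, i2⟩ := h₂.dini
      refine ⟨min X₁ X₂, lt_min hX₁ hX₂, ?_⟩
      have := (i1.mono_set (Ioc_subset_Ioc_right (min_le_left X₁ X₂))).add
        (i2.mono_set (Ioc_subset_Ioc_right (min_le_right X₁ X₂)))
      refine this.congr_fun (fun t _ => ?_) measurableSet_Ioc
      simp [add_div]
    norm_eq := h₁.norm_eq
    zero := by simp [h₁.zero]
    contZero := by
      rw [hun]
      refine ContinuousWithinAt.union ?_ ?_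
      · exact h₁.contZero.congr d1 (d1 m1)
      · exact h₂.contZero.congr d2 (d2 m2) }

/-- The unit tangent limit of secants is the initial velocity of a chart. -/
theorem eq_of_tendsto (h : DiniChart G e γ γ' σ W 0 d) {l : ℂ}
    (hl : Tendsto (fun t => (G t - G (σ 0)) / (‖G t - G (σ 0)‖ : ℂ)) (𝓝[>] (σ 0)) (𝓝 l)) :
    l = e := by
  have hd := h.lt
  have hσ : Tendsto σ (𝓝[>] 0) (𝓝[>] (σ 0)) := by
    refine tendsto_nhdsWithin_iff.2 ⟨?_, ?_⟩
    · have := (h.cont 0 h.mem).mono_left (nhdsWithin_mono 0 Ioc_subset_Icc_self)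
      rwa [nhdsWithin_Ioc_eq_nhdsGT hd] at this
    · filter_upwards [Ioc_mem_nhdsGT hd] with s hs
      exact h.mono h.mem (Ioc_subset_Icc_self hs) hs.1
  have h1 := hl.comp hσ
  have hder := h.deriv 0 h.mem
  rw [h.zero] at hder
  have h2 : Tendsto (slope γ 0) (𝓝[>] 0) (𝓝 e) := by
    have := hasDerivWithinAt_iff_tendsto_slope.1 hder
    rw [Icc_sdiff_left, nhdsWithin_Ioc_eq_nhdsGT hd] at this
    exact this
  have h3 : Tendsto (fun s => slope γ 0 s / (‖slope γ 0 s‖ : ℂ)) (𝓝[>] 0) (𝓝 e) := by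
    have hn : Tendsto (fun s => (‖slope γ 0 s‖ : ℂ)) (𝓝[>] 0) (𝓝 1) := by
      have := (Complex.continuous_ofReal.tendsto _).comp h2.norm
      rw [h.norm_eq] at this
      simpa [Function.comp_def] using this
    have := h2.div hn one_ne_zero
    rw [div_one] at this
    exact this
  refine tendsto_nhds_unique h1 (h3.congr' ?_)
  filter_upwards [Ioc_mem_nhdsGT hd] with s hs
  have hs0 : (0 : ℝ) < s := hs.1
  simp only [Function.comp, slope, vsub_eq_sub, sub_zero]
  rw [h.eq s (Ioc_subset_Icc_self hs), h.eq 0 h.mem, norm_smul, norm_inv, Real.norm_eq_abs,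
    abs_of_pos hs0, Complex.real_smul]
  have : (s : ℂ) ≠ 0 := by exact_mod_cast hs0.ne'
  push_cast
  rw [mul_div_mul_left _ _ (inv_ne_zero this)]

end DiniChart

theorem bddAbove_modCont {g : ℝ → ℂ} {a b : ℝ} (hg : ContinuousOn g (Icc a b)) (t : ℝ) :
    BddAbove {d : ℝ | ∃ s₁ ∈ Icc a b, ∃ s₂ ∈ Icc a b, |s₁ - s₂| ≤ t ∧ d = ‖g s₁ - g s₂‖} := by
  obtain ⟨C, hC⟩ := isCompact_Icc.exists_bound_of_continuousOn hg
  refine ⟨C + C, ?_⟩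
  rintro _ ⟨s₁, h₁, s₂, h₂, _, rfl⟩
  exact (norm_sub_le _ _).trans (add_le_add (hC _ h₁) (hC _ h₂))

/-- A lift `σ` of a Dini-smooth arc yields a chart, starting at any of its points and running
towards any point with larger parameter. -/
theorem IsDiniSmoothArc.exists_diniChart {G γ γ' : ℝ → ℂ} {σ : ℝ → ℝ} {a b s₀ s₁ : ℝ}
    (h : IsDiniSmoothArc γ γ' a b) (hσ : ContinuousOn σ (Icc a b))
    (hG : ∀ s ∈ Icc a b, G (σ s) = γ s) (h₀ : s₀ ∈ Icc a b) (h₁ : s₁ ∈ Icc a b)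
    (hlt : σ s₀ < σ s₁) :
    ∃ (e : ℂ) (g g' : ℝ → ℂ) (τ W : ℝ → ℝ) (d : ℝ), DiniChart G e g g' τ W 0 d ∧ τ 0 = σ s₀ := by
  have hr : 0 < ‖γ' s₀‖ := norm_pos_iff.2 (h.nonzero s₀ h₀)
  have hne : s₀ ≠ s₁ := fun hs => hlt.ne (by rw [hs])
  obtain ⟨k, hk, hη⟩ : ∃ k : ℝ, |k| * ‖γ' s₀‖ = 1 ∧ 0 < (s₁ - s₀) / k := by
    rcases lt_or_gt_of_ne hne with hs | hs
    · refine ⟨‖γ' s₀‖⁻¹, ?_, div_pos (by linarith) (inv_pos.2 hr)⟩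
      rw [abs_of_pos (inv_pos.2 hr), inv_mul_cancel₀ hr.ne']
    · refine ⟨-‖γ' s₀‖⁻¹, ?_, div_pos_of_neg_of_neg (by linarith) (neg_neg_of_pos (inv_pos.2 hr))⟩
      rw [abs_neg, abs_of_pos (inv_pos.2 hr), inv_mul_cancel₀ hr.ne']
  have hk0 : k ≠ 0 := by
    rintro rfl
    simp at hk
  have hka : 0 < |k| := abs_pos.2 hk0
  set η := (s₁ - s₀) / k with hηdef
  have hkη : k * η = s₁ - s₀ := by rw [hηdef]; field_simp
  have hmaps : MapsTo (fun x => s₀ + k * x) (Icc 0 η) (Icc a b) := by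
    intro x hx
    have e1 : s₀ + k * x = (1 - x / η) * s₀ + (x / η) * s₁ := by
      have : s₁ = s₀ + k * η := by linarith
      rw [this]
      field_simp
      ring
    have e2 : 0 ≤ x / η := div_nonneg hx.1 hη.le
    have e3 : x / η ≤ 1 := (div_le_one hη).2 hx.2
    change s₀ + k * x ∈ Icc a b
    rw [e1]
    exact (convex_Icc a b) h₀ h₁ (by linarith) e2 (by ring)
  have hlin : ∀ x : ℝ, HasDerivAt (fun x => s₀ + k * x) k x := fun x => by
    simpa using ((hasDerivAt_id x).const_mul k).const_add s₀
  have hlinc : Continuous (fun x : ℝ => s₀ + k * x) := by fun_prop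
  have hinj : InjOn (fun x => σ (s₀ + k * x)) (Icc 0 η) := by
    intro x hx y hy hxy
    have := h.inj (hmaps hx) (hmaps hy) (by
      rw [← hG _ (hmaps hx), ← hG _ (hmaps hy)]
      exact congrArg G hxy)
    have e1 : k * x = k * y := by linarith
    exact mul_left_cancel₀ hk0 e1
  have hcont : ContinuousOn (fun x => σ (s₀ + k * x)) (Icc 0 η) :=
    hσ.comp hlinc.continuousOn hmaps
  have hmono : MonotoneOn (modCont γ' a b) (Ici 0) := by
    intro x hx y hy hxy
    refine csSup_le_csSup (bddAbove_modCont h.cont y) ?_ ?_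
    · exact ⟨_, a, left_mem_Icc.2 h.lt.le, a, left_mem_Icc.2 h.lt.le, by simpa using hx, rfl⟩
    · rintro _ ⟨s, hs, t, ht, hst, rfl⟩
      exact ⟨s, hs, t, ht, hst.trans hxy, rfl⟩
  refine ⟨k • γ' s₀, fun x => γ (s₀ + k * x), fun x => k • γ' (s₀ + k * x),
    fun x => σ (s₀ + k * x), fun x => |k| * modCont γ' a b (|k| * x), η, ?_, by simp⟩
  exact
  { lt := hη
    mem := left_mem_Icc.2 hη.le
    cont := hcont
    mono := by
      refine hcont.strictMonoOn_of_injOn_Icc hη.le ?_ hinj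
      simp only [mul_zero, add_zero]
      rw [hkη, add_sub_cancel]
      exact hlt.le
    eq := fun x hx => hG _ (hmaps hx)
    deriv := fun x hx => (h.deriv _ (hmaps hx)).scomp x (hlin x).hasDerivWithinAt hmaps
    modulus := by
      intro x hx y hy
      rw [← smul_sub, norm_smul, Real.norm_eq_abs]
      refine mul_le_mul_of_nonneg_left ?_ hka.le
      refine le_csSup (bddAbove_modCont h.cont _) ⟨_, hmaps hx, _, hmaps hy, ?_, rfl⟩
      rw [← abs_mul]
      exact le_of_eq (congrArg _ (by ring))
    monoW := by
      intro x hx y hy hxy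
      have hx' : (0 : ℝ) ≤ x := hx
      have hy' : (0 : ℝ) ≤ y := hy
      refine mul_le_mul_of_nonneg_left (hmono ?_ ?_ ?_) hka.le
      · exact mul_nonneg hka.le hx'
      · exact mul_nonneg hka.le hy'
      · exact mul_le_mul_of_nonneg_left hxy hka.le
    dini := by
      refine ⟨1 / |k|, by positivity, ?_⟩
      have h1 := (intervalIntegrable_iff_integrableOn_Ioc_of_le zero_le_one).2 h.dini
      have h2 := (h1.comp_mul_left (c := |k|)).const_mul (|k| * |k|)
      rw [zero_div] at h2
      have h3 := (intervalIntegrable_iff_integrableOn_Ioc_of_le (by positivity)).1 h2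
      refine h3.congr_fun (fun t ht => ?_) measurableSet_Ioc
      have : t ≠ 0 := ht.1.ne'
      simp only
      field_simp
    norm_eq := by rw [norm_smul, Real.norm_eq_abs, hk]
    zero := by simp
    contZero := by
      have := (h.cont.comp hlinc.continuousOn hmaps).const_smul k
      exact this 0 (left_mem_Icc.2 hη.le) }

/-- The boundary parametrization `t ↦ ψ (e^{it})`. -/
def boundaryMap (ψ : ℂ → ℂ) (t : ℝ) : ℂ := ψ (Complex.exp (Complex.I * (t : ℂ)))

theorem boundaryMap_periodic (ψ : ℂ → ℂ) : Function.Periodic (boundaryMap ψ) (2 * Real.pi) := by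
  intro t
  unfold boundaryMap
  congr 1
  rw [Complex.exp_eq_exp_iff_exists_int]
  exact ⟨1, by push_cast; ring⟩

theorem boundaryMap_eq (ψ : ℂ → ℂ) (t : ℝ) : boundaryMap ψ t = ψ (Circle.exp t) := by
  rw [boundaryMap, Circle.coe_exp, mul_comm]

namespace IsExteriorParam

variable {Γ : Set ℂ} {φ ψ : ℂ → ℂ}

theorem isEmbedding (h : IsExteriorParam Γ φ ψ) : IsEmbedding (fun z : Circle => ψ z) := by
  refine (Continuous.isClosedEmbedding ?_ ?_).isEmbedding
  · exact h.cont.comp_continuous (by fun_prop) (fun z => z.norm_coe.ge)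
  · intro z w hzw
    exact Subtype.ext (h.inj z.norm_coe.ge w.norm_coe.ge hzw)

theorem exists_int_of_eq (h : IsExteriorParam Γ φ ψ) {s t : ℝ}
    (hst : boundaryMap ψ s = boundaryMap ψ t) : ∃ n : ℤ, s = t + n * (2 * Real.pi) := by
  rw [boundaryMap_eq, boundaryMap_eq] at hst
  have := h.isEmbedding.injective hst
  exact Circle.exp_eq_exp.1 this

theorem exists_lift (h : IsExteriorParam Γ φ ψ) {γ : ℝ → ℂ} {a b : ℝ} (hab : a ≤ b)
    (hγ : ContinuousOn γ (Icc a b)) (hΓ : γ '' Icc a b ⊆ Γ) :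
    ∃ σ : ℝ → ℝ, Continuous σ ∧ ∀ s ∈ Icc a b, boundaryMap ψ (σ s) = γ s := by
  have hex : ∀ x : ℝ, ∃ z : Circle, ψ z = γ (projIcc a b hab x) := by
    intro x
    obtain ⟨w, hw, hw'⟩ := h.boundary_surj _ (hΓ (mem_image_of_mem γ (projIcc a b hab x).2))
    exact ⟨⟨w, mem_sphere_zero_iff_norm.2 hw⟩, hw'⟩
  choose ρ hρ using hex
  have hρc : Continuous ρ := by
    rw [h.isEmbedding.continuous_iff]
    have : (fun z : Circle => ψ z) ∘ ρ = fun x => γ (projIcc a b hab x) := funext hρ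
    rw [this]
    exact hγ.comp_continuous (by fun_prop) (fun x => (projIcc a b hab x).2)
  obtain ⟨t₀, ht₀⟩ := Circle.exp_surjective (ρ 0)
  obtain ⟨σ, ⟨-, hσ⟩, -⟩ := Circle.isCoveringMap_exp.existsUnique_continuousMap_lifts
    (⟨ρ, hρc⟩ : C(ℝ, Circle)) 0 t₀ ht₀
  refine ⟨σ, σ.continuous, fun s hs => ?_⟩
  have : Circle.exp (σ s) = ρ s := congrFun hσ s
  rw [boundaryMap_eq, this, hρ, projIcc_of_mem hab hs]

end IsExteriorParam

/-- `G` is `2π`-periodic and its domain is covered, modulo the period, by lifts of finitely many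
Dini-smooth arcs. -/
def IsArcCovered (G : ℝ → ℂ) : Prop :=
  Function.Periodic G (2 * Real.pi) ∧
    ∃ (N : ℕ) (γ γ' : Fin N → ℝ → ℂ) (a b : Fin N → ℝ) (σ : Fin N → ℝ → ℝ),
      (∀ i, IsDiniSmoothArc (γ i) (γ' i) (a i) (b i)) ∧
      (∀ i, ContinuousOn (σ i) (Icc (a i) (b i))) ∧
      (∀ i, ∀ s ∈ Icc (a i) (b i), G (σ i s) = γ i s) ∧
      ∀ t : ℝ, ∃ i, ∃ s ∈ Icc (a i) (b i), ∃ j : ℤ, t = σ i s + j * (2 * Real.pi)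

theorem IsExteriorParam.isArcCovered {Γ : Set ℂ} {φ ψ : ℂ → ℂ} (h : IsExteriorParam Γ φ ψ)
    (hΓ : IsPiecewiseDiniSmoothJordanCurve Γ) : IsArcCovered (boundaryMap ψ) := by
  obtain ⟨-, N, γ, γ', a, b, harc, hun⟩ := hΓ
  have hlift : ∀ i, ∃ σ : ℝ → ℝ, Continuous σ ∧
      ∀ s ∈ Icc (a i) (b i), boundaryMap ψ (σ s) = γ i s := fun i => by
    refine h.exists_lift (harc i).lt.le (fun s hs => ((harc i).deriv s hs).continuousWithinAt) ?_
    rw [hun]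
    exact subset_iUnion (fun i => γ i '' Icc (a i) (b i)) i
  choose σ hσ hG using hlift
  refine ⟨boundaryMap_periodic ψ, N, γ, γ', a, b, σ, harc, fun i => (hσ i).continuousOn, hG, ?_⟩
  intro t
  have ht : boundaryMap ψ t ∈ Γ := h.boundary _ (by
    rw [mul_comm, Complex.norm_exp_ofReal_mul_I])
  rw [hun] at ht
  obtain ⟨i, s, hs, hst⟩ := mem_iUnion.1 ht
  rw [← hG i s hs] at hst
  obtain ⟨n, hn⟩ := h.exists_int_of_eq hst.symm
  exact ⟨i, s, hs, n, hn⟩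

namespace IsArcCovered

variable {G : ℝ → ℂ}

theorem neg (h : IsArcCovered G) : IsArcCovered (fun t => G (-t)) := by
  obtain ⟨hper, N, γ, γ', a, b, σ, harc, hσ, hG, hcov⟩ := h
  refine ⟨fun t => ?_, N, γ, γ', a, b, fun i s => -σ i s, harc, fun i => (hσ i).neg,
    fun i s hs => ?_, fun t => ?_⟩
  · simp only
    rw [neg_add, ← sub_eq_add_neg, hper.sub_eq]
  · simp only [neg_neg]
    exact hG i s hs
  · obtain ⟨i, s, hs, j, hj⟩ := hcov (-t)
    refine ⟨i, s, hs, -j, ?_⟩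
    push_cast
    linarith

theorem exists_diniChart (h : IsArcCovered G) (t₀ : ℝ) :
    ∃ (e : ℂ) (g g' : ℝ → ℂ) (τ W : ℝ → ℝ) (d : ℝ), DiniChart G e g g' τ W 0 d ∧ τ 0 = t₀ := by
  obtain ⟨hper, N, γ, γ', a, b, σ, harc, hσ, hG, hcov⟩ := h
  have hpi := Real.pi_pos
  set S : Fin N → ℤ → Set ℝ := fun i j => (fun s => σ i s + j * (2 * Real.pi)) '' Icc (a i) (b i)
  have hSσ : ∀ i (j : ℤ), ContinuousOn (fun s => σ i s + j * (2 * Real.pi)) (Icc (a i) (b i)) :=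
    fun i j => (hσ i).add continuousOn_const
  have key : ∃ i j, t₀ ∈ S i j ∧ ∃ t ∈ S i j, t₀ < t := by
    by_contra! H
    have hbound : ∀ i, ∃ C, ∀ s ∈ Icc (a i) (b i), ‖σ i s‖ ≤ C := fun i =>
      isCompact_Icc.exists_bound_of_continuousOn (hσ i)
    choose C hC using hbound
    obtain ⟨M, hM⟩ := (finite_range C).bddAbove
    have hCM : ∀ i, C i ≤ M := fun i => hM (mem_range_self i)
    obtain ⟨K, hK⟩ := exists_nat_gt ((|t₀| + 1 + M) / (2 * Real.pi))
    rw [div_lt_iff₀ (by positivity)] at hK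
    have hev : ∀ᶠ t in 𝓝[>] t₀, ∀ i, ∀ j ∈ Finset.Icc (-(K : ℤ)) K, t ∉ S i j := by
      rw [eventually_all]
      intro i
      rw [Filter.eventually_all_finset]
      intro j _
      by_cases ht : t₀ ∈ S i j
      · filter_upwards [self_mem_nhdsWithin] with t h1 h2
        exact absurd (H i j ht t h2) (not_le.2 h1)
      · have hcl : IsClosed (S i j) := (isCompact_Icc.image_of_continuousOn (hSσ i j)).isClosed
        exact mem_nhdsWithin_of_mem_nhds (hcl.isOpen_compl.mem_nhds ht)
    obtain ⟨t, h1, h2⟩ := (hev.and (Ioc_mem_nhdsGT (lt_add_one t₀))).exists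
    obtain ⟨i, s, hs, j, hj⟩ := hcov t
    refine h1 i j ?_ ⟨s, hs, hj.symm⟩
    have b1 := abs_le.1 ((hC i s hs).trans (hCM i))
    have b2 := neg_abs_le t₀
    have b3 := le_abs_self t₀
    have h3 : (j : ℝ) * (2 * Real.pi) = t - σ i s := by linarith
    have h4 : (j : ℝ) < K := by
      have : (j : ℝ) * (2 * Real.pi) < K * (2 * Real.pi) := by linarith [h2.2, b1.1]
      exact lt_of_mul_lt_mul_right this (by positivity)
    have h5 : -(K : ℝ) < j := by
      have : -(K : ℝ) * (2 * Real.pi) < j * (2 * Real.pi) := by linarith [h2.1, b1.2]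
      exact lt_of_mul_lt_mul_right this (by positivity)
    rw [Finset.mem_Icc]
    constructor
    · exact_mod_cast h5.le
    · exact_mod_cast h4.le
  obtain ⟨i, j, ⟨s₀, hs₀, rfl⟩, _, ⟨s₁, hs₁, rfl⟩, hlt⟩ := key
  exact (harc i).exists_diniChart (σ := fun s => σ i s + j * (2 * Real.pi)) (hSσ i j)
    (fun s hs => (hper.int_mul j (σ i s)).trans (hG i s hs)) hs₀ hs₁ hlt

end IsArcCovered

namespace DiniChart

variable {G : ℝ → ℂ} {e : ℂ} {γ γ' : ℝ → ℂ} {σ W : ℝ → ℝ} {c d : ℝ}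

theorem exists_right_argVarLE (h : DiniChart G e γ γ' σ W 0 d) {T ε : ℝ}
    (hT : Function.Periodic G T) (hε : 0 < ε) :
    ∃ y > σ 0, ∀ j : ℤ, ArgVarLE G univ (σ 0 + j * T) (y + j * T) (Real.pi + ε) ∧
      ArgVarLE G (G '' Icc (σ 0 + j * T) (y + j * T)) (σ 0 + j * T) (y + j * T) ε := by
  obtain ⟨η, hη, H⟩ := h.exists_argVarLE hT hε
  have hd : 0 < min d η := lt_min h.lt hη
  refine ⟨σ (min d η), h.mono h.mem ⟨hd.le, min_le_left _ _⟩ hd, ?_⟩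
  exact H 0 _ le_rfl (min_le_left _ _) hd ⟨le_rfl, hd.le⟩ (by linarith) (min_le_right _ _)

theorem exists_left_argVarLE (h : DiniChart G e γ γ' σ W c 0) {T ε : ℝ}
    (hT : Function.Periodic G T) (hε : 0 < ε) :
    ∃ x < σ 0, ∀ j : ℤ, ArgVarLE G univ (x + j * T) (σ 0 + j * T) (Real.pi + ε) ∧
      ArgVarLE G (G '' Icc (x + j * T) (σ 0 + j * T)) (x + j * T) (σ 0 + j * T) ε := by
  obtain ⟨η, hη, H⟩ := h.exists_argVarLE hT hε
  have hd : max c (-η) < 0 := max_lt h.lt (by linarith)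
  refine ⟨σ (max c (-η)), h.mono ⟨le_max_left _ _, hd.le⟩ h.mem hd, ?_⟩
  exact H _ 0 (le_max_left _ _) le_rfl hd ⟨hd.le, le_rfl⟩ (le_max_right _ _) hη.le

theorem exists_two_sided_argVarLE (h : DiniChart G e γ γ' σ W c d) (hc : c < 0) (hd : 0 < d)
    {T ε : ℝ} (hT : Function.Periodic G T) (hε : 0 < ε) :
    ∃ x < σ 0, ∃ y > σ 0, ∀ j : ℤ,
      ArgVarLE G (G '' Icc (x + j * T) (y + j * T)) (x + j * T) (y + j * T) ε := by
  obtain ⟨η, hη, H⟩ := h.exists_argVarLE hT hε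
  have h1 : max c (-η) < 0 := max_lt hc (by linarith)
  have h2 : 0 < min d η := lt_min hd hη
  refine ⟨σ (max c (-η)), h.mono ⟨le_max_left _ _, h1.le.trans hd.le⟩ h.mem h1,
    σ (min d η), h.mono h.mem ⟨hc.le.trans h2.le, min_le_left _ _⟩ h2, fun j => ?_⟩
  exact (H _ _ (le_max_left _ _) (min_le_left _ _) (h1.trans h2) ⟨h1.le, h2.le⟩
    (le_max_right _ _) (min_le_right _ _) j).2

end DiniChart

namespace IsArcCovered

variable {G : ℝ → ℂ}

theorem exists_right_argVarLE (h : IsArcCovered G) (t₀ : ℝ) {ε : ℝ} (hε : 0 < ε) :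
    ∃ y > t₀, ∀ j : ℤ,
      ArgVarLE G univ (t₀ + j * (2 * Real.pi)) (y + j * (2 * Real.pi)) (Real.pi + ε) ∧
      ArgVarLE G (G '' Icc (t₀ + j * (2 * Real.pi)) (y + j * (2 * Real.pi)))
        (t₀ + j * (2 * Real.pi)) (y + j * (2 * Real.pi)) ε := by
  obtain ⟨e, g, g', τ, W, d, hc, rfl⟩ := h.exists_diniChart t₀
  exact hc.exists_right_argVarLE h.1 hε

theorem exists_left_diniChart (h : IsArcCovered G) (t₀ : ℝ) :
    ∃ (e : ℂ) (g g' : ℝ → ℂ) (τ W : ℝ → ℝ) (c : ℝ), DiniChart G e g g' τ W c 0 ∧ τ 0 = t₀ ∧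
      ∀ l, Tendsto (fun t => (G t - G t₀) / (‖G t - G t₀‖ : ℂ)) (𝓝[<] t₀) (𝓝 l) → l = -e := by
  obtain ⟨e, g, g', τ, W, d, hc, hτ⟩ := h.neg.exists_diniChart (-t₀)
  have hr := hc.reflect
  rw [neg_zero] at hr
  refine ⟨-e, _, _, _, _, -d, hr, by simp [hτ], fun l hl => ?_⟩
  rw [neg_neg]
  refine hc.eq_of_tendsto ?_
  rw [hτ]
  simp only [neg_neg]
  have hneg : Tendsto (fun t : ℝ => -t) (𝓝[>] (-t₀)) (𝓝[<] t₀) := by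
    simpa using tendsto_neg_nhdsGT (a := -t₀)
  exact hl.comp hneg

theorem exists_left_argVarLE (h : IsArcCovered G) (t₀ : ℝ) {ε : ℝ} (hε : 0 < ε) :
    ∃ x < t₀, ∀ j : ℤ,
      ArgVarLE G univ (x + j * (2 * Real.pi)) (t₀ + j * (2 * Real.pi)) (Real.pi + ε) ∧
      ArgVarLE G (G '' Icc (x + j * (2 * Real.pi)) (t₀ + j * (2 * Real.pi)))
        (x + j * (2 * Real.pi)) (t₀ + j * (2 * Real.pi)) ε := by
  obtain ⟨e, g, g', τ, W, d, hc, rfl, -⟩ := h.exists_left_diniChart t₀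
  exact hc.exists_left_argVarLE h.1 hε

/-- If the unit secants have opposite one-sided limits at `t₀`, then the argument has small
variation on a two-sided neighbourhood. -/
theorem exists_two_sided_argVarLE (h : IsArcCovered G) {t₀ : ℝ} {l : ℂ}
    (hr : Tendsto (fun t => (G t - G t₀) / (‖G t - G t₀‖ : ℂ)) (𝓝[>] t₀) (𝓝 l))
    (hl : Tendsto (fun t => (G t - G t₀) / (‖G t - G t₀‖ : ℂ)) (𝓝[<] t₀) (𝓝 (-l)))
    {ε : ℝ} (hε : 0 < ε) :
    ∃ x < t₀, ∃ y > t₀, ∀ j : ℤ,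
      ArgVarLE G (G '' Icc (x + j * (2 * Real.pi)) (y + j * (2 * Real.pi)))
        (x + j * (2 * Real.pi)) (y + j * (2 * Real.pi)) ε := by
  obtain ⟨e₁, g₁, g₁', τ₁, W₁, c, h₁, hτ₁, hlim⟩ := h.exists_left_diniChart t₀
  obtain ⟨e₂, g₂, g₂', τ₂, W₂, d, h₂, hτ₂⟩ := h.exists_diniChart t₀
  have he₁ : l = e₁ := neg_injective (hlim _ hl)
  have he₂ : l = e₂ := h₂.eq_of_tendsto (by rwa [hτ₂])
  subst he₁
  subst he₂
  have := (h₁.join h₂ (hτ₁.trans hτ₂.symm)).exists_two_sided_argVarLE h₁.lt h₂.lt h.1 hε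
  simpa [hτ₁] using this

end IsArcCovered

namespace IsSecantArg

variable {ψ : ℂ → ℂ} {θ α : ℝ} {v : ℝ → ℝ}

theorem tendsto_secant {F : Filter ℝ} {L : ℝ} (h : IsSecantArg ψ θ α v) (hF : F ≤ 𝓝[≠] θ)
    (hL : Tendsto v F (𝓝 L)) :
    Tendsto (fun t => (boundaryMap ψ t - boundaryMap ψ θ) /
      (‖boundaryMap ψ t - boundaryMap ψ θ‖ : ℂ)) F (𝓝 (Complex.exp (Complex.I * L))) := by
  have hc : Continuous fun x : ℝ => Complex.exp (Complex.I * x) := by fun_prop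
  refine ((hc.tendsto L).comp hL).congr' ?_
  have h1 : ∀ᶠ t in F, t ∈ Icc α (α + 2 * Real.pi) :=
    (hF.trans nhdsWithin_le_nhds) (Icc_mem_nhds h.hα h.hθ)
  filter_upwards [h1, hF self_mem_nhdsWithin] with t ht hne
  exact h.branch t ht hne

theorem tendsto_right (h : IsSecantArg ψ θ α v) : Tendsto v (𝓝[>] θ) (𝓝 (v θ)) :=
  h.rightCont.mono_left (nhdsWithin_mono _ Ioi_subset_Ici_self)

theorem jump_eq_pi (h : IsSecantArg ψ θ α v) (hflat : HasExteriorAngleAt ψ θ 1) {L : ℝ}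
    (hL : Tendsto v (𝓝[<] θ) (𝓝 L)) : v θ - L = Real.pi := by
  obtain ⟨α', w, hw, hwL⟩ := hflat
  have hgt : 𝓝[>] θ ≤ 𝓝[≠] θ := nhdsWithin_mono _ fun x hx => ne_of_gt hx
  have hlt : 𝓝[<] θ ≤ 𝓝[≠] θ := nhdsWithin_mono _ fun x hx => ne_of_lt hx
  have h1 := tendsto_nhds_unique (h.tendsto_secant hgt h.tendsto_right)
    (hw.tendsto_secant hgt hw.tendsto_right)
  have h2 := tendsto_nhds_unique (h.tendsto_secant hlt hL) (hw.tendsto_secant hlt hwL)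
  have h3 : Complex.exp (((v θ - L : ℝ) : ℂ) * Complex.I) = -1 := by
    have e1 : ((v θ - L : ℝ) : ℂ) * Complex.I = Complex.I * v θ - Complex.I * L := by
      push_cast
      ring
    rw [e1, Complex.exp_sub, h1, h2, ← Complex.exp_sub]
    have e2 : Complex.I * (w θ : ℂ) - Complex.I * ((w θ - 1 * Real.pi : ℝ) : ℂ)
        = Real.pi * Complex.I := by
      push_cast
      ring
    rw [e2, Complex.exp_pi_mul_I]
  have h4 : Real.cos (v θ - L) = -1 := by
    have := congrArg Complex.re h3
    rwa [Complex.exp_ofReal_mul_I_re] at this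
  obtain ⟨L', hL', hj⟩ := h.jump_mem
  rw [tendsto_nhds_unique hL' hL] at hj
  obtain ⟨k, hk⟩ := Real.cos_eq_neg_one_iff.1 h4
  have hpi := Real.pi_pos
  have k1 : (k : ℝ) < 1 := by
    by_contra! hc
    nlinarith [hj.2]
  have k2 : (-1 : ℝ) < k := by
    by_contra! hc
    nlinarith [hj.1]
  have k3 : k = 0 := by
    have k4 : k < 1 := by exact_mod_cast k1
    have k5 : -1 < k := by exact_mod_cast k2
    omega
  rw [k3] at hk
  simpa using hk.symm

variable {P : Set ℂ} {x y x' y' E : ℝ}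

theorem ne_and_branch (h : IsSecantArg ψ θ α v)
    (hinj : ∀ s t : ℝ, boundaryMap ψ s = boundaryMap ψ t → ∃ n : ℤ, s = t + n * (2 * Real.pi))
    {t : ℝ} (ht : t ∈ Icc α (α + 2 * Real.pi)) (hne : t ≠ θ) :
    boundaryMap ψ t ≠ boundaryMap ψ θ ∧ Complex.exp (Complex.I * (v t : ℂ)) =
      (boundaryMap ψ t - boundaryMap ψ θ) / (‖boundaryMap ψ t - boundaryMap ψ θ‖ : ℂ) := by
  refine ⟨fun heq => hne ?_, h.branch t ht hne⟩
  obtain ⟨n, hn⟩ := hinj t θ heq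
  have hpi := Real.pi_pos
  have h1 := h.hα
  have h2 := h.hθ
  have k1 : (n : ℝ) < 1 := by
    by_contra! hc
    nlinarith [ht.2]
  have k2 : (-1 : ℝ) < n := by
    by_contra! hc
    nlinarith [ht.1]
  have k3 : n = 0 := by
    have k4 : n < 1 := by exact_mod_cast k1
    have k5 : -1 < n := by exact_mod_cast k2
    omega
  rw [hn, k3]
  simp

theorem eVariationOn_right_le (h : IsSecantArg ψ θ α v)
    (hinj : ∀ s t : ℝ, boundaryMap ψ s = boundaryMap ψ t → ∃ n : ℤ, s = t + n * (2 * Real.pi))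
    (hA : ArgVarLE (boundaryMap ψ) P x y E) (hP : boundaryMap ψ θ ∈ P) (hx : x ≤ x')
    (hlt : x' < y') (hy : y' ≤ y) (hθ : θ ≤ x') (hα : y' ≤ α + 2 * Real.pi) :
    eVariationOn v (Icc x' y') ≤ ENNReal.ofReal E := by
  have hαθ := h.hα
  have hcont : ContinuousOn v (Icc θ (α + 2 * Real.pi)) := by
    intro t ht
    rcases ht.1.eq_or_lt with h1 | h1
    · rw [← h1]
      exact h.rightCont.mono Icc_subset_Ici_self
    · refine (h.contAfter t ⟨h1, ht.2⟩).mono_of_mem_nhdsWithin ?_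
      filter_upwards [self_mem_nhdsWithin, mem_nhdsWithin_of_mem_nhds (Ioi_mem_nhds h1)]
        with s h2 h3 using ⟨h3, h2.2⟩
  have hy' : Tendsto v (𝓝[<] y') (𝓝 (v y')) := by
    have := (hcont y' ⟨hθ.trans hlt.le, hα⟩).mono (Ico_subset_Icc_self.trans
      (Icc_subset_Icc hθ hα) : Ico x' y' ⊆ _)
    rwa [ContinuousWithinAt, nhdsWithin_Ico_eq_nhdsLT hlt] at this
  have := hA _ hP x' y' hx hlt hy v (v y')
    (hcont.mono (Ico_subset_Icc_self.trans (Icc_subset_Icc hθ hα))) hy' fun t ht =>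
      h.ne_and_branch hinj ⟨by linarith [ht.1], by linarith [ht.2]⟩ (by linarith [ht.1] : θ < t).ne'
  simpa using this

theorem eVariationOn_left_le (h : IsSecantArg ψ θ α v)
    (hinj : ∀ s t : ℝ, boundaryMap ψ s = boundaryMap ψ t → ∃ n : ℤ, s = t + n * (2 * Real.pi))
    (hA : ArgVarLE (boundaryMap ψ) P x y E) (hP : boundaryMap ψ θ ∈ P) (hx : x ≤ x')
    (hlt : x' < y') (hy : y' ≤ y) (hθ : y' < θ) (hα : α ≤ x') :
    eVariationOn v (Icc x' y') ≤ ENNReal.ofReal E := by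
  have hαθ := h.hθ
  have hsub : Icc x' y' ⊆ Ico α θ := fun t ht => ⟨hα.trans ht.1, ht.2.trans_lt hθ⟩
  have hcont := h.contBefore.mono hsub
  have hy' : Tendsto v (𝓝[<] y') (𝓝 (v y')) := by
    have := (hcont y' ⟨hlt.le, le_rfl⟩).mono (Ico_subset_Icc_self : Ico x' y' ⊆ _)
    rwa [ContinuousWithinAt, nhdsWithin_Ico_eq_nhdsLT hlt] at this
  have := hA _ hP x' y' hx hlt hy v (v y') (hcont.mono Ico_subset_Icc_self) hy' fun t ht =>
      h.ne_and_branch hinj ⟨by linarith [ht.1], by linarith [ht.2]⟩ (by linarith [ht.2] : t < θ).ne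
  simpa using this

theorem eVariationOn_left_end_le (h : IsSecantArg ψ θ α v)
    (hinj : ∀ s t : ℝ, boundaryMap ψ s = boundaryMap ψ t → ∃ n : ℤ, s = t + n * (2 * Real.pi))
    (hA : ArgVarLE (boundaryMap ψ) P x y E) (hP : boundaryMap ψ θ ∈ P) (hx : x ≤ x')
    (hlt : x' < θ) (hy : θ ≤ y) (hα : α ≤ x') {J : ℝ}
    (hJ : ∀ L, Tendsto v (𝓝[<] θ) (𝓝 L) → v θ - L ∈ Icc 0 (2 * Real.pi) → v θ - L ≤ J) :
    eVariationOn v (Icc x' θ) ≤ ENNReal.ofReal (E + J) := by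
  have hαθ := h.hθ
  obtain ⟨L, hL, hj⟩ := h.jump_mem
  have hsub : Ico x' θ ⊆ Ico α θ := Ico_subset_Ico_left hα
  refine (hA _ hP x' θ hx hlt hy v L (h.contBefore.mono hsub) hL fun t ht =>
      h.ne_and_branch hinj ⟨by linarith [ht.1], by linarith [ht.2]⟩ ht.2.ne).trans ?_
  rw [abs_of_nonneg hj.1]
  gcongr
  exact hJ L hL hj

end IsSecantArg

theorem eVariationOn_Icc_le_add {v : ℝ → ℝ} {x y z A B C : ℝ} (hxy : x ≤ y) (hyz : y ≤ z)
    (hA : 0 ≤ A) (hB : 0 ≤ B) (h₁ : eVariationOn v (Icc x y) ≤ ENNReal.ofReal A)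
    (h₂ : eVariationOn v (Icc y z) ≤ ENNReal.ofReal B) (hC : A + B ≤ C) :
    eVariationOn v (Icc x z) ≤ ENNReal.ofReal C := by
  have := eVariationOn.Icc_add_Icc v (s := univ) hxy hyz (mem_univ y)
  simp only [univ_inter] at this
  rw [← this]
  refine (add_le_add h₁ h₂).trans ?_
  rw [← ENNReal.ofReal_add hA hB]
  exact ENNReal.ofReal_le_ofReal hC

section Local

variable {ψ : ℂ → ℂ} {θ α δ ε X Y τ : ℝ} {v : ℝ → ℝ}

theorem IsSecantArg.eVariationOn_le_of_flat (h : IsSecantArg ψ θ α v)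
    (hinj : ∀ s t : ℝ, boundaryMap ψ s = boundaryMap ψ t → ∃ n : ℤ, s = t + n * (2 * Real.pi))
    (hA : ArgVarLE (boundaryMap ψ) (boundaryMap ψ '' Icc X Y) X Y ε) (hε : 0 < ε)
    (hflat : HasExteriorAngleAt ψ θ 1)
    (hδ : 0 < δ) (hα : α ≤ θ - δ) (hα' : θ + δ ≤ α + 2 * Real.pi) (hX : X ≤ θ - δ)
    (hY : θ + δ ≤ Y) :
    eVariationOn v (Icc (θ - δ) (θ + δ)) ≤ ENNReal.ofReal (Real.pi + 3 * ε) := by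
  have hpi := Real.pi_pos
  have hP : boundaryMap ψ θ ∈ boundaryMap ψ '' Icc X Y :=
    mem_image_of_mem _ ⟨by linarith, by linarith⟩
  refine eVariationOn_Icc_le_add (y := θ) (by linarith) (by linarith) (by positivity) hε.le
    (h.eVariationOn_left_end_le hinj hA hP hX (by linarith) (by linarith) hα
      fun L hL _ => (h.jump_eq_pi hflat hL).le)
    (h.eVariationOn_right_le hinj hA hP (by linarith) (by linarith) hY le_rfl hα') (by linarith)

theorem IsSecantArg.eVariationOn_le_of_corner (h : IsSecantArg ψ θ α v)
    (hinj : ∀ s t : ℝ, boundaryMap ψ s = boundaryMap ψ t → ∃ n : ℤ, s = t + n * (2 * Real.pi))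
    (hR : ArgVarLE (boundaryMap ψ) univ τ Y (Real.pi + ε))
    (hR' : ArgVarLE (boundaryMap ψ) (boundaryMap ψ '' Icc τ Y) τ Y ε)
    (hL : ArgVarLE (boundaryMap ψ) univ X τ (Real.pi + ε))
    (hL' : ArgVarLE (boundaryMap ψ) (boundaryMap ψ '' Icc X τ) X τ ε) (hε : 0 < ε)
    (hflat : θ ≠ τ → HasExteriorAngleAt ψ θ 1)
    (hδ : 0 < δ) (hα : α ≤ θ - δ) (hα' : θ + δ ≤ α + 2 * Real.pi) (hX : X ≤ θ - δ)
    (hY : θ + δ ≤ Y) :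
    eVariationOn v (Icc (θ - δ) (θ + δ)) ≤ ENNReal.ofReal (2 * Real.pi + 3 * ε) ∧
    (τ ∉ Ioo (θ - δ) (θ + δ) →
      eVariationOn v (Icc (θ - δ) (θ + δ)) ≤ ENNReal.ofReal (Real.pi + 3 * ε)) := by
  have hpi := Real.pi_pos
  have htwo : ENNReal.ofReal (Real.pi + 3 * ε) ≤ ENNReal.ofReal (2 * Real.pi + 3 * ε) :=
    ENNReal.ofReal_le_ofReal (by linarith)
  rcases lt_trichotomy θ τ with hlt | heq | hgt
  · have hfl := hflat hlt.ne
    have hP : boundaryMap ψ θ ∈ boundaryMap ψ '' Icc X τ :=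
      mem_image_of_mem _ ⟨by linarith, by linarith⟩
    have h1 := h.eVariationOn_left_end_le hinj hL' hP hX (by linarith : θ - δ < θ) hlt.le hα
      fun L hL _ => (h.jump_eq_pi hfl hL).le
    by_cases hτ : τ < θ + δ
    · refine ⟨?_, fun hn => absurd ⟨by linarith, hτ⟩ hn⟩
      have h2 := h.eVariationOn_right_le hinj hL' hP (by linarith) hlt le_rfl le_rfl (by linarith)
      have h3 := h.eVariationOn_right_le hinj hR (mem_univ _) le_rfl hτ hY hlt.le hα'
      have h4 := eVariationOn_Icc_le_add hlt.le hτ.le hε.le (by positivity) h2 h3 le_rfl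
      exact eVariationOn_Icc_le_add (by linarith) (by linarith) (by positivity) (by positivity)
        h1 h4 (by linarith)
    · have h2 := h.eVariationOn_right_le hinj hL' hP (by linarith) (by linarith : θ < θ + δ)
        (not_lt.1 hτ) le_rfl hα'
      have h3 := eVariationOn_Icc_le_add (C := Real.pi + 3 * ε) (by linarith) (by linarith)
        (by positivity) hε.le h1 h2 (by linarith)
      exact ⟨h3.trans htwo, fun _ => h3⟩
  · subst heq
    refine ⟨?_, fun hn => absurd ⟨by linarith, by linarith⟩ hn⟩
    have h1 := h.eVariationOn_left_end_le hinj hL' (mem_image_of_mem _ ⟨by linarith, le_rfl⟩) hX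
      (by linarith) le_rfl hα fun L _ hj => hj.2
    have h2 := h.eVariationOn_right_le hinj hR' (mem_image_of_mem _ ⟨le_rfl, by linarith⟩) le_rfl
      (by linarith) hY le_rfl hα'
    exact eVariationOn_Icc_le_add (by linarith) (by linarith) (by positivity) hε.le h1 h2
      (by linarith)
  · have hfl := hflat hgt.ne'
    have hP : boundaryMap ψ θ ∈ boundaryMap ψ '' Icc τ Y :=
      mem_image_of_mem _ ⟨by linarith, by linarith⟩
    have h1 := h.eVariationOn_right_le hinj hR' hP hgt.le (by linarith : θ < θ + δ) hY le_rfl hα'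
    by_cases hτ : θ - δ < τ
    · refine ⟨?_, fun hn => absurd ⟨hτ, by linarith⟩ hn⟩
      have h2 := h.eVariationOn_left_le hinj hL (mem_univ _) hX hτ le_rfl hgt hα
      have h3 := h.eVariationOn_left_end_le hinj hR' hP le_rfl hgt (by linarith) (by linarith)
        fun L hL _ => (h.jump_eq_pi hfl hL).le
      have h4 := eVariationOn_Icc_le_add hτ.le hgt.le (by positivity) (by positivity) h2 h3 le_rfl
      exact eVariationOn_Icc_le_add (by linarith) (by linarith) (by positivity) hε.le
        h4 h1 (by linarith)
    · have h2 := h.eVariationOn_left_end_le hinj hR' hP (not_lt.1 hτ) (by linarith : θ - δ < θ)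
        (by linarith) hα fun L hL _ => (h.jump_eq_pi hfl hL).le
      have h3 := eVariationOn_Icc_le_add (C := Real.pi + 3 * ε) (by linarith) (by linarith)
        (by positivity) hε.le h2 h1 (by linarith)
      exact ⟨h3.trans htwo, fun _ => h3⟩

end Local

theorem exists_forall_mem_cornerSet_eq {l : ℕ} (θk : Fin l → ℝ) (t : ℝ) :
    ∃ ρ > 0, ∀ c ∈ cornerSet θk, |c - t| < ρ → c = t := by
  have hpi := Real.pi_pos
  have hk : ∀ k, ∀ᶠ ρ in 𝓝[>] (0 : ℝ), ∀ j : ℤ, |θk k + j * (2 * Real.pi) - t| < ρ →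
      θk k + j * (2 * Real.pi) = t := by
    intro k
    set x := (t - θk k) / (2 * Real.pi) with hx
    have ht : t = θk k + x * (2 * Real.pi) := by
      rw [hx]
      field_simp
      ring
    have habs : ∀ j : ℤ, |θk k + j * (2 * Real.pi) - t| = |x - j| * (2 * Real.pi) := by
      intro j
      rw [ht, ← abs_of_pos (by positivity : 0 < 2 * Real.pi), ← abs_mul, abs_sub_comm,
        abs_of_pos (by positivity : 0 < 2 * Real.pi)]
      exact congrArg _ (by ring)
    by_cases hxr : x = round x
    · filter_upwards [Ioc_mem_nhdsGT (by positivity : 0 < 2 * Real.pi)] with ρ hρ j hj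
      rw [habs] at hj
      have h1 : |x - j| < 1 := by
        have : |x - j| * (2 * Real.pi) < 1 * (2 * Real.pi) := by linarith [hρ.2]
        exact lt_of_mul_lt_mul_right this (by positivity)
      rw [hxr] at h1
      have h2 : |round x - j| < 1 := by exact_mod_cast h1
      have h3 : round x = j := by linarith [Int.abs_lt_one_iff.1 h2]
      rw [ht, ← h3, ← hxr]
    · have hpos : 0 < |x - round x| * (2 * Real.pi) :=
        mul_pos (abs_pos.2 (sub_ne_zero.2 hxr)) (by positivity)
      filter_upwards [Ioc_mem_nhdsGT hpos] with ρ hρ j hj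
      rw [habs] at hj
      have : |x - round x| * (2 * Real.pi) ≤ |x - j| * (2 * Real.pi) :=
        mul_le_mul_of_nonneg_right (round_le x j) (by positivity)
      linarith [hρ.2]
  obtain ⟨ρ, h1, h2⟩ := ((eventually_all.2 hk).and self_mem_nhdsWithin).exists
  refine ⟨ρ, h2, ?_⟩
  rintro _ ⟨k, j, rfl⟩ hc
  exact h1 k j hc

theorem add_mem_cornerSet_iff {l : ℕ} {θk : Fin l → ℝ} {t : ℝ} (j : ℤ) :
    t + j * (2 * Real.pi) ∈ cornerSet θk ↔ t ∈ cornerSet θk := by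
  constructor
  · rintro ⟨k, i, h⟩
    exact ⟨k, i - j, by push_cast; linarith⟩
  · rintro ⟨k, i, h⟩
    exact ⟨k, i + j, by push_cast; linarith⟩

/-- The assertions of the main theorem for a given radius `δ` and centre `θ`. -/
def SecantBounds (ψ : ℂ → ℂ) (C : Set ℝ) (ε δ θ : ℝ) : Prop :=
  (Ioo (θ - δ) (θ + δ) ∩ C).Subsingleton ∧
    ∀ (α : ℝ) (v : ℝ → ℝ), IsSecantArg ψ θ α v → α ≤ θ - δ → θ + δ ≤ α + 2 * Real.pi →
      (Ioo (θ - δ) (θ + δ) ∩ C = ∅ →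
        eVariationOn v (Icc (θ - δ) (θ + δ)) ≤ ENNReal.ofReal (Real.pi * (1 + ε))) ∧
      ((Ioo (θ - δ) (θ + δ) ∩ C).Nonempty →
        eVariationOn v (Icc (θ - δ) (θ + δ)) ≤ ENNReal.ofReal (Real.pi * (2 + ε)))

theorem exists_secantBounds_near {ψ : ℂ → ℂ} {l : ℕ} {θk : Fin l → ℝ}
    (hcov : IsArcCovered (boundaryMap ψ))
    (hinj : ∀ s t : ℝ, boundaryMap ψ s = boundaryMap ψ t → ∃ n : ℤ, s = t + n * (2 * Real.pi))
    (hflat : ∀ θ : ℝ, θ ∉ cornerSet θk → HasExteriorAngleAt ψ θ 1) {ε : ℝ} (hε : 0 < ε) (t : ℝ) :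
    ∃ r > 0, ∀ δ ∈ Ioc 0 r, ∀ θ ∈ Ioo (t - r) (t + r), ∀ j : ℤ,
      SecantBounds ψ (cornerSet θk) ε δ (θ + j * (2 * Real.pi)) := by
  have hpi := Real.pi_pos
  obtain ⟨ρ, hρ, hC⟩ := exists_forall_mem_cornerSet_eq θk t
  have hC' : ∀ r, r ≤ ρ / 3 → ∀ δ ∈ Ioc 0 r, ∀ θ ∈ Ioo (t - r) (t + r), ∀ j : ℤ,
      ∀ c ∈ cornerSet θk, c ∈ Icc (θ + j * (2 * Real.pi) - δ) (θ + j * (2 * Real.pi) + δ) →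
        c = t + j * (2 * Real.pi) := by
    intro r hr δ hδ θ hθ j c hc hcI
    have h1 : c + (-j : ℤ) * (2 * Real.pi) ∈ cornerSet θk := (add_mem_cornerSet_iff _).2 hc
    have h2 := hC _ h1 (by
      push_cast
      rw [abs_lt]
      constructor <;> linarith [hδ.2, hθ.1, hθ.2, hcI.1, hcI.2])
    push_cast at h2
    linarith
  set ε' := Real.pi * ε / 3 with hε'
  have hε'0 : 0 < ε' := by positivity
  have e1 : Real.pi * (1 + ε) = Real.pi + 3 * ε' := by rw [hε']; ring
  have e2 : Real.pi * (2 + ε) = 2 * Real.pi + 3 * ε' := by rw [hε']; ring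
  have hsub : ∀ r, r ≤ ρ / 3 → ∀ δ ∈ Ioc 0 r, ∀ θ ∈ Ioo (t - r) (t + r), ∀ j : ℤ,
      (Ioo (θ + j * (2 * Real.pi) - δ) (θ + j * (2 * Real.pi) + δ) ∩
        cornerSet θk).Subsingleton := by
    intro r hr δ hδ θ hθ j c₁ h₁ c₂ h₂
    rw [hC' r hr δ hδ θ hθ j c₁ h₁.2 (Ioo_subset_Icc_self h₁.1),
      hC' r hr δ hδ θ hθ j c₂ h₂.2 (Ioo_subset_Icc_self h₂.1)]
  by_cases ht : t ∈ cornerSet θk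
  · obtain ⟨Y, hY, hR⟩ := hcov.exists_right_argVarLE t hε'0
    obtain ⟨X, hX, hL⟩ := hcov.exists_left_argVarLE t hε'0
    refine ⟨min (ρ / 3) (min ((Y - t) / 2) ((t - X) / 2)), lt_min (by positivity)
      (lt_min (by linarith) (by linarith)), fun δ hδ θ hθ j =>
      ⟨hsub _ (min_le_left _ _) δ hδ θ hθ j, fun α v hv hα hα' => ?_⟩⟩
    have hCc := hC' _ (min_le_left _ _) δ hδ θ hθ j
    have r2 : min (ρ / 3) (min ((Y - t) / 2) ((t - X) / 2)) ≤ (Y - t) / 2 :=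
      (min_le_right _ _).trans (min_le_left _ _)
    have r3 : min (ρ / 3) (min ((Y - t) / 2) ((t - X) / 2)) ≤ (t - X) / 2 :=
      (min_le_right _ _).trans (min_le_right _ _)
    obtain ⟨h2, h1⟩ := hv.eVariationOn_le_of_corner hinj (hR j).1 (hR j).2 (hL j).1 (hL j).2 hε'0
      (fun hne => hflat _ fun hc => hne (hCc _ hc ⟨by linarith [hδ.1], by linarith [hδ.1]⟩))
      hδ.1 hα hα' (by linarith [hθ.1, hδ.2]) (by linarith [hθ.2, hδ.2])
    rw [e1, e2]
    refine ⟨fun he => h1 fun hm => ?_, fun _ => h2⟩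
    have : t + j * (2 * Real.pi) ∈ (∅ : Set ℝ) := by
      rw [← he]
      exact ⟨hm, (add_mem_cornerSet_iff j).2 ht⟩
    exact this
  · obtain ⟨α₀, w, hw, hwL⟩ := hflat t ht
    have hr := hw.tendsto_secant (nhdsWithin_mono _ fun x hx => ne_of_gt hx) hw.tendsto_right
    have hl := hw.tendsto_secant (nhdsWithin_mono _ fun x hx => ne_of_lt hx) hwL
    have hexp : Complex.exp (Complex.I * ((w t - 1 * Real.pi : ℝ) : ℂ))
        = -Complex.exp (Complex.I * (w t : ℂ)) := by
      have : Complex.I * ((w t - 1 * Real.pi : ℝ) : ℂ)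
          = Complex.I * (w t : ℂ) - Real.pi * Complex.I := by
        push_cast
        ring
      rw [this, Complex.exp_sub, Complex.exp_pi_mul_I, div_neg, div_one]
    rw [hexp] at hl
    obtain ⟨X, hX, Y, hY, hA⟩ := hcov.exists_two_sided_argVarLE hr hl hε'0
    refine ⟨min (ρ / 3) (min ((Y - t) / 2) ((t - X) / 2)), lt_min (by positivity)
      (lt_min (by linarith) (by linarith)), fun δ hδ θ hθ j =>
      ⟨hsub _ (min_le_left _ _) δ hδ θ hθ j, fun α v hv hα hα' => ?_⟩⟩
    have hCc := hC' _ (min_le_left _ _) δ hδ θ hθ j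
    have r2 : min (ρ / 3) (min ((Y - t) / 2) ((t - X) / 2)) ≤ (Y - t) / 2 :=
      (min_le_right _ _).trans (min_le_left _ _)
    have r3 : min (ρ / 3) (min ((Y - t) / 2) ((t - X) / 2)) ≤ (t - X) / 2 :=
      (min_le_right _ _).trans (min_le_right _ _)
    have h1 := hv.eVariationOn_le_of_flat hinj (hA j) hε'0
      (hflat _ fun hc => ht ((add_mem_cornerSet_iff j).1
        (hCc _ hc ⟨by linarith [hδ.1], by linarith [hδ.1]⟩ ▸ hc)))
      hδ.1 hα hα' (by linarith [hθ.1, hδ.2]) (by linarith [hθ.2, hδ.2])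
    rw [e1, e2]
    exact ⟨fun _ => h1, fun _ => h1.trans (ENNReal.ofReal_le_ofReal (by linarith))⟩

theorem exists_secantBounds {ψ : ℂ → ℂ} {l : ℕ} {θk : Fin l → ℝ}
    (hcov : IsArcCovered (boundaryMap ψ))
    (hinj : ∀ s t : ℝ, boundaryMap ψ s = boundaryMap ψ t → ∃ n : ℤ, s = t + n * (2 * Real.pi))
    (hflat : ∀ θ : ℝ, θ ∉ cornerSet θk → HasExteriorAngleAt ψ θ 1) {ε : ℝ} (hε : 0 < ε) :
    ∃ δ > 0, ∀ θ, SecantBounds ψ (cornerSet θk) ε δ θ := by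
  have hpi := Real.two_pi_pos
  have key : ∃ r > 0, ∀ δ ∈ Ioc 0 r, ∀ θ ∈ Icc (0 : ℝ) (2 * Real.pi), ∀ j : ℤ,
      SecantBounds ψ (cornerSet θk) ε δ (θ + j * (2 * Real.pi)) := by
    refine isCompact_Icc.induction_on (p := fun S => ∃ r > 0, ∀ δ ∈ Ioc 0 r, ∀ θ ∈ S, ∀ j : ℤ,
      SecantBounds ψ (cornerSet θk) ε δ (θ + j * (2 * Real.pi))) ?_ ?_ ?_ ?_
    · exact ⟨1, one_pos, fun _ _ _ h => absurd h (notMem_empty _)⟩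
    · rintro S T hST ⟨r, hr, h⟩
      exact ⟨r, hr, fun δ hδ θ hθ => h δ hδ θ (hST hθ)⟩
    · rintro S T ⟨r₁, hr₁, h₁⟩ ⟨r₂, hr₂, h₂⟩
      refine ⟨min r₁ r₂, lt_min hr₁ hr₂, fun δ hδ θ hθ => ?_⟩
      rcases hθ with hθ | hθ
      · exact h₁ δ ⟨hδ.1, hδ.2.trans (min_le_left _ _)⟩ θ hθ
      · exact h₂ δ ⟨hδ.1, hδ.2.trans (min_le_right _ _)⟩ θ hθ
    · intro t _
      obtain ⟨r, hr, h⟩ := exists_secantBounds_near hcov hinj hflat hε t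
      exact ⟨_, mem_nhdsWithin_of_mem_nhds (Ioo_mem_nhds (by linarith) (by linarith)), r, hr, h⟩
  obtain ⟨r, hr, h⟩ := key
  refine ⟨r, hr, fun θ => ?_⟩
  have h1 := Int.floor_le (θ / (2 * Real.pi))
  have h2 := (Int.lt_floor_add_one (θ / (2 * Real.pi))).le
  rw [le_div_iff₀ hpi] at h1
  rw [div_le_iff₀ hpi] at h2
  have := h r ⟨hr, le_rfl⟩ (θ - ⌊θ / (2 * Real.pi)⌋ * (2 * Real.pi)) ⟨by linarith, by linarith⟩
    ⌊θ / (2 * Real.pi)⌋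
  rwa [sub_add_cancel] at this

/-- Let `Γ` be a piecewise Dini-smooth Jordan curve with corners
`z_k = ψ(e^{iθ_k})`, `k = 1, …, l`, and `Θ_Γ = {θ_k + 2πj}`. For every `ε > 0` there is
`δ > 0`, small enough that every interval `(θ−δ, θ+δ)` contains at most one point of `Θ_Γ`,
such that for every `θ` and every secant-argument function `v_θ` defined on an interval
containing `[θ−δ, θ+δ]`: if `(θ−δ, θ+δ) ∩ Θ_Γ = ∅` then
`(1/π)∫_{θ−δ}^{θ+δ} |dv_θ| ≤ 1 + ε` and otherwise `(1/π)∫_{θ−δ}^{θ+δ} |dv_θ| ≤ 2 + ε`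
(the integral `∫ |dv_θ|` being the total variation of `v_θ` over `[θ−δ, θ+δ]`). -/
theorem local_secant_variation_bounds
    (Γ : Set ℂ) (φ ψ : ℂ → ℂ) (c : ℝ) (l : ℕ)
    (θk : Fin l → ℝ) (zk : Fin l → ℂ) (lam : Fin l → ℝ)
    (hΓ : IsPiecewiseDiniSmoothJordanCurve Γ)
    (hφ : IsExteriorMap Γ φ c)
    (hψ : IsExteriorParam Γ φ ψ)
    (hθ : ∀ k, θk k ∈ Set.Ico (0 : ℝ) (2 * Real.pi))
    (hθinj : Function.Injective θk)
    (hzk : ∀ k, zk k = ψ (Complex.exp (Complex.I * (θk k : ℂ))))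
    (hlam : ∀ k, lam k ∈ Set.Icc (0 : ℝ) 2)
    (hangle : ∀ k, HasExteriorAngleAt ψ (θk k) (lam k))
    (hflat : ∀ θ : ℝ, θ ∉ cornerSet θk → HasExteriorAngleAt ψ θ 1) :
    ∀ ε : ℝ, 0 < ε → ∃ δ : ℝ, 0 < δ ∧
      (∀ θ : ℝ, Set.Subsingleton (Set.Ioo (θ - δ) (θ + δ) ∩ cornerSet θk)) ∧
      (∀ θ α : ℝ, ∀ v : ℝ → ℝ, IsSecantArg ψ θ α v →
        α ≤ θ - δ → θ + δ ≤ α + 2 * Real.pi →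
        ((Set.Ioo (θ - δ) (θ + δ) ∩ cornerSet θk = ∅ →
            eVariationOn v (Set.Icc (θ - δ) (θ + δ)) ≤ ENNReal.ofReal (Real.pi * (1 + ε))) ∧
         ((Set.Ioo (θ - δ) (θ + δ) ∩ cornerSet θk).Nonempty →
            eVariationOn v (Set.Icc (θ - δ) (θ + δ)) ≤ ENNReal.ofReal (Real.pi * (2 + ε))))) := by
  intro ε hε
  obtain ⟨δ, hδ, h⟩ := exists_secantBounds (hψ.isArcCovered hΓ)
    (fun _ _ hst => hψ.exists_int_of_eq hst) hflat hε
  exact ⟨δ, hδ, fun θ => (h θ).1, fun θ => (h θ).2⟩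

end
end
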